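/- arXiv:1806.03587 — 2 statements merged into one kernel-verified Lean document; each statement's English description precedes it below -/
import Mathlib

section
/- Comparison of inf and sup convolutions near a touching point: Let Ω be a domain in ℝ^N with N ≥ 2, let H : Ω → ℝ be locally Lipschitz continuous, let x₀ ∈ Ω, and let R > 0 satisfy cl(B(x₀,R)) ⊂ Ω and |H| ≤ 1/R on cl(B(x₀,R)). Let u be a lower semicontinuous viscosity supersolution of M(u) = NH in Ω and v an upper semicontinuous viscosity subsolution of M(v) = NH in Ω, both bounded on cl(B(x₀,R)), with u ≥ v in Ω and u(x₀) = v(x₀). Define for ε > 0 the inf convolution u_ε(x) := inf_{y ∈ cl(B(x₀,R))} { u(y) + |x−y|²/(2ε) } and the sup convolution v^ε(x) := sup_{y ∈ cl(B(x₀,R))} { v(y) − |x−y|²/(2ε) } for x ∈ cl(B(x₀,R)). Then for each ε > 0, v^ε ≥ u_ε on cl(B(x₀, R/2)). -/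
open Metric Set Filter Topology MeasureTheory

/-- The mean curvature operator `M(w) = div (Dw / sqrt (1 + |Dw|²))`,
computed as the sum of the partial derivatives of the components of the
normalized gradient field. -/
noncomputable def mcOp {N : ℕ} (w : EuclideanSpace ℝ (Fin N) → ℝ)
    (x : EuclideanSpace ℝ (Fin N)) : ℝ :=
  ∑ i : Fin N,
    fderiv ℝ (fun y => (Real.sqrt (1 + ‖gradient w y‖ ^ 2))⁻¹ * gradient w y i) x
      (EuclideanSpace.single i 1)

/-- `f` is locally Lipschitz continuous on the set `s`. -/
def LocLipschitzOn {N : ℕ} (s : Set (EuclideanSpace ℝ (Fin N)))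
    (f : EuclideanSpace ℝ (Fin N) → ℝ) : Prop :=
  ∀ x ∈ s, ∃ K : NNReal, ∃ t ∈ 𝓝[s] x, LipschitzOnWith K f t

/-- `u` is a viscosity supersolution of `M(u) = N H` on the open set `U`. -/
def IsViscositySupersol {N : ℕ} (U : Set (EuclideanSpace ℝ (Fin N)))
    (H u : EuclideanSpace ℝ (Fin N) → ℝ) : Prop :=
  ∀ φ : EuclideanSpace ℝ (Fin N) → ℝ, ContDiffOn ℝ 2 φ U →
    ∀ x ∈ U, IsLocalMinOn (fun y => u y - φ y) U x → mcOp φ x ≤ N * H x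

/-- `v` is a viscosity subsolution of `M(v) = N H` on the open set `U`. -/
def IsViscositySubsol {N : ℕ} (U : Set (EuclideanSpace ℝ (Fin N)))
    (H v : EuclideanSpace ℝ (Fin N) → ℝ) : Prop :=
  ∀ φ : EuclideanSpace ℝ (Fin N) → ℝ, ContDiffOn ℝ 2 φ U →
    ∀ x ∈ U, IsLocalMaxOn (fun y => v y - φ y) U x → mcOp φ x ≥ N * H x


open Metric Set Filter Topology MeasureTheory

section Anal
variable {E : Type*} [NormedAddCommGroup E] [InnerProductSpace ℝ E] [FiniteDimensional ℝ E]

theorem taylor2 (f : E → ℝ) (g : E → E) (A : E →L[ℝ] E) (x0 : E)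
    (hf : ∀ᶠ x in 𝓝 x0, HasGradientAt f (g x) x) (hg : HasFDerivAt g A x0) (κ : ℝ) (hκ : 0 < κ) :
    ∀ᶠ h in 𝓝 (0 : E), |f (x0 + h) - f x0 - inner ℝ (g x0) h - 1 / 2 * inner ℝ (A h) h|
      ≤ κ * ‖h‖ ^ 2 := by
  have h1 : ∀ᶠ h in 𝓝 (0 : E), ‖g (x0 + h) - g x0 - A h‖ ≤ κ * ‖h‖ := by
    have := (hasFDerivAt_iff_isLittleO_nhds_zero.1 hg).def hκ
    exact this
  have h2 : ∀ᶠ h in 𝓝 (0 : E), HasGradientAt f (g (x0 + h)) (x0 + h) := by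
    have ht : Tendsto (fun h : E => x0 + h) (𝓝 0) (𝓝 x0) := by
      have : Continuous (fun h : E => x0 + h) := by fun_prop
      simpa using this.tendsto 0
    exact ht.eventually hf
  obtain ⟨ρ, hρ, hb⟩ := Metric.eventually_nhds_iff_ball.1 (h1.and h2)
  refine Metric.eventually_nhds_iff_ball.2 ⟨ρ, hρ, fun h hh => ?_⟩
  have hin : ∀ t ∈ Icc (0 : ℝ) 1, t • h ∈ ball (0 : E) ρ := by
    intro t ht
    rw [mem_ball_zero_iff] at hh ⊢
    rw [norm_smul, Real.norm_eq_abs, abs_of_nonneg ht.1]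
    nlinarith [norm_nonneg h, ht.1, ht.2]
  have hd : ∀ t ∈ Icc (0 : ℝ) 1, HasDerivWithinAt
      (fun t : ℝ => f (x0 + t • h) - t * inner ℝ (g x0) h - t ^ 2 / 2 * inner ℝ (A h) h)
      (inner ℝ (g (x0 + t • h) - g x0 - A (t • h)) h) (Icc 0 1) t := by
    intro t ht
    have hfd := (hasGradientAt_iff_hasFDerivAt.1 (hb _ (hin t ht)).2)
    have hl : HasDerivAt (fun t : ℝ => x0 + t • h) h t := by
      simpa using ((hasDerivAt_id t).smul_const h).const_add x0
    have hc := hfd.comp_hasDerivAt t hl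
    have h3 : HasDerivAt (fun t : ℝ => t * inner ℝ (g x0) h) (inner ℝ (g x0) h) t := by
      simpa using (hasDerivAt_id t).mul_const (inner ℝ (g x0) h)
    have h4 : HasDerivAt (fun t : ℝ => t ^ 2 / 2 * inner ℝ (A h) h) (t * inner ℝ (A h) h) t := by
      have := (((hasDerivAt_id t).pow 2).div_const 2).mul_const (inner ℝ (A h) h)
      exact this.congr_deriv (by simp)
    have := ((hc.sub h3).sub h4).hasDerivWithinAt (s := Icc 0 1)
    exact this.congr_deriv (by simp [inner_sub_left, inner_smul_left])
  have hbd : ∀ t ∈ Icc (0 : ℝ) 1, ‖(inner ℝ (g (x0 + t • h) - g x0 - A (t • h)) h : ℝ)‖ ≤ κ * ‖h‖ ^ 2 := by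
    intro t ht
    refine (norm_inner_le_norm _ _).trans ?_
    have := (hb _ (hin t ht)).1
    rw [norm_smul, Real.norm_eq_abs, abs_of_nonneg ht.1] at this
    have h5 : κ * (t * ‖h‖) ≤ κ * ‖h‖ := by
      have := norm_nonneg h
      have : t * ‖h‖ ≤ ‖h‖ := by nlinarith [ht.2]
      exact mul_le_mul_of_nonneg_left this hκ.le
    nlinarith [norm_nonneg h]
  have := (convex_Icc (0:ℝ) 1).norm_image_sub_le_of_norm_hasDerivWithin_le hd hbd
    (left_mem_Icc.2 zero_le_one) (right_mem_Icc.2 zero_le_one)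
  simp only [Real.norm_eq_abs] at this
  convert this using 1
  · congr 1; simp; ring
  · simp

theorem moreau (C : Set E) (hC : IsCompact C) (hne : C.Nonempty) (v : E → ℝ)
    (hv : UpperSemicontinuousOn v C) (a : ℝ) (ha : 0 < a) :
    ∃ (V : E → ℝ) (g : E → E),
      (∀ ζ ∈ C, ∀ z, v ζ - a * ‖ζ - z‖ ^ 2 ≤ V z) ∧
      (∀ x z, ∃ ζ ∈ C, V z ≤ v ζ - a / 2 * ‖ζ - x‖ ^ 2 + a * ‖x - z‖ ^ 2) ∧
      (∀ z, HasGradientAt V (g z) z) ∧ (∃ K, LipschitzWith K g) := by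
  have hmax : ∀ x : E, ∃ ζ ∈ C, ∀ ξ ∈ C, v ξ - a / 2 * ‖ξ‖ ^ 2 + a * inner ℝ ξ x ≤
      v ζ - a / 2 * ‖ζ‖ ^ 2 + a * inner ℝ ζ x := by
    intro x
    have hu : UpperSemicontinuousOn (fun ξ => v ξ + (- (a / 2 * ‖ξ‖ ^ 2) + a * inner ℝ ξ x)) C := by
      refine hv.add (Continuous.continuousOn ?_).upperSemicontinuousOn
      fun_prop
    obtain ⟨ζ, hζ, hm⟩ := hu.exists_isMaxOn hne hC
    refine ⟨ζ, hζ, fun ξ hξ => ?_⟩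
    have := hm hξ
    simp only [mem_ofPred_eq] at this
    linarith
  choose ζ hζC hζ using hmax
  set G : E → ℝ := fun x => v (ζ x) - a / 2 * ‖ζ x‖ ^ 2 + a * inner ℝ (ζ x) x with hG
  have hsub : ∀ x x', G x + a * inner ℝ (ζ x) (x' - x) ≤ G x' := by
    intro x x'
    have := hζ x' (ζ x) (hζC x)
    simp only [hG, inner_sub_right]
    linarith
  obtain ⟨B, hB⟩ := hC.isBounded.exists_norm_le
  have hB0 : 0 ≤ B := by obtain ⟨c, hc⟩ := hne; exact (norm_nonneg c).trans (hB c hc)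
  have hlow : ∀ x x', G x - a * B * ‖x' - x‖ ≤ G x' := by
    intro x x'
    have h1 := hsub x x'
    have h2 := abs_real_inner_le_norm (ζ x) (x' - x)
    have h3 := (abs_le.1 h2).1
    have h4 : ‖ζ x‖ * ‖x' - x‖ ≤ B * ‖x' - x‖ :=
      mul_le_mul_of_nonneg_right (hB _ (hζC x)) (norm_nonneg _)
    nlinarith
  have hGc : Continuous G := by
    have : LipschitzWith (Real.toNNReal (a * B)) G := by
      refine LipschitzWith.of_le_add_mul' _ fun x y => ?_
      have := hlow x y
      rw [dist_eq_norm, norm_sub_rev]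
      linarith
    exact this.continuous
  have hmin : ∀ w : E, ∃ x, ∀ x', G x + a / 2 * ‖x - w‖ ^ 2 ≤ G x' + a / 2 * ‖x' - w‖ ^ 2 := by
    intro w
    have hc : Continuous (fun x => G x + a / 2 * ‖x - w‖ ^ 2) := by fun_prop
    obtain ⟨x, hx, hm⟩ := (isCompact_closedBall w (2 * B)).exists_isMinOn
      ⟨w, by simp; positivity⟩ hc.continuousOn
    refine ⟨x, fun x' => ?_⟩
    by_cases h : x' ∈ closedBall w (2 * B)
    · exact hm h
    · have h1 : G x + a / 2 * ‖x - w‖ ^ 2 ≤ G w + a / 2 * ‖w - w‖ ^ 2 :=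
        hm (by simp; positivity : w ∈ closedBall w (2 * B))
      have h2 := hlow w x'
      simp only [mem_closedBall, dist_eq_norm, not_le] at h
      simp only [sub_self, norm_zero] at h1
      have : a * B * ‖x' - w‖ ≤ a / 2 * ‖x' - w‖ ^ 2 := by
        have : B * ‖x' - w‖ ≤ 1 / 2 * ‖x' - w‖ ^ 2 := by nlinarith
        nlinarith
      linarith
  choose pr hpr using hmin
  have hconv : ∀ x x' (t : ℝ), 0 ≤ t → t ≤ 1 →
      G (x + t • (x' - x)) ≤ (1 - t) * G x + t * G x' := by
    intro x x' t h0 h1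
    have e1 := hsub (x + t • (x' - x)) x
    have e2 := hsub (x + t • (x' - x)) x'
    have r1 : x - (x + t • (x' - x)) = (-t) • (x' - x) := by module
    have r2 : x' - (x + t • (x' - x)) = (1 - t) • (x' - x) := by module
    rw [r1, inner_smul_right] at e1
    rw [r2, inner_smul_right] at e2
    nlinarith [mul_le_mul_of_nonneg_left e1 (sub_nonneg.2 h1), mul_le_mul_of_nonneg_left e2 h0]
  have hopt : ∀ w x', G (pr w) + a * inner ℝ (w - pr w) (x' - pr w) ≤ G x' := by
    intro w x'
    set x := pr w
    have key : ∀ t ∈ Ioo (0:ℝ) 1, 0 ≤ G x' - G x + a * inner ℝ (x - w) (x' - x)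
        + t * (a / 2 * ‖x' - x‖ ^ 2) := by
      intro t ht
      have h1 := hpr w (x + t • (x' - x))
      have h2 := hconv x x' t ht.1.le ht.2.le
      have r1 : x + t • (x' - x) - w = (x - w) + t • (x' - x) := by abel
      rw [r1, norm_add_sq_real, inner_smul_right, norm_smul, Real.norm_eq_abs, abs_of_pos ht.1] at h1
      have : 0 ≤ t * (G x' - G x + a * inner ℝ (x - w) (x' - x)
        + t * (a / 2 * ‖x' - x‖ ^ 2)) := by nlinarith
      exact nonneg_of_mul_nonneg_right this ht.1
    have hlim : Tendsto (fun t : ℝ => G x' - G x + a * inner ℝ (x - w) (x' - x)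
        + t * (a / 2 * ‖x' - x‖ ^ 2)) (𝓝[>] 0) (𝓝 (G x' - G x + a * inner ℝ (x - w) (x' - x))) := by
      have : Continuous (fun t : ℝ => G x' - G x + a * inner ℝ (x - w) (x' - x)
        + t * (a / 2 * ‖x' - x‖ ^ 2)) := by fun_prop
      have := (this.tendsto 0).mono_left (nhdsWithin_le_nhds (s := Ioi 0))
      simpa using this
    have h0 : 0 ≤ G x' - G x + a * inner ℝ (x - w) (x' - x) :=
      ge_of_tendsto hlim (by
        filter_upwards [Ioo_mem_nhdsGT (zero_lt_one' ℝ)] with t ht using key t ht)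
    have : inner ℝ (x - w) (x' - x) = - inner ℝ (w - x) (x' - x) := by
      rw [← inner_neg_left]; simp
    rw [this] at h0
    linarith
  have hprL : ∀ w w', ‖pr w - pr w'‖ ≤ ‖w - w'‖ := by
    intro w w'
    have h1 := hopt w (pr w')
    have h2 := hopt w' (pr w)
    have h3 : a * (inner ℝ (w - pr w) (pr w' - pr w) + inner ℝ (w' - pr w') (pr w - pr w')) ≤ 0 := by
      linarith
    have h4 : inner ℝ (w - pr w) (pr w' - pr w) + inner ℝ (w' - pr w') (pr w - pr w') ≤ 0 := by
      by_contra hh; push Not at hh; nlinarith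
    have h5 : inner ℝ (w - pr w) (pr w' - pr w) + inner ℝ (w' - pr w') (pr w - pr w')
      = ‖pr w - pr w'‖ ^ 2 - inner ℝ (w - w') (pr w - pr w') := by
      rw [← real_inner_self_eq_norm_sq]
      simp only [inner_sub_left, inner_sub_right]
      ring
    have h6 := real_inner_le_norm (w - w') (pr w - pr w')
    by_contra hh
    push Not at hh
    nlinarith [norm_nonneg (w - w'), norm_nonneg (pr w - pr w')]
  set V : E → ℝ := fun z => G (pr ((2:ℝ) • z)) + a / 2 * ‖pr ((2:ℝ) • z) - (2:ℝ) • z‖ ^ 2 - a * ‖z‖ ^ 2 with hV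
  set g : E → E := fun z => (2 * a) • (z - pr ((2:ℝ) • z)) with hg
  refine ⟨V, g, ?_, ?_, ?_, ?_⟩
  · intro ξ hξ z
    have h1 := hζ (pr ((2:ℝ) • z)) ξ hξ
    simp only [hV, hG]
    set x := pr ((2:ℝ) • z)
    have h2 : 0 ≤ a / 2 * ‖ξ + x - (2:ℝ) • z‖ ^ 2 := by positivity
    have h3 : ‖ξ + x - (2:ℝ) • z‖ ^ 2 = ‖ξ‖ ^ 2 + ‖x‖ ^ 2 + 4 * ‖z‖ ^ 2 + 2 * inner ℝ ξ x
      - 4 * inner ℝ x z - 4 * inner ℝ ξ z := by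
      rw [norm_sub_sq_real, norm_add_sq_real, inner_smul_right, inner_add_left, norm_smul]
      norm_num; ring
    have h4 : ‖x - (2:ℝ) • z‖ ^ 2 = ‖x‖ ^ 2 + 4 * ‖z‖ ^ 2 - 4 * inner ℝ x z := by
      rw [norm_sub_sq_real, inner_smul_right, norm_smul]
      norm_num; ring
    rw [h3] at h2
    rw [h4, norm_sub_sq_real]
    linarith
  · intro x z
    refine ⟨ζ x, hζC x, ?_⟩
    have h1 := hpr ((2:ℝ) • z) x
    have h4 : ‖x - (2:ℝ) • z‖ ^ 2 = ‖x‖ ^ 2 + 4 * ‖z‖ ^ 2 - 4 * inner ℝ x z := by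
      rw [norm_sub_sq_real, inner_smul_right, norm_smul]
      norm_num; ring
    rw [h4] at h1
    rw [norm_sub_sq_real, norm_sub_sq_real]
    simp only [hV]
    refine (sub_le_sub_right h1 _).trans ?_
    simp only [hG]
    linarith
  · intro z
    rw [hasGradientAt_iff_hasFDerivAt]
    have hq : ∀ z', |V z' - V z - inner ℝ (g z) (z' - z)| ≤ a * ‖z' - z‖ ^ 2 := by
      intro z'
      have u1 := hpr ((2:ℝ) • z') (pr ((2:ℝ) • z))
      have l1 := hopt ((2:ℝ) • z) (pr ((2:ℝ) • z'))
      simp only [hV, hg]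
      set x := pr ((2:ℝ) • z)
      set x' := pr ((2:ℝ) • z')
      have l2 : 0 ≤ a / 2 * ‖((2:ℝ) • z - x) - ((2:ℝ) • z' - x')‖ ^ 2 := by positivity
      simp only [← real_inner_self_eq_norm_sq] at *
      simp only [inner_sub_left, inner_sub_right, inner_smul_left, inner_smul_right] at *
      simp only [real_inner_comm x' x, real_inner_comm x z, real_inner_comm x z', real_inner_comm x' z,
        real_inner_comm x' z', real_inner_comm z' z, RCLike.conj_to_real] at *
      rw [abs_le]
      constructor <;> linarith
    rw [hasFDerivAt_iff_isLittleO_nhds_zero]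
    refine Asymptotics.IsBigO.trans_isLittleO (g := fun h : E => ‖h‖ ^ 2) ?_ ?_
    · refine Asymptotics.IsBigO.of_bound a (Eventually.of_forall fun h => ?_)
      have := hq (z + h)
      simp only [add_sub_cancel_left] at this
      simpa using this
    · refine (Asymptotics.isLittleO_norm_pow_id (E' := E) one_lt_two)
  · refine ⟨Real.toNNReal (6 * a), LipschitzWith.of_dist_le_mul fun z z' => ?_⟩
    rw [Real.coe_toNNReal _ (by positivity), dist_eq_norm, dist_eq_norm]
    have h1 := hprL ((2:ℝ) • z) ((2:ℝ) • z')
    rw [← smul_sub, norm_smul] at h1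
    norm_num at h1
    have : g z - g z' = (2 * a) • ((z - z') - (pr ((2:ℝ) • z) - pr ((2:ℝ) • z'))) := by
      simp only [hg]; module
    rw [this, norm_smul, Real.norm_eq_abs, abs_of_pos (by positivity)]
    have := norm_sub_le (z - z') (pr ((2:ℝ) • z) - pr ((2:ℝ) • z'))
    nlinarith

end Anal

open Metric Set Filter Topology MeasureTheory

section TOS
variable {E : Type*} [NormedAddCommGroup E] [InnerProductSpace ℝ E] [FiniteDimensional ℝ E]

theorem grad_unique_of_le (V : E → ℝ) (p p' z : E) (C : ℝ) (h : HasGradientAt V p z)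
    (hle : ∀ h, V (z + h) - V z - inner ℝ p' h ≤ C * ‖h‖ ^ 2) : p = p' := by
  have h1 := hasGradientAt_iff_hasFDerivAt.1 h
  have hl : HasFDerivAt (fun h : E => z + h) (ContinuousLinearMap.id ℝ E) 0 := by
    simpa using (hasFDerivAt_id (0:E)).const_add z
  have h2 : HasFDerivAt (fun h : E => V (z + h)) ((InnerProductSpace.toDual ℝ E) p) 0 := by
    have h1' : HasFDerivAt V ((InnerProductSpace.toDual ℝ E) p) (z + 0) := by simpa using h1
    exact HasFDerivAt.comp (0:E) h1' hl
  have h3 : HasFDerivAt (fun h : E => (inner ℝ p' h : ℝ)) ((InnerProductSpace.toDual ℝ E) p') 0 :=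
    ((InnerProductSpace.toDual ℝ E) p').hasFDerivAt
  have h4 : HasFDerivAt (fun h : E => C * ‖h‖ ^ 2) (0 : E →L[ℝ] ℝ) 0 := by
    have : HasFDerivAt (fun h : E => ‖h‖ ^ 2) (2 • (innerSL ℝ (0:E))) 0 :=
      (hasStrictFDerivAt_norm_sq (0:E)).hasFDerivAt
    simpa using this.const_mul C
  have h5 := (h2.sub h3).sub h4
  have hm : IsLocalMax (((fun h : E => V (z + h)) - fun h => inner ℝ p' h) - fun h => C * ‖h‖ ^ 2) 0 := by
    refine Eventually.of_forall fun h => ?_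
    have := hle h
    simp
    linarith
  have h6 := hm.hasFDerivAt_eq_zero h5
  rw [sub_zero, sub_eq_zero] at h6
  exact (InnerProductSpace.toDual ℝ E).injective h6

theorem exists_small_not_mem_image (G : E × E → E × E) (T : E × E → E × E)
    (hG : ∃ K, LipschitzWith K G) (hT : ∃ K, LipschitzWith K T) (s : ℝ) (hs : 0 < s) :
    ∃ α : E × E, ‖α‖ < s ∧ ∀ ζ, T ζ = α → DifferentiableAt ℝ G ζ := by
  obtain ⟨K, hG⟩ := hG
  obtain ⟨K', hT⟩ := hT
  let _ : MeasurableSpace (E × E) := borel _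
  have _ : BorelSpace (E × E) := ⟨rfl⟩
  have h1 := hG.ae_differentiableAt (μ := (Measure.hausdorffMeasure (Module.finrank ℝ (E × E)) : Measure (E × E)))
  rw [ae_iff] at h1
  have h2 := hT.hausdorffMeasure_image_le (d := Module.finrank ℝ (E × E)) (by positivity)
    {a | ¬ DifferentiableAt ℝ G a}
  rw [h1, mul_zero, nonpos_iff_eq_zero] at h2
  have h3 : (Measure.hausdorffMeasure (Module.finrank ℝ (E × E)) : Measure (E × E)) (ball 0 s) ≠ 0 :=
    (isOpen_ball.measure_pos _ ⟨0, by simpa⟩).ne'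
  have : ¬ (ball (0 : E × E) s ⊆ T '' {a | ¬ DifferentiableAt ℝ G a}) := fun hsub =>
    h3 (measure_mono_null hsub h2)
  obtain ⟨α, hα, hn⟩ := Set.not_subset.1 this
  refine ⟨α, by simpa using hα, fun ζ hζ => ?_⟩
  by_contra hh
  exact hn ⟨ζ, hh, hζ⟩

def Superjet (v : E → ℝ) (z p : E) (A : E →L[ℝ] E) : Prop :=
  ∀ κ > 0, ∀ᶠ h in 𝓝 (0:E), v (z + h) ≤ v z + inner ℝ p h + 1 / 2 * inner ℝ (A h) h + κ * ‖h‖ ^ 2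

set_option maxHeartbeats 4000000 in
theorem tos (L1 L2 : E × E →L[ℝ] E)
    (hsym : ∀ ζ δ : E × E, inner ℝ (L1 ζ) δ.1 + inner ℝ (L2 ζ) δ.2
      = inner ℝ (L1 δ) ζ.1 + inner ℝ (L2 δ) ζ.2)
    (ρ : ℝ) (hρ : 0 < ρ) (v1 v2 : E → ℝ) (hv1 : UpperSemicontinuousOn v1 (closedBall 0 ρ))
    (hv2 : UpperSemicontinuousOn v2 (closedBall 0 ρ)) (h10 : v1 0 = 0) (h20 : v2 0 = 0)
    (hle : ∀ ξ ∈ closedBall (0:E) ρ, ∀ η ∈ closedBall (0:E) ρ,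
      v1 ξ + v2 η ≤ 1 / 2 * (inner ℝ (L1 (ξ, η)) ξ + inner ℝ (L2 (ξ, η)) η))
    (κ : ℝ) (hκ : 0 < κ) (hκ1 : κ ≤ 1) :
    ∃ (z y p q : E) (A1 A2 : E →L[ℝ] E), ‖z‖ ≤ κ ∧ ‖y‖ ≤ κ ∧ ‖p‖ ≤ κ ∧ ‖q‖ ≤ κ ∧
      Superjet v1 z p A1 ∧ Superjet v2 y q A2 ∧
      ∀ ξ η, inner ℝ (A1 ξ) ξ + inner ℝ (A2 η) η ≤
        inner ℝ (L1 (ξ, η)) ξ + inner ℝ (L2 (ξ, η)) η + 4 * κ * (‖ξ‖ ^ 2 + ‖η‖ ^ 2) := by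
  set Bf : E × E → E × E → ℝ := fun ζ δ => inner ℝ (L1 ζ) δ.1 + inner ℝ (L2 ζ) δ.2 with hBf
  set n2 : E × E → ℝ := fun ζ => ‖ζ.1‖ ^ 2 + ‖ζ.2‖ ^ 2 with hn2
  set ip : E × E → E × E → ℝ := fun ζ δ => inner ℝ ζ.1 δ.1 + inner ℝ ζ.2 δ.2 with hip
  set c : ℝ := ‖L1‖ + ‖L2‖ with hc
  have hc0 : 0 ≤ c := by positivity
  have hsup1 : ∀ ζ : E × E, ‖ζ.1‖ ≤ ‖ζ‖ := fun ζ => norm_fst_le ζ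
  have hsup2 : ∀ ζ : E × E, ‖ζ.2‖ ≤ ‖ζ‖ := fun ζ => norm_snd_le ζ
  have hn2le : ∀ ζ : E × E, ‖ζ‖ ^ 2 ≤ n2 ζ := by
    intro ζ
    rcases max_choice ‖ζ.1‖ ‖ζ.2‖ with h | h
    · rw [Prod.norm_def, h]; simp only [hn2]; linarith [sq_nonneg ‖ζ.2‖]
    · rw [Prod.norm_def, h]; simp only [hn2]; linarith [sq_nonneg ‖ζ.1‖]
  have hBle : ∀ ζ δ, Bf ζ δ ≤ c * ‖ζ‖ * ‖δ‖ := by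
    intro ζ δ
    have e1 := real_inner_le_norm (L1 ζ) δ.1
    have e2 := real_inner_le_norm (L2 ζ) δ.2
    have e3 : ‖L1 ζ‖ * ‖δ.1‖ ≤ (‖L1‖ * ‖ζ‖) * ‖δ‖ :=
      mul_le_mul (L1.le_opNorm ζ) (hsup1 δ) (norm_nonneg _) (by positivity)
    have e4 : ‖L2 ζ‖ * ‖δ.2‖ ≤ (‖L2‖ * ‖ζ‖) * ‖δ‖ :=
      mul_le_mul (L2.le_opNorm ζ) (hsup2 δ) (norm_nonneg _) (by positivity)
    simp only [hBf, hc]; linarith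
  have hiple : ∀ ζ δ, |ip ζ δ| ≤ 2 * ‖ζ‖ * ‖δ‖ := by
    intro ζ δ
    have e1 := abs_real_inner_le_norm ζ.1 δ.1
    have e2 := abs_real_inner_le_norm ζ.2 δ.2
    have e3 : ‖ζ.1‖ * ‖δ.1‖ ≤ ‖ζ‖ * ‖δ‖ := mul_le_mul (hsup1 ζ) (hsup1 δ) (norm_nonneg _) (norm_nonneg _)
    have e4 : ‖ζ.2‖ * ‖δ.2‖ ≤ ‖ζ‖ * ‖δ‖ := mul_le_mul (hsup2 ζ) (hsup2 δ) (norm_nonneg _) (norm_nonneg _)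
    have := abs_add_le (inner ℝ ζ.1 δ.1) (inner ℝ ζ.2 δ.2 : ℝ)
    simp only [hip]; linarith
  have hBadd : ∀ ζ δ, Bf (ζ + δ) (ζ + δ) = Bf ζ ζ + 2 * Bf ζ δ + Bf δ δ := by
    intro ζ δ
    have := hsym ζ δ
    simp only [hBf, map_add, inner_add_left, Prod.fst_add, Prod.snd_add, inner_add_right] at *
    linarith
  have hn2add : ∀ ζ δ, n2 (ζ + δ) = n2 ζ + 2 * ip ζ δ + n2 δ := by
    intro ζ δ
    simp only [hn2, hip, Prod.fst_add, Prod.snd_add, norm_add_sq_real]; ring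
  set P0 : E × E → E × E → ℝ := fun α ζ => 1 / 2 * Bf ζ ζ + 3 * κ / 2 * n2 ζ + ip α ζ with hP0
  have hP0add : ∀ α ζ δ, P0 α (ζ + δ) = P0 α ζ + (Bf ζ δ + 3 * κ * ip ζ δ + ip α δ)
      + (1 / 2 * Bf δ δ + 3 * κ / 2 * n2 δ) := by
    intro α ζ δ
    simp only [hP0, hBadd, hn2add]
    simp only [hip, Prod.fst_add, Prod.snd_add, inner_add_right]; ring
  obtain ⟨a, ha0, ha1, ha2⟩ : ∃ a : ℝ, 0 < a ∧ c ^ 2 / (2 * κ) + c / 2 + 1 ≤ a ∧ c + 3 * κ ≤ 2 * a :=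
    ⟨c ^ 2 / (2 * κ) + c / 2 + 1 + 3 * κ, by positivity, by linarith, by
      have : 0 ≤ c ^ 2 / (2 * κ) := by positivity
      linarith⟩
  obtain ⟨V1, g1, hV1a, hV1b, hV1g, K1, hK1⟩ := moreau _ (isCompact_closedBall (0:E) ρ)
    ⟨0, by simp [hρ.le]⟩ v1 hv1 a ha0
  obtain ⟨V2, g2, hV2a, hV2b, hV2g, K2, hK2⟩ := moreau _ (isCompact_closedBall (0:E) ρ)
    ⟨0, by simp [hρ.le]⟩ v2 hv2 a ha0
  set G : E × E → E × E := fun ζ => (g1 ζ.1, g2 ζ.2) with hG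
  set T : E × E → E × E := fun ζ => (g1 ζ.1 - L1 ζ - (3 * κ) • ζ.1, g2 ζ.2 - L2 ζ - (3 * κ) • ζ.2) with hT
  have hGL : ∃ K, LipschitzWith K G :=
    ⟨_, (hK1.comp LipschitzWith.prod_fst).prodMk (hK2.comp LipschitzWith.prod_snd)⟩
  have hTL : ∃ K, LipschitzWith K T := by
    refine ⟨_, (((hK1.comp LipschitzWith.prod_fst).sub L1.lipschitz).sub
      ((lipschitzWith_smul (3 * κ)).comp LipschitzWith.prod_fst)).prodMk (((hK2.comp LipschitzWith.prod_snd).sub L2.lipschitz).sub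
      ((lipschitzWith_smul (3 * κ)).comp LipschitzWith.prod_snd))⟩
  obtain ⟨s, hs0, hs1, hs2, hs3⟩ : ∃ s : ℝ, 0 < s ∧ (c + 4) * s ≤ κ ∧ 2 * s < ρ ∧ s ≤ 1 := by
    refine ⟨min (κ / (c + 4)) (min (ρ / 4) 1), by positivity, ?_, ?_, ?_⟩
    · have := min_le_left (κ / (c + 4)) (min (ρ / 4) 1)
      rw [le_div_iff₀ (by positivity)] at this
      linarith
    · have := (min_le_right (κ / (c + 4)) (min (ρ / 4) 1)).trans (min_le_left _ _)
      linarith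
    · exact (min_le_right (κ / (c + 4)) (min (ρ / 4) 1)).trans (min_le_right _ _)
  obtain ⟨α, hα, hαd⟩ := exists_small_not_mem_image G T hGL hTL (κ * s / 2) (by positivity)
  set J : (E × E) × (E × E) → ℝ := fun X => v1 X.1.1 + v2 X.1.2 - a * n2 (X.1 - X.2) - P0 α X.2 with hJ
  set D : Set (E × E) := closedBall (0:E) ρ ×ˢ closedBall (0:E) ρ with hD
  have hJle : ∀ ζ ∈ D, ∀ ζ', J (ζ, ζ') ≤ - κ * n2 ζ' - ip α ζ' - n2 (ζ - ζ') := by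
    intro ζ hζ ζ'
    have e1 := hle ζ.1 hζ.1 ζ.2 hζ.2
    have e2 : Bf ζ ζ = Bf ζ' ζ' + 2 * Bf ζ' (ζ - ζ') + Bf (ζ - ζ') (ζ - ζ') := by
      rw [← hBadd]; simp
    have e3 := hBle ζ' (ζ - ζ')
    have e4 := hBle (ζ - ζ') (ζ - ζ')
    have e5 := hn2le ζ'
    have e6 := hn2le (ζ - ζ')
    set δ := ζ - ζ'
    have e7 : c * ‖ζ'‖ * ‖δ‖ ≤ κ / 2 * ‖ζ'‖ ^ 2 + c ^ 2 / (2 * κ) * ‖δ‖ ^ 2 := by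
      have : 0 ≤ (κ * ‖ζ'‖ - c * ‖δ‖) ^ 2 / (2 * κ) := by positivity
      have e : (κ * ‖ζ'‖ - c * ‖δ‖) ^ 2 / (2 * κ) = κ / 2 * ‖ζ'‖ ^ 2 + c ^ 2 / (2 * κ) * ‖δ‖ ^ 2 - c * ‖ζ'‖ * ‖δ‖ := by
        field_simp; ring
      linarith
    have e8 : (c ^ 2 / (2 * κ) + c / 2 + 1) * n2 δ ≤ a * n2 δ :=
      mul_le_mul_of_nonneg_right ha1 ((sq_nonneg _).trans e6)
    have e9 : (c ^ 2 / (2 * κ) + c / 2) * ‖δ‖ ^ 2 ≤ (c ^ 2 / (2 * κ) + c / 2) * n2 δ :=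
      mul_le_mul_of_nonneg_left e6 (by positivity)
    have e10 : v1 ζ.1 + v2 ζ.2 ≤ 1 / 2 * Bf ζ ζ := e1
    have e11 : κ / 2 * ‖ζ'‖ ^ 2 ≤ κ / 2 * n2 ζ' := mul_le_mul_of_nonneg_left e5 (by positivity)
    have e12 : c * ‖δ‖ * ‖δ‖ = c * ‖δ‖ ^ 2 := by ring
    simp only [hJ, hP0]
    have e13 : (c ^ 2 / (2 * κ)) * ‖δ‖ ^ 2 + c / 2 * ‖δ‖ ^ 2 ≤ a * n2 δ - n2 δ := by linarith
    have e14 : n2 (((ζ, ζ') : (E × E) × (E × E)).1 - ((ζ, ζ') : (E × E) × (E × E)).2) = n2 δ := rfl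
    simp only [] at e14 ⊢
    linarith
  have hn20 : ∀ ζ, 0 ≤ n2 ζ := fun ζ => (sq_nonneg _).trans (hn2le ζ)
  have hJz : J ((0,0),(0,0)) = 0 := by
    simp [hJ, hP0, hn2, hBf, hip, h10, h20]
  have hbig : ∀ ζ ∈ D, ∀ ζ', 0 ≤ J (ζ, ζ') → ‖ζ'‖ ≤ s ∧ ‖ζ - ζ'‖ ≤ s := by
    intro ζ hζ ζ' hJ0
    have e1 := hJle ζ hζ ζ'
    have e2 := (abs_le.1 (hiple α ζ')).1
    have e3 := hn2le ζ'
    have e4 := hn2le (ζ - ζ')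
    have e5 : κ * ‖ζ'‖ ^ 2 ≤ κ * n2 ζ' := mul_le_mul_of_nonneg_left e3 hκ.le
    have e6 : 2 * ‖α‖ * ‖ζ'‖ ≤ κ * s * ‖ζ'‖ := by
      have := mul_le_mul_of_nonneg_right hα.le (norm_nonneg ζ')
      linarith
    have e7 : ‖ζ'‖ ≤ s := by
      by_contra hh
      push Not at hh
      have : κ * ‖ζ'‖ * (‖ζ'‖ - s) ≤ 0 := by linarith [hn20 (ζ - ζ')]
      have : 0 < κ * ‖ζ'‖ * (‖ζ'‖ - s) := by
        have : 0 < ‖ζ'‖ := hs0.trans hh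
        have : 0 < ‖ζ'‖ - s := by linarith
        positivity
      linarith
    refine ⟨e7, ?_⟩
    have e8 : ‖ζ - ζ'‖ ^ 2 ≤ s ^ 2 := by
      have e9 : κ * s * ‖ζ'‖ ≤ 1 * s * s := by
        apply mul_le_mul _ e7 (norm_nonneg _) (by positivity)
        exact mul_le_mul_of_nonneg_right hκ1 hs0.le
      have : 0 ≤ κ * ‖ζ'‖ ^ 2 := by positivity
      linarith
    exact abs_le_of_sq_le_sq' e8 hs0.le |>.2
  obtain ⟨⟨ζ, ζ'⟩, ⟨hζD, hζ's⟩, hmax⟩ : ∃ X ∈ D ×ˢ closedBall (0 : E × E) 1,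
      IsMaxOn J (D ×ˢ closedBall (0 : E × E) 1) X := by
    refine UpperSemicontinuousOn.exists_isMaxOn ⟨((0,0),(0,0)), ?_⟩ ?_ ?_
    · simp [hD, hρ.le]
    · exact ((isCompact_closedBall _ _).prod (isCompact_closedBall _ _)).prod (isCompact_closedBall _ _)
    · have c1 : UpperSemicontinuousOn (fun X : (E × E) × (E × E) => v1 X.1.1) (D ×ˢ closedBall (0 : E × E) 1) :=
        hv1.comp (by fun_prop) (fun X hX => hX.1.1)
      have c2 : UpperSemicontinuousOn (fun X : (E × E) × (E × E) => v2 X.1.2) (D ×ˢ closedBall (0 : E × E) 1) :=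
        hv2.comp (by fun_prop) (fun X hX => hX.1.2)
      have c3 : Continuous (fun X : (E × E) × (E × E) => - (a * n2 (X.1 - X.2)) - P0 α X.2) := by
        simp only [hn2, hP0, hBf, hip]
        fun_prop
      have := (c1.add c2).add c3.continuousOn.upperSemicontinuousOn
      convert this using 2
      simp only [hJ]; ring
  set m := J (ζ, ζ') with hm
  have hm0 : 0 ≤ m := by
    rw [← hJz]
    exact hmax (show ((0,0),(0,0)) ∈ D ×ˢ closedBall (0 : E × E) 1 by simp [hD, hρ.le])
  obtain ⟨hz's, hδs⟩ := hbig ζ hζD ζ' hm0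
  have hmaxall : ∀ ξ ∈ D, ∀ ξ', J (ξ, ξ') ≤ m := by
    intro ξ hξ ξ'
    by_cases h : ξ' ∈ closedBall (0 : E × E) 1
    · exact hmax (show (ξ, ξ') ∈ D ×ˢ closedBall (0 : E × E) 1 from ⟨hξ, h⟩)
    · by_contra hh
      push Not at hh
      exact h (by simpa using ((hbig ξ hξ ξ' (hm0.trans hh.le)).1.trans hs3))
  have hFP : ∀ X : E × E, V1 X.1 + V2 X.2 ≤ m + P0 α X := by
    intro Y
    set χ : E × E := (-(2 * a)⁻¹) • (L1 Y + (3 * κ) • Y.1 + α.1, L2 Y + (3 * κ) • Y.2 + α.2) with hχ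
    set X := Y + χ with hX
    obtain ⟨ξ1, hξ1, e1⟩ := hV1b X.1 Y.1
    obtain ⟨ξ2, hξ2, e2⟩ := hV2b X.2 Y.2
    set ω : E × E := (1/2 : ℝ) • ((ξ1, ξ2) - X) with hω
    have e3 := hmaxall (ξ1, ξ2) ⟨hξ1, hξ2⟩ (Y + (χ + ω))
    have r1 : (ξ1, ξ2) - (Y + (χ + ω)) = ω := by
      have : Y + (χ + ω) = X + ω := by rw [hX]; abel
      rw [this, hω]; module
    simp only [hJ] at e3
    rw [r1, hP0add] at e3
    have r2 : (ξ1, ξ2) - X = (2:ℝ) • ω := by rw [hω]; module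
    have r3 : ξ1 - X.1 = (2:ℝ) • ω.1 := by rw [← Prod.smul_fst, ← r2]; rfl
    have r4 : ξ2 - X.2 = (2:ℝ) • ω.2 := by rw [← Prod.smul_snd, ← r2]; rfl
    have r5 : X.1 - Y.1 = χ.1 := by simp [hX]
    have r6 : X.2 - Y.2 = χ.2 := by simp [hX]
    rw [r3, r5, norm_smul] at e1
    rw [r4, r6, norm_smul] at e2
    norm_num at e1 e2
    have e4 : Bf Y (χ + ω) + 3 * κ * ip Y (χ + ω) + ip α (χ + ω) = - (2 * a) * ip χ (χ + ω) := by
      simp only [hχ, hBf, hip]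
      simp only [Prod.smul_fst, Prod.smul_snd, Prod.fst_add, Prod.snd_add, inner_smul_left, inner_add_left]
      simp only [RCLike.conj_to_real]
      field_simp
      ring
    have e5 : 1 / 2 * Bf (χ + ω) (χ + ω) + 3 * κ / 2 * n2 (χ + ω) ≤ a * n2 (χ + ω) := by
      have i1 := hBle (χ + ω) (χ + ω)
      have i2 := hn2le (χ + ω)
      have i3 : c * ‖χ + ω‖ ^ 2 ≤ c * n2 (χ + ω) := mul_le_mul_of_nonneg_left i2 hc0
      have i4 : (c + 3 * κ) * n2 (χ + ω) ≤ 2 * a * n2 (χ + ω) :=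
        mul_le_mul_of_nonneg_right ha2 (hn20 _)
      linarith
    have e6 : ip χ (χ + ω) = n2 χ + ip χ ω := by
      simp only [hip, hn2, Prod.fst_add, Prod.snd_add, inner_add_right, real_inner_self_eq_norm_sq]; ring
    have e7 := hn2add χ ω
    rw [e4, e6] at e3
    rw [e7] at e5 e3
    have e8 : n2 χ = ‖χ.1‖ ^ 2 + ‖χ.2‖ ^ 2 := rfl
    have e9 : n2 ω = ‖ω.1‖ ^ 2 + ‖ω.2‖ ^ 2 := rfl
    linarith
  have hlow1 := hV1a ζ.1 hζD.1 ζ'.1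
  have hlow2 := hV2a ζ.2 hζD.2 ζ'.2
  have hmeq : m = v1 ζ.1 + v2 ζ.2 - a * (‖ζ.1 - ζ'.1‖ ^ 2 + ‖ζ.2 - ζ'.2‖ ^ 2) - P0 α ζ' := by
    simp only [hm, hJ, hn2]; rfl
  have hFPe := hFP ζ'
  have eqV1 : V1 ζ'.1 = v1 ζ.1 - a * ‖ζ.1 - ζ'.1‖ ^ 2 := by linarith
  have eqV2 : V2 ζ'.2 = v2 ζ.2 - a * ‖ζ.2 - ζ'.2‖ ^ 2 := by linarith
  have hFP' : ∀ δ : E × E, V1 (ζ'.1 + δ.1) - V1 ζ'.1 + (V2 (ζ'.2 + δ.2) - V2 ζ'.2) ≤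
      Bf ζ' δ + 3 * κ * ip ζ' δ + ip α δ + (1 / 2 * Bf δ δ + 3 * κ / 2 * n2 δ) := by
    intro δ
    have e1 := hFP (ζ' + δ)
    rw [hP0add] at e1
    simp only [Prod.fst_add, Prod.snd_add] at e1
    linarith
  have hg1 : g1 ζ'.1 = L1 ζ' + (3 * κ) • ζ'.1 + α.1 := by
    refine grad_unique_of_le V1 _ _ _ (c / 2 + 3 * κ / 2) (hV1g _) fun h => ?_
    have e1 := hFP' (h, 0)
    have e2 := hBle (h, 0) (h, 0)
    have e3 : ‖((h, 0) : E × E)‖ = ‖h‖ := by simp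
    rw [e3] at e2
    simp only [hBf, hip, hn2] at e1 e2
    simp only [inner_zero_right, add_zero, norm_zero, sub_self, inner_add_left, inner_smul_left, RCLike.conj_to_real] at e1 e2 ⊢
    linarith
  have hg2 : g2 ζ'.2 = L2 ζ' + (3 * κ) • ζ'.2 + α.2 := by
    refine grad_unique_of_le V2 _ _ _ (c / 2 + 3 * κ / 2) (hV2g _) fun h => ?_
    have e1 := hFP' (0, h)
    have e2 := hBle (0, h) (0, h)
    have e3 : ‖((0, h) : E × E)‖ = ‖h‖ := by simp
    rw [e3] at e2
    simp only [hBf, hip, hn2] at e1 e2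
    simp only [inner_zero_right, add_zero, zero_add, norm_zero, sub_self, inner_add_left, inner_smul_left, RCLike.conj_to_real] at e1 e2 ⊢
    linarith
  have hTα : T ζ' = α := by
    simp only [hT, hg1, hg2]
    ext1
    · simp only; abel
    · simp only; abel
  have hGd := hαd ζ' hTα
  have hd1 : DifferentiableAt ℝ g1 ζ'.1 := by
    have i1 : DifferentiableAt ℝ (fun x : E => ((x, ζ'.2) : E × E)) ζ'.1 := by fun_prop
    have := (DifferentiableAt.comp ζ'.1 (g := G) hGd i1).fst
    exact this
  have hd2 : DifferentiableAt ℝ g2 ζ'.2 := by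
    have i1 : DifferentiableAt ℝ (fun x : E => ((ζ'.1, x) : E × E)) ζ'.2 := by fun_prop
    have := (DifferentiableAt.comp ζ'.2 (g := G) hGd i1).snd
    exact this
  have ht1 := taylor2 V1 g1 _ ζ'.1 (Eventually.of_forall hV1g) hd1.hasFDerivAt
  have ht2 := taylor2 V2 g2 _ ζ'.2 (Eventually.of_forall hV2g) hd2.hasFDerivAt
  have hζn : ‖ζ‖ ≤ 2 * s := by
    have : ζ = ζ' + (ζ - ζ') := by abel
    rw [this]
    exact (norm_add_le _ _).trans (by linarith)
  have hsκ : 4 * s ≤ κ := by linarith [mul_nonneg hc0 hs0.le]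
  have hjet : ∀ (w : E) (w' : E) (v V : E → ℝ) (g : E → E) (A : E →L[ℝ] E), ‖w‖ < ρ →
      (∀ ζ ∈ closedBall (0:E) ρ, ∀ z, v ζ - a * ‖ζ - z‖ ^ 2 ≤ V z) →
      V w' = v w - a * ‖w - w'‖ ^ 2 →
      (∀ κ > 0, ∀ᶠ h in 𝓝 (0 : E), |V (w' + h) - V w' - inner ℝ (g w') h - 1 / 2 * inner ℝ (A h) h|
      ≤ κ * ‖h‖ ^ 2) → Superjet v w (g w') A := by
    intro w w' v V g A hw hVa heq ht κ' hκ'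
    have hcont : ∀ᶠ h in 𝓝 (0:E), w + h ∈ closedBall (0:E) ρ := by
      have : Tendsto (fun h : E => w + h) (𝓝 0) (𝓝 w) := by
        have : Continuous (fun h : E => w + h) := by fun_prop
        simpa using this.tendsto 0
      exact this.eventually (closedBall_mem_nhds_of_mem (by simpa using hw))
    filter_upwards [hcont, ht κ' hκ'] with h h1 h2
    have e1 := hVa _ h1 (w' + h)
    have e2 := (abs_le.1 h2).2
    have e3 : w + h - (w' + h) = w - w' := by abel
    rw [e3] at e1
    linarith
  refine ⟨ζ.1, ζ.2, g1 ζ'.1, g2 ζ'.2, _, _, ?_, ?_, ?_, ?_,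
    hjet ζ.1 ζ'.1 v1 V1 g1 _ ?_ hV1a eqV1 ht1, hjet ζ.2 ζ'.2 v2 V2 g2 _ ?_ hV2a eqV2 ht2, ?_⟩
  · linarith [hsup1 ζ]
  · linarith [hsup2 ζ]
  · rw [hg1]
    have i1 := norm_add_le (L1 ζ' + (3 * κ) • ζ'.1) α.1
    have i2 := norm_add_le (L1 ζ') ((3 * κ) • ζ'.1)
    rw [norm_smul, Real.norm_eq_abs, abs_of_pos (by positivity : 0 < 3 * κ)] at i2
    have i3 := L1.le_opNorm ζ'
    have i4 : ‖L1‖ * ‖ζ'‖ ≤ c * s := mul_le_mul (le_add_of_nonneg_right L2.opNorm_nonneg) hz's (norm_nonneg _) hc0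
    have i5 : 3 * κ * ‖ζ'.1‖ ≤ 3 * s := by
      have : 3 * κ * ‖ζ'.1‖ ≤ 3 * 1 * s := mul_le_mul (by linarith) ((hsup1 _).trans hz's) (norm_nonneg _) (by norm_num)
      linarith
    have i6 : κ * s / 2 ≤ s := by linarith [mul_le_mul_of_nonneg_right hκ1 hs0.le]
    linarith [hsup1 α]
  · rw [hg2]
    have i1 := norm_add_le (L2 ζ' + (3 * κ) • ζ'.2) α.2
    have i2 := norm_add_le (L2 ζ') ((3 * κ) • ζ'.2)
    rw [norm_smul, Real.norm_eq_abs, abs_of_pos (by positivity : 0 < 3 * κ)] at i2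
    have i3 := L2.le_opNorm ζ'
    have i4 : ‖L2‖ * ‖ζ'‖ ≤ c * s := mul_le_mul (le_add_of_nonneg_left L1.opNorm_nonneg) hz's (norm_nonneg _) hc0
    have i5 : 3 * κ * ‖ζ'.2‖ ≤ 3 * s := by
      have : 3 * κ * ‖ζ'.2‖ ≤ 3 * 1 * s := mul_le_mul (by linarith) ((hsup2 _).trans hz's) (norm_nonneg _) (by norm_num)
      linarith
    have i6 : κ * s / 2 ≤ s := by linarith [mul_le_mul_of_nonneg_right hκ1 hs0.le]
    linarith [hsup2 α]
  · linarith [hsup1 ζ]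
  · linarith [hsup2 ζ]
  · intro ξ η
    have hev : ∀ᶠ t in 𝓝[>] (0:ℝ), |V1 (ζ'.1 + t • ξ) - V1 ζ'.1 - inner ℝ (g1 ζ'.1) (t • ξ) -
        1 / 2 * inner ℝ (fderiv ℝ g1 ζ'.1 (t • ξ)) (t • ξ)| ≤ κ / 2 * ‖t • ξ‖ ^ 2 ∧
        |V2 (ζ'.2 + t • η) - V2 ζ'.2 - inner ℝ (g2 ζ'.2) (t • η) -
        1 / 2 * inner ℝ (fderiv ℝ g2 ζ'.2 (t • η)) (t • η)| ≤ κ / 2 * ‖t • η‖ ^ 2 := by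
      have l1 : Tendsto (fun t : ℝ => t • ξ) (𝓝[>] 0) (𝓝 0) := by
        have : Continuous (fun t : ℝ => t • ξ) := by fun_prop
        simpa using (this.tendsto 0).mono_left nhdsWithin_le_nhds
      have l2 : Tendsto (fun t : ℝ => t • η) (𝓝[>] 0) (𝓝 0) := by
        have : Continuous (fun t : ℝ => t • η) := by fun_prop
        simpa using (this.tendsto 0).mono_left nhdsWithin_le_nhds
      exact (l1.eventually (ht1 (κ / 2) (by positivity))).and (l2.eventually (ht2 (κ / 2) (by positivity)))
    obtain ⟨t, ⟨e1, e2⟩, ht⟩ := (hev.and self_mem_nhdsWithin).exists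
    have ht : 0 < t := ht
    have e3 := hFP' (t • ξ, t • η)
    have e1' := (abs_le.1 e1).1
    have e2' := (abs_le.1 e2).1
    rw [hg1] at e1'
    rw [hg2] at e2'
    have r0 : ((t • ξ, t • η) : E × E) = t • (ξ, η) := rfl
    simp only [hBf, hip, hn2] at e3
    rw [show L1 (t • ξ, t • η) = t • L1 (ξ, η) by rw [r0, map_smul],
      show L2 (t • ξ, t • η) = t • L2 (ξ, η) by rw [r0, map_smul]] at e3
    simp only [map_smul, inner_smul_left, inner_smul_right, inner_add_left, norm_smul, Real.norm_eq_abs,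
      abs_of_pos ht, RCLike.conj_to_real, mul_pow] at e1' e2' e3
    have : t ^ 2 * (inner ℝ (fderiv ℝ g1 ζ'.1 ξ) ξ + inner ℝ (fderiv ℝ g2 ζ'.2 η) η) ≤
        t ^ 2 * (inner ℝ (L1 (ξ, η)) ξ + inner ℝ (L2 (ξ, η)) η + 4 * κ * (‖ξ‖ ^ 2 + ‖η‖ ^ 2)) := by
      linarith
    exact le_of_mul_le_mul_left this (by positivity)

end TOS

open Metric Set Filter Topology MeasureTheory

section Jets
set_option linter.unusedSectionVars false
variable {E : Type*} [NormedAddCommGroup E] [InnerProductSpace ℝ E] [FiniteDimensional ℝ E]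

noncomputable def Wf (p : E) : ℝ := Real.sqrt (1 + ‖p‖ ^ 2)

noncomputable def sg (p x : E) : E := x - (inner ℝ x p / (Wf p * (Wf p + 1))) • p

theorem Wf_sq (p : E) : Wf p ^ 2 = 1 + ‖p‖ ^ 2 := Real.sq_sqrt (by positivity)

theorem Wf_one_le (p : E) : 1 ≤ Wf p := by
  have := Wf_sq p
  have h0 : 0 ≤ Wf p := Real.sqrt_nonneg _
  nlinarith [sq_nonneg ‖p‖]

theorem Wf_pos (p : E) : 0 < Wf p := lt_of_lt_of_le one_pos (Wf_one_le p)

theorem sum_sg {ι : Type*} [Fintype ι] (b : OrthonormalBasis ι ℝ E) (A : E →L[ℝ] E) (p : E) :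
    ∑ i, inner ℝ (A (sg p (b i))) (sg p (b i)) =
      ∑ i, inner ℝ (A (b i)) (b i) - inner ℝ (A p) p / (Wf p) ^ 2 := by
  set θ := 1 / (Wf p * (Wf p + 1)) with hθ
  have h1 : ∀ i, inner ℝ (A (sg p (b i))) (sg p (b i)) = inner ℝ (A (b i)) (b i)
      - θ * (inner ℝ (A.adjoint p) (b i) * inner ℝ (b i) p) - θ * (inner ℝ (A p) (b i) * inner ℝ (b i) p)
      + θ ^ 2 * inner ℝ (A p) p * (inner ℝ p (b i) * inner ℝ (b i) p) := by
    intro i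
    have e : inner ℝ (b i) p / (Wf p * (Wf p + 1)) = θ * inner ℝ (b i) p := by rw [hθ]; ring
    have e2 : inner ℝ (A (b i)) p = inner ℝ (A.adjoint p) (b i) := by
      rw [ContinuousLinearMap.adjoint_inner_left, real_inner_comm]
    simp only [sg, e, map_sub, map_smul, inner_sub_left, inner_sub_right, inner_smul_left, inner_smul_right,
      RCLike.conj_to_real, e2]
    rw [real_inner_comm p (b i)]
    ring
  rw [Finset.sum_congr rfl fun i _ => h1 i]
  rw [Finset.sum_add_distrib, Finset.sum_sub_distrib, Finset.sum_sub_distrib, ← Finset.mul_sum, ← Finset.mul_sum,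
    ← Finset.mul_sum, b.sum_inner_mul_inner, b.sum_inner_mul_inner, b.sum_inner_mul_inner,
    ContinuousLinearMap.adjoint_inner_left, real_inner_self_eq_norm_sq, real_inner_comm (A p) p]
  have hw := Wf_sq p
  have hw1 := Wf_pos p
  have hp : ‖p‖ ^ 2 = Wf p ^ 2 - 1 := by linarith
  rw [hp, hθ]
  field_simp
  ring

end Jets

section JetsE
variable {N : ℕ}
local notation "𝔼" => EuclideanSpace ℝ (Fin N)

theorem mcOp_neg (φ : 𝔼 → ℝ) (x : 𝔼) : mcOp (fun y => - φ y) x = - mcOp φ x := by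
  have hg : ∀ y, gradient (fun y => - φ y) y = - gradient φ y := by
    intro y
    simp only [gradient]
    rw [show (fun y => - φ y) = -φ from rfl, fderiv_neg, map_neg]
  unfold mcOp
  rw [← Finset.sum_neg_distrib]
  refine Finset.sum_congr rfl fun i _ => ?_
  simp only [hg, norm_neg]
  have : (fun y => (Real.sqrt (1 + ‖gradient φ y‖ ^ 2))⁻¹ * (- gradient φ y) i) =
     - (fun y => (Real.sqrt (1 + ‖gradient φ y‖ ^ 2))⁻¹ * (gradient φ y) i) := by
    funext y; simp
  rw [this, fderiv_neg]; rfl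

theorem neg_subsol {U : Set 𝔼} {H u : 𝔼 → ℝ} (hu : IsViscositySupersol U H u) :
    IsViscositySubsol U (fun x => - H x) (fun x => - u x) := by
  intro φ hφ x hx hm
  have h1 := hu (fun y => - φ y) hφ.neg x hx (by
    refine Filter.Eventually.mono hm fun y hy => ?_
    simp only at hy ⊢
    linarith)
  rw [mcOp_neg] at h1
  have : (N : ℝ) * - H x = - (N * H x) := by ring
  show _ ≤ _
  linarith

theorem mcOp_quad (p z : 𝔼) (S : 𝔼 →L[ℝ] 𝔼) (hS : ∀ x y, inner ℝ (S x) y = inner ℝ x (S y)) :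
    mcOp (fun x => inner ℝ p (x - z) + 1 / 2 * inner ℝ (S (x - z)) (x - z)) z
      = (Wf p)⁻¹ * (∑ i, inner ℝ (S (EuclideanSpace.basisFun (Fin N) ℝ i)) (EuclideanSpace.basisFun (Fin N) ℝ i)
        - inner ℝ (S p) p / Wf p ^ 2) := by
  have hg : ∀ y, gradient (fun x => inner ℝ p (x - z) + 1 / 2 * inner ℝ (S (x - z)) (x - z)) y
      = p + S (y - z) := by
    intro y
    apply HasGradientAt.gradient
    rw [hasGradientAt_iff_hasFDerivAt]
    have h0 : HasFDerivAt (fun x : 𝔼 => x - z) (ContinuousLinearMap.id ℝ 𝔼) y :=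
      (hasFDerivAt_id y).sub_const z
    have h1 := (hasFDerivAt_const p y).inner ℝ h0
    have h2 := ((S.hasFDerivAt (x := y - z)).comp y h0).inner ℝ h0
    refine (h1.add (h2.const_mul (1/2))).congr_fderiv ?_
    ext h
    have e1 : inner ℝ (S h) (y - z) = inner ℝ (S (y - z)) h := by rw [hS h, real_inner_comm]
    simp only [Function.comp, _root_.add_apply, _root_.smul_apply, ContinuousLinearMap.comp_apply,
      ContinuousLinearMap.prod_apply, fderivInnerCLM_apply, _root_.zero_apply, ContinuousLinearMap.id_apply, InnerProductSpace.toDual_apply_apply,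
      inner_add_left, inner_zero_left, smul_eq_mul, e1]
    ring
  unfold mcOp
  simp only [hg]
  have hder : ∀ i : Fin N, HasFDerivAt (fun y => (Real.sqrt (1 + ‖p + S (y - z)‖ ^ 2))⁻¹ * (p + S (y - z)) i)
     ((Wf p)⁻¹ • ((EuclideanSpace.proj i : 𝔼 →L[ℝ] ℝ).comp S) + (p i) • (-(Wf p ^ 3)⁻¹ • ((innerSL ℝ p).comp S))) z := by
    intro i
    have h0 : HasFDerivAt (fun x : 𝔼 => x - z) (ContinuousLinearMap.id ℝ 𝔼) z :=
      (hasFDerivAt_id z).sub_const z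
    have h1 : HasFDerivAt (fun y => p + S (y - z)) S z := by
      exact (HasFDerivAt.comp (f := fun x : 𝔼 => x - z) z (S.hasFDerivAt (x := z - z)) h0).const_add p
    have h2 : HasFDerivAt (fun y => (p + S (y - z)) i) ((EuclideanSpace.proj i : 𝔼 →L[ℝ] ℝ).comp S) z :=
      (EuclideanSpace.proj i : 𝔼 →L[ℝ] ℝ).hasFDerivAt.comp z h1
    have h3 : HasFDerivAt (fun y => 1 + ‖p + S (y - z)‖ ^ 2) ((2:ℝ) • ((innerSL ℝ p).comp S)) z := by
      have := (h1.norm_sq).const_add 1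
      refine this.congr_fderiv ?_
      ext h; simp
    have hpz : 1 + ‖p + S (z - z)‖ ^ 2 = Wf p ^ 2 := by rw [Wf_sq]; simp
    have hw := Wf_pos p
    have hsq : Real.sqrt (Wf p ^ 2) = Wf p := Real.sqrt_sq hw.le
    have h4 : HasDerivAt (fun s : ℝ => (Real.sqrt s)⁻¹) (-(2 * Wf p ^ 3)⁻¹) (1 + ‖p + S (z - z)‖ ^ 2) := by
      rw [hpz]
      have hs := (Real.hasDerivAt_sqrt (x := Wf p ^ 2) (by positivity)).inv (by rw [hsq]; positivity)
      refine hs.congr_deriv ?_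
      rw [hsq]; field_simp
    have h5 := h4.comp_hasFDerivAt z h3
    have h6 := h5.mul h2
    refine h6.congr_fderiv ?_
    ext h
    simp only [Function.comp, hpz, hsq]
    simp
    field_simp
    simp
  have : ∀ i : Fin N, fderiv ℝ (fun y => (Real.sqrt (1 + ‖p + S (y - z)‖ ^ 2))⁻¹ * (p + S (y - z)) i) z
      (EuclideanSpace.single i 1) = (Wf p)⁻¹ * inner ℝ (S (EuclideanSpace.basisFun (Fin N) ℝ i)) (EuclideanSpace.basisFun (Fin N) ℝ i)
      - (Wf p ^ 3)⁻¹ * (inner ℝ (S p) (EuclideanSpace.basisFun (Fin N) ℝ i) * inner ℝ (EuclideanSpace.basisFun (Fin N) ℝ i) p) := by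
    intro i
    rw [(hder i).fderiv]
    rw [hS p]
    simp [EuclideanSpace.inner_single_left, EuclideanSpace.inner_single_right]
    ring
  rw [Finset.sum_congr rfl fun i _ => this i]
  rw [Finset.sum_sub_distrib, ← Finset.mul_sum, ← Finset.mul_sum, OrthonormalBasis.sum_inner_mul_inner]
  have hw := Wf_pos p
  field_simp

theorem jet_subsol {U : Set 𝔼} (hU : IsOpen U) {H v : 𝔼 → ℝ} (hv : IsViscositySubsol U H v) (z p : 𝔼) (hz : z ∈ U)
    (A : 𝔼 →L[ℝ] 𝔼) (hj : Superjet v z p A) (b : OrthonormalBasis (Fin N) ℝ 𝔼) :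
    N * H z * Wf p ≤ ∑ i, inner ℝ (A (sg p (b i))) (sg p (b i)) := by
  have htr : ∑ i, inner ℝ (A (b i)) (b i) = ∑ i, inner ℝ (A (EuclideanSpace.basisFun (Fin N) ℝ i)) (EuclideanSpace.basisFun (Fin N) ℝ i) := by
    have h1 := LinearMap.trace_eq_sum_inner (A : 𝔼 →ₗ[ℝ] 𝔼) b
    have h2 := LinearMap.trace_eq_sum_inner (A : 𝔼 →ₗ[ℝ] 𝔼) (EuclideanSpace.basisFun (Fin N) ℝ)
    rw [h1] at h2
    simp only [ContinuousLinearMap.coe_coe] at h2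
    simp only [real_inner_comm] at h2 ⊢
    exact h2
  rw [sum_sg, htr]
  set e := EuclideanSpace.basisFun (Fin N) ℝ
  have hw := Wf_pos p
  refine le_of_forall_pos_le_add fun κ' hκ' => ?_
  set κ := κ' / (2 * (N + 1)) with hκ
  have hκ0 : 0 < κ := by positivity
  set S : 𝔼 →L[ℝ] 𝔼 := (1/2 : ℝ) • (A + A.adjoint) + (2 * κ) • ContinuousLinearMap.id ℝ 𝔼 with hS
  have hSS : ∀ x y, inner ℝ (S x) y = inner ℝ x (S y) := by
    intro x y
    simp [hS, inner_add_left, inner_add_right, inner_smul_left, inner_smul_right,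
      ContinuousLinearMap.adjoint_inner_left, ContinuousLinearMap.adjoint_inner_right]
    ring
  have hSd : ∀ x, inner ℝ (S x) x = inner ℝ (A x) x + 2 * κ * ‖x‖ ^ 2 := by
    intro x
    simp [hS, inner_add_left, inner_smul_left, ContinuousLinearMap.adjoint_inner_left]
    rw [real_inner_comm (A x) x]; ring
  have h1 := hv (fun x => inner ℝ p (x - z) + 1 / 2 * inner ℝ (S (x - z)) (x - z)) (by
    apply ContDiff.contDiffOn
    have c0 : ContDiff ℝ 2 (fun x : 𝔼 => x - z) := by fun_prop
    exact (contDiff_const.inner ℝ c0).add (contDiff_const.mul ((S.contDiff.comp c0).inner ℝ c0))) z hz (by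
    have hU' : U ∈ 𝓝 z := hU.mem_nhds hz
    unfold IsLocalMaxOn
    have ht : Tendsto (fun x : 𝔼 => x - z) (𝓝 z) (𝓝 0) := by
      have : Continuous (fun x : 𝔼 => x - z) := by fun_prop
      simpa using this.tendsto z
    have := (ht.eventually (hj κ hκ0)).filter_mono (nhdsWithin_le_nhds (s := U))
    refine this.mono fun x hx => ?_
    simp only [add_sub_cancel] at hx
    simp only [hSd, sub_self, map_zero, inner_zero_right]
    linarith)
  rw [mcOp_quad p z S hSS, hSd p] at h1
  have h2 : N * H z * Wf p ≤ (∑ i, inner ℝ (S (e i)) (e i) - (inner ℝ (A p) p + 2 * κ * ‖p‖ ^ 2) / Wf p ^ 2) := by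
    have := mul_le_mul_of_nonneg_left h1.le hw.le
    rw [mul_inv_cancel_left₀ hw.ne'] at this
    linarith
  simp only [hSd, Finset.sum_add_distrib] at h2
  have h3 : ∑ i, 2 * κ * ‖e i‖ ^ 2 = 2 * κ * N := by simp; ring
  rw [h3, add_div] at h2
  have h4 : 0 ≤ 2 * κ * ‖p‖ ^ 2 / Wf p ^ 2 := by positivity
  have h5 : 2 * κ * N ≤ κ' := by
    have : κ' = 2 * κ * (N + 1) := by rw [hκ]; field_simp
    linarith
  linarith

end JetsE

open Metric Set Filter Topology MeasureTheory

section MainIneq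

theorem continuous_Wf {E : Type*} [NormedAddCommGroup E] : Continuous (Wf : E → ℝ) := by
  unfold Wf; fun_prop

theorem continuous_sg {E : Type*} [NormedAddCommGroup E] [InnerProductSpace ℝ E] [FiniteDimensional ℝ E] (x : E) :
    Continuous (fun p : E => sg p x) := by
  unfold sg
  have h1 : Continuous (fun p : E => inner ℝ x p / (Wf p * (Wf p + 1))) := by
    refine Continuous.div (by fun_prop) (continuous_Wf.mul (continuous_Wf.add continuous_const)) fun p => ?_
    have := Wf_pos p
    positivity
  exact continuous_const.sub (h1.smul continuous_id)

theorem sg_neg {E : Type*} [NormedAddCommGroup E] [InnerProductSpace ℝ E] (p x : E) : sg (-p) x = sg p x := by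
  simp [sg, Wf, neg_div]

theorem Wf_neg {E : Type*} [NormedAddCommGroup E] (p : E) : Wf (-p) = Wf p := by
  simp [Wf]

variable {N : ℕ}
local notation "𝔼" => EuclideanSpace ℝ (Fin N)

theorem main_ineq {Ω : Set 𝔼} (hΩ : IsOpen Ω) {H u v : 𝔼 → ℝ} (hH : ContinuousOn H Ω)
    (hu : LowerSemicontinuousOn u Ω) (hus : IsViscositySupersol Ω H u)
    (hv : UpperSemicontinuousOn v Ω) (hvs : IsViscositySubsol Ω H v)
    (zh yh : 𝔼) (hz : zh ∈ Ω) (hy : yh ∈ Ω) (ψ β : 𝔼 → ℝ) (gψ gβ : 𝔼 → 𝔼) (S M : 𝔼 →L[ℝ] 𝔼)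
    (hS : ∀ x y, inner ℝ (S x) y = inner ℝ x (S y)) (hM : ∀ x y, inner ℝ (M x) y = inner ℝ x (M y))
    (hψ : ∀ᶠ d in 𝓝 (zh - yh), HasGradientAt ψ (gψ d) d) (hψ2 : HasFDerivAt gψ S (zh - yh))
    (hβ : ∀ᶠ d in 𝓝 zh, HasGradientAt β (gβ d) d) (hβ2 : HasFDerivAt gβ M zh)
    (hmax : ∀ᶠ X in 𝓝 (zh, yh), v X.1 - u X.2 - ψ (X.1 - X.2) - β X.1 ≤ v zh - u yh - ψ (zh - yh) - β zh)
    (b b' : OrthonormalBasis (Fin N) ℝ 𝔼) (p q : 𝔼) (hq : q = gψ (zh - yh)) (hp : p = q + gβ zh) :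
    N * H zh * Wf p - N * H yh * Wf q ≤ ∑ i, (inner ℝ (S (sg p (b i) - sg q (b' i))) (sg p (b i) - sg q (b' i))
      + inner ℝ (M (sg p (b i))) (sg p (b i))) := by
  have step : ∀ κ : ℝ, 0 < κ → κ ≤ 1 → ∃ z y p' q' : 𝔼, ‖z‖ ≤ κ ∧ ‖y‖ ≤ κ ∧ ‖p'‖ ≤ κ ∧ ‖q'‖ ≤ κ ∧
      (zh + z ∈ Ω → yh + y ∈ Ω → N * H (zh + z) * Wf (p + p') - N * H (yh + y) * Wf (q - q') ≤
        ∑ i, (inner ℝ (S (sg (p + p') (b i) - sg (q - q') (b' i))) (sg (p + p') (b i) - sg (q - q') (b' i))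
      + inner ℝ (M (sg (p + p') (b i))) (sg (p + p') (b i)))
      + 5 * κ * ∑ i, (‖sg (p + p') (b i)‖ ^ 2 + ‖sg (q - q') (b' i)‖ ^ 2)) := by
    intro κ hκ hκ1
    have t1 := taylor2 ψ gψ S (zh - yh) hψ hψ2 (κ / 6) (by positivity)
    have t2 := taylor2 β gβ M zh hβ hβ2 (κ / 6) (by positivity)
    have hprod : ∀ᶠ X in 𝓝 ((0 : 𝔼), (0 : 𝔼)),
        v (zh + X.1) - u (yh + X.2) - ψ (zh - yh + (X.1 - X.2)) - β (zh + X.1) ≤ v zh - u yh - ψ (zh - yh) - β zh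
        ∧ |ψ (zh - yh + (X.1 - X.2)) - ψ (zh - yh) - inner ℝ (gψ (zh - yh)) (X.1 - X.2) - 1 / 2 * inner ℝ (S (X.1 - X.2)) (X.1 - X.2)|
      ≤ κ / 6 * ‖X.1 - X.2‖ ^ 2 ∧ |β (zh + X.1) - β zh - inner ℝ (gβ zh) X.1 - 1 / 2 * inner ℝ (M X.1) X.1|
      ≤ κ / 6 * ‖X.1‖ ^ 2 ∧ zh + X.1 ∈ Ω ∧ yh + X.2 ∈ Ω := by
      have l1 : Tendsto (fun X : 𝔼 × 𝔼 => ((zh + X.1, yh + X.2) : 𝔼 × 𝔼)) (𝓝 (0, 0)) (𝓝 (zh, yh)) := by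
        have : Continuous (fun X : 𝔼 × 𝔼 => ((zh + X.1, yh + X.2) : 𝔼 × 𝔼)) := by fun_prop
        simpa using this.tendsto (0, 0)
      have l2 : Tendsto (fun X : 𝔼 × 𝔼 => X.1 - X.2) (𝓝 (0, 0)) (𝓝 0) := by
        have : Continuous (fun X : 𝔼 × 𝔼 => X.1 - X.2) := by fun_prop
        simpa using this.tendsto (0, 0)
      have l3 : Tendsto (fun X : 𝔼 × 𝔼 => X.1) (𝓝 (0, 0)) (𝓝 0) := continuous_fst.tendsto _
      have l4 : ∀ᶠ X in 𝓝 (zh, yh), X.1 ∈ Ω ∧ X.2 ∈ Ω :=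
        ((continuous_fst.tendsto (zh, yh)).eventually (hΩ.mem_nhds hz)).and
          ((continuous_snd.tendsto (zh, yh)).eventually (hΩ.mem_nhds hy))
      filter_upwards [l1.eventually hmax, l2.eventually t1, l3.eventually t2, l1.eventually l4] with X h1 h2 h3 h4
      refine ⟨?_, h2, h3, h4⟩
      have : zh + X.1 - (yh + X.2) = zh - yh + (X.1 - X.2) := by abel
      simp only [this] at h1
      exact h1
    obtain ⟨ρ', hρ', hb⟩ := Metric.eventually_nhds_iff_ball.1 hprod
    set ρ := ρ' / 2 with hρd
    have hρ : 0 < ρ := by positivity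
    have hin : ∀ ξ ∈ closedBall (0:𝔼) ρ, ∀ η ∈ closedBall (0:𝔼) ρ, ((ξ, η) : 𝔼 × 𝔼) ∈ ball ((0:𝔼), (0:𝔼)) ρ' := by
      intro ξ hξ η hη
      rw [mem_closedBall_zero_iff] at hξ hη
      rw [mem_ball, dist_eq_norm]
      show ‖((ξ - 0, η - 0) : 𝔼 × 𝔼)‖ < ρ'
      rw [sub_zero, sub_zero, Prod.norm_def]
      exact max_lt (by simp only; linarith [hρd]) (by simp only; linarith [hρd])
    set v1 : 𝔼 → ℝ := fun ξ => v (zh + ξ) - v zh - inner ℝ p ξ with hv1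
    set v2 : 𝔼 → ℝ := fun η => - u (yh + η) + u yh + inner ℝ q η with hv2
    set L1 : 𝔼 × 𝔼 →L[ℝ] 𝔼 := S.comp (ContinuousLinearMap.fst ℝ 𝔼 𝔼 - ContinuousLinearMap.snd ℝ 𝔼 𝔼)
      + M.comp (ContinuousLinearMap.fst ℝ 𝔼 𝔼) + κ • ContinuousLinearMap.fst ℝ 𝔼 𝔼 with hL1
    set L2 : 𝔼 × 𝔼 →L[ℝ] 𝔼 := - S.comp (ContinuousLinearMap.fst ℝ 𝔼 𝔼 - ContinuousLinearMap.snd ℝ 𝔼 𝔼)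
      + κ • ContinuousLinearMap.snd ℝ 𝔼 𝔼 with hL2
    have hL1a : ∀ X : 𝔼 × 𝔼, L1 X = S (X.1 - X.2) + M X.1 + κ • X.1 := fun X => rfl
    have hL2a : ∀ X : 𝔼 × 𝔼, L2 X = - S (X.1 - X.2) + κ • X.2 := fun X => rfl
    have hQ : ∀ ξ η : 𝔼, inner ℝ (L1 (ξ, η)) ξ + inner ℝ (L2 (ξ, η)) η = inner ℝ (S (ξ - η)) (ξ - η) + inner ℝ (M ξ) ξ
        + κ * (‖ξ‖ ^ 2 + ‖η‖ ^ 2) := by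
      intro ξ η
      rw [hL1a, hL2a]
      simp only [inner_add_left, inner_smul_left, inner_neg_left, inner_sub_right, real_inner_self_eq_norm_sq, RCLike.conj_to_real]
      ring
    obtain ⟨z, y, p', q', A1, A2, hzk, hyk, hpk, hqk, j1, j2, hmat⟩ := tos L1 L2 (by
      intro ζ δ
      simp only [hL1a, hL2a, inner_add_left, inner_smul_left, inner_neg_left, RCLike.conj_to_real]
      have e1 := hS (ζ.1 - ζ.2) (δ.1 - δ.2)
      have e2 := hM ζ.1 δ.1
      rw [real_inner_comm] at e1 e2
      simp only [inner_sub_right, inner_sub_left] at e1 e2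
      rw [real_inner_comm ζ.1 δ.1, real_inner_comm ζ.2 δ.2]
      rw [real_inner_comm (S (δ.1 - δ.2)) ζ.1, real_inner_comm (S (δ.1 - δ.2)) ζ.2] at e1
      rw [real_inner_comm (M δ.1) ζ.1] at e2
      rw [real_inner_comm (S (ζ.1 - ζ.2)) δ.1, real_inner_comm (S (ζ.1 - ζ.2)) δ.2] at e1
      rw [real_inner_comm (M ζ.1) δ.1] at e2
      linarith) ρ hρ v1 v2 (by
      have c1 : UpperSemicontinuousOn (fun ξ => v (zh + ξ)) (closedBall 0 ρ) :=
        hv.comp (by fun_prop) (fun ξ hξ => (hb _ (hin ξ hξ 0 (by simp [hρ.le]))).2.2.2.1)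
      have c2 : Continuous (fun ξ : 𝔼 => - v zh - inner ℝ p ξ) := by fun_prop
      have e : v1 = fun ξ => v (zh + ξ) + (- v zh - inner ℝ p ξ) := by funext ξ; simp only [hv1]; ring
      rw [e]
      exact c1.add c2.continuousOn.upperSemicontinuousOn) (by
      have c0 : UpperSemicontinuousOn (fun x => - u x) Ω := hu.neg
      have c1 : UpperSemicontinuousOn (fun ξ => - u (yh + ξ)) (closedBall 0 ρ) :=
        c0.comp (by fun_prop) (fun ξ hξ => (hb _ (hin 0 (by simp [hρ.le]) ξ hξ)).2.2.2.2)
      have c2 : Continuous (fun ξ : 𝔼 => u yh + inner ℝ q ξ) := by fun_prop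
      have e : v2 = fun ξ => - u (yh + ξ) + (u yh + inner ℝ q ξ) := by funext ξ; simp only [hv2]; ring
      rw [e]
      exact c1.add c2.continuousOn.upperSemicontinuousOn) (by simp [hv1]) (by simp [hv2]) (by
      intro ξ hξ η hη
      obtain ⟨h1, h2, h3, -, -⟩ := hb _ (hin ξ hξ η hη)
      have h2' := (abs_le.1 h2).2
      have h3' := (abs_le.1 h3).2
      rw [hQ]
      have e1 : ‖ξ - η‖ ^ 2 ≤ 2 * (‖ξ‖ ^ 2 + ‖η‖ ^ 2) := by
        have i1 := parallelogram_law_with_norm ℝ ξ η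
        have i2 := mul_self_nonneg ‖ξ + η‖
        rw [sq, sq, sq]
        linarith
      have e2 := mul_le_mul_of_nonneg_left e1 (show 0 ≤ κ / 6 by positivity)
      have e3 : 0 ≤ κ / 6 * ‖η‖ ^ 2 := by positivity
      simp only [hv1, hv2, hp, inner_add_left, ← hq, inner_sub_right] at h2' ⊢
      simp only [inner_sub_right] at h1 h2' h3' ⊢
      linarith) κ hκ hκ1
    refine ⟨z, y, p', q', hzk, hyk, hpk, hqk, fun hzΩ hyΩ => ?_⟩
    have J1 : Superjet v (zh + z) (p + p') A1 := by
      intro κ' hκ'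
      filter_upwards [j1 κ' hκ'] with h hh
      simp only [hv1, inner_add_right] at hh
      rw [← add_assoc zh z h] at hh
      rw [inner_add_left]
      linarith
    have J2 : Superjet (fun x => - u x) (yh + y) (-(q - q')) A2 := by
      intro κ' hκ'
      filter_upwards [j2 κ' hκ'] with h hh
      simp only [hv2, inner_add_right] at hh
      rw [← add_assoc yh y h] at hh
      rw [inner_neg_left, inner_sub_left]
      linarith
    have K1 := jet_subsol hΩ hvs _ _ hzΩ A1 J1 b
    have K2 := jet_subsol hΩ (neg_subsol hus) _ _ hyΩ A2 J2 b'
    simp only [sg_neg, Wf_neg] at K2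
    have K3 : ∑ i, (inner ℝ (A1 (sg (p + p') (b i))) (sg (p + p') (b i)) + inner ℝ (A2 (sg (q - q') (b' i))) (sg (q - q') (b' i)))
      ≤ ∑ i, ((inner ℝ (S (sg (p + p') (b i) - sg (q - q') (b' i))) (sg (p + p') (b i) - sg (q - q') (b' i))
      + inner ℝ (M (sg (p + p') (b i))) (sg (p + p') (b i)))
      + 5 * κ * (‖sg (p + p') (b i)‖ ^ 2 + ‖sg (q - q') (b' i)‖ ^ 2)) := by
      refine Finset.sum_le_sum fun i _ => ?_
      have := hmat (sg (p + p') (b i)) (sg (q - q') (b' i))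
      rw [hQ] at this
      linarith
    rw [Finset.sum_add_distrib, Finset.sum_add_distrib, ← Finset.mul_sum] at K3
    linarith
  have step' : ∀ n : ℕ, ∃ z y p' q' : 𝔼, ‖z‖ ≤ 1 / ((n:ℝ) + 1) ∧ ‖y‖ ≤ 1 / ((n:ℝ) + 1) ∧ ‖p'‖ ≤ 1 / ((n:ℝ) + 1) ∧ ‖q'‖ ≤ 1 / ((n:ℝ) + 1) ∧
      (zh + z ∈ Ω → yh + y ∈ Ω → N * H (zh + z) * Wf (p + p') - N * H (yh + y) * Wf (q - q') ≤
        ∑ i, (inner ℝ (S (sg (p + p') (b i) - sg (q - q') (b' i))) (sg (p + p') (b i) - sg (q - q') (b' i))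
      + inner ℝ (M (sg (p + p') (b i))) (sg (p + p') (b i)))
      + 5 * (1 / ((n:ℝ) + 1)) * ∑ i, (‖sg (p + p') (b i)‖ ^ 2 + ‖sg (q - q') (b' i)‖ ^ 2)) := by
    intro n
    refine step (1 / ((n:ℝ) + 1)) (by positivity) ?_
    rw [div_le_one (by positivity)]; linarith [(Nat.cast_nonneg n : (0:ℝ) ≤ n)]
  choose z y p' q' hz' hy' hp' hq' hineq using step'
  have h0 : Tendsto (fun n : ℕ => 1 / ((n:ℝ) + 1)) atTop (𝓝 0) := tendsto_one_div_add_atTop_nhds_zero_nat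
  have lz : Tendsto (fun n => zh + z n) atTop (𝓝 zh) := by
    simpa using (squeeze_zero_norm hz' h0).const_add zh
  have ly : Tendsto (fun n => yh + y n) atTop (𝓝 yh) := by
    simpa using (squeeze_zero_norm hy' h0).const_add yh
  have lp : Tendsto (fun n => p + p' n) atTop (𝓝 p) := by
    simpa using (squeeze_zero_norm hp' h0).const_add p
  have lq : Tendsto (fun n => q - q' n) atTop (𝓝 q) := by
    simpa using (squeeze_zero_norm hq' h0).const_sub q
  have lHz := ((hH.continuousAt (hΩ.mem_nhds hz)).tendsto.comp lz)
  have lHy := ((hH.continuousAt (hΩ.mem_nhds hy)).tendsto.comp ly)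
  have lWp := (continuous_Wf.tendsto p).comp lp
  have lWq := (continuous_Wf.tendsto q).comp lq
  have lpb : ∀ i, Tendsto (fun n => sg (p + p' n) (b i)) atTop (𝓝 (sg p (b i))) := fun i =>
    ((continuous_sg (b i)).tendsto p).comp lp
  have lqb : ∀ i, Tendsto (fun n => sg (q - q' n) (b' i)) atTop (𝓝 (sg q (b' i))) := fun i =>
    ((continuous_sg (b' i)).tendsto q).comp lq
  have LHS : Tendsto (fun n => N * H (zh + z n) * Wf (p + p' n) - N * H (yh + y n) * Wf (q - q' n)) atTop
      (𝓝 (N * H zh * Wf p - N * H yh * Wf q)) :=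
    ((lHz.const_mul (N:ℝ)).mul lWp).sub ((lHy.const_mul (N:ℝ)).mul lWq)
  have RHS1 : Tendsto (fun n => ∑ i, (inner ℝ (S (sg (p + p' n) (b i) - sg (q - q' n) (b' i))) (sg (p + p' n) (b i) - sg (q - q' n) (b' i))
      + inner ℝ (M (sg (p + p' n) (b i))) (sg (p + p' n) (b i)))) atTop
      (𝓝 (∑ i, (inner ℝ (S (sg p (b i) - sg q (b' i))) (sg p (b i) - sg q (b' i))
      + inner ℝ (M (sg p (b i))) (sg p (b i))))) := by
    refine tendsto_finsetSum _ fun i _ => ?_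
    exact (((S.continuous.tendsto _).comp ((lpb i).sub (lqb i))).inner ((lpb i).sub (lqb i))).add
      (((M.continuous.tendsto _).comp (lpb i)).inner (lpb i))
  have RHS2 : Tendsto (fun n : ℕ => 5 * (1 / ((n:ℝ) + 1)) * ∑ i, (‖sg (p + p' n) (b i)‖ ^ 2 + ‖sg (q - q' n) (b' i)‖ ^ 2)) atTop
      (𝓝 (5 * 0 * ∑ i, (‖sg p (b i)‖ ^ 2 + ‖sg q (b' i)‖ ^ 2))) := by
    refine (h0.const_mul 5).mul (tendsto_finsetSum _ fun i _ => ?_)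
    exact ((lpb i).norm.pow 2).add ((lqb i).norm.pow 2)
  have RHS := RHS1.add RHS2
  rw [mul_zero, zero_mul, add_zero] at RHS
  refine le_of_tendsto_of_tendsto LHS RHS ?_
  filter_upwards [lz.eventually (hΩ.mem_nhds hz), ly.eventually (hΩ.mem_nhds hy)] with n h1 h2
  exact hineq n h1 h2

end MainIneq

open Metric Set Filter Topology MeasureTheory

section Radial
set_option linter.unusedSectionVars false
variable {E : Type*} [NormedAddCommGroup E] [InnerProductSpace ℝ E] [FiniteDimensional ℝ E]

noncomputable def radS (a1 a2 r : ℝ) (e : E) : E →L[ℝ] E :=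
  (a1 / r) • ContinuousLinearMap.id ℝ E + (a2 - a1 / r) • (innerSL ℝ e).smulRight e

theorem radS_apply (a1 a2 r : ℝ) (e x : E) :
    radS a1 a2 r e x = (a1 / r) • x + (a2 - a1 / r) • (inner ℝ e x • e) := rfl

theorem radS_symm (a1 a2 r : ℝ) (e x y : E) :
    inner ℝ (radS a1 a2 r e x) y = inner ℝ x (radS a1 a2 r e y) := by
  simp only [radS_apply, inner_add_left, inner_add_right, inner_smul_left, inner_smul_right, RCLike.conj_to_real]
  rw [real_inner_comm x e]; ring

theorem radS_quad (a1 a2 r : ℝ) (e x : E) :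
    inner ℝ (radS a1 a2 r e x) x = (a1 / r) * ‖x‖ ^ 2 + (a2 - a1 / r) * inner ℝ e x ^ 2 := by
  simp only [radS_apply, inner_add_left, inner_smul_left, RCLike.conj_to_real, real_inner_self_eq_norm_sq]
  ring

theorem hasFDerivAt_norm_sub (c x : E) (hx : x ≠ c) :
    HasFDerivAt (fun y => ‖y - c‖) ((1 / ‖x - c‖) • innerSL ℝ (x - c)) x := by
  have h0 : 0 < ‖x - c‖ := norm_pos_iff.2 (sub_ne_zero.2 hx)
  have h1 : HasFDerivAt (fun y => ‖y - c‖ ^ 2) (2 • innerSL ℝ (x - c)) x := by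
    have := ((hasStrictFDerivAt_norm_sq (x - c)).hasFDerivAt).comp x ((hasFDerivAt_id x).sub_const c)
    exact this
  have h2 := h1.sqrt (by positivity)
  simp only [Real.sqrt_sq (norm_nonneg _)] at h2
  refine h2.congr_fderiv ?_
  ext y
  simp
  field_simp

theorem radial_grad (c x : E) (hx : x ≠ c) (φ : ℝ → ℝ) (φ1 : ℝ) (h : HasDerivAt φ φ1 ‖x - c‖) :
    HasGradientAt (fun y => φ ‖y - c‖) ((φ1 / ‖x - c‖) • (x - c)) x := by
  rw [hasGradientAt_iff_hasFDerivAt]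
  refine (h.comp_hasFDerivAt x (hasFDerivAt_norm_sub c x hx)).congr_fderiv ?_
  ext y
  simp
  ring

theorem radial_hess (c x : E) (hx : x ≠ c) (φ1 : ℝ → ℝ) (φ2 : ℝ) (h : HasDerivAt φ1 φ2 ‖x - c‖) :
    HasFDerivAt (fun y => (φ1 ‖y - c‖ / ‖y - c‖) • (y - c))
      (radS (φ1 ‖x - c‖) φ2 ‖x - c‖ ((1 / ‖x - c‖) • (x - c))) x := by
  have h0 : 0 < ‖x - c‖ := norm_pos_iff.2 (sub_ne_zero.2 hx)
  have h1 := (h.div (hasDerivAt_id _) h0.ne').comp_hasFDerivAt x (hasFDerivAt_norm_sub c x hx)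
  have h2 := h1.smul ((hasFDerivAt_id x).sub_const c)
  refine h2.congr_fderiv ?_
  ext1 y
  simp only [radS_apply]
  simp only [_root_.add_apply, ContinuousLinearMap.smulRight_apply, _root_.smul_apply, ContinuousLinearMap.id_apply, id, Function.comp_def, innerSL_apply_apply, smul_eq_mul, Pi.div_apply, inner_smul_left, RCLike.conj_to_real, smul_smul]
  congr 2
  field_simp

theorem sg_inner_id {p n x : E} {m : ℝ} (hp : p = m • n) (hn : ‖n‖ = 1) :
    sg p x = x - ((1 - 1 / Wf p) * inner ℝ x n) • n := by
  have hw := Wf_pos p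
  have h2 := Wf_sq p
  have h3 : ‖p‖ ^ 2 = m ^ 2 := by rw [hp, norm_smul, hn, mul_one, Real.norm_eq_abs, sq_abs]
  have h4 : m ^ 2 = Wf p ^ 2 - 1 := by rw [h2, h3]; ring
  unfold sg
  have e1 : ∀ w : ℝ, (inner ℝ x p / w) • p = (m ^ 2 * inner ℝ x n / w) • n := by
    intro w
    rw [hp, inner_smul_right, smul_smul]; congr 1; ring
  rw [e1, h4]
  congr 2
  have : Wf p + 1 ≠ 0 := by positivity
  field_simp
  ring

theorem sg_norm_sq (p x : E) : ‖sg p x‖ ^ 2 = ‖x‖ ^ 2 - inner ℝ x p ^ 2 / (1 + ‖p‖ ^ 2) := by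
  have hw := Wf_pos p
  have h2 := Wf_sq p
  rw [← h2]
  unfold sg
  rw [norm_sub_sq_real, inner_smul_right, norm_smul, mul_pow, Real.norm_eq_abs, sq_abs]
  have h3 : ‖p‖ ^ 2 = (Wf p - 1) * (Wf p + 1) := by linarith
  rw [h3]
  have : Wf p + 1 ≠ 0 := by positivity
  field_simp
  ring

theorem sg_norm_le (p x : E) : ‖sg p x‖ ≤ ‖x‖ := by
  have h := sg_norm_sq p x
  have : 0 ≤ inner ℝ x p ^ 2 / (1 + ‖p‖ ^ 2) := by positivity
  exact le_of_sq_le_sq (by linarith) (norm_nonneg _)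

theorem sg_norm_ge (p x : E) : ‖x‖ ^ 2 / (1 + ‖p‖ ^ 2) ≤ ‖sg p x‖ ^ 2 := by
  rw [sg_norm_sq, le_sub_iff_add_le, ← add_div, div_le_iff₀ (by positivity)]
  have h := real_inner_mul_inner_self_le x p
  rw [real_inner_self_eq_norm_sq, real_inner_self_eq_norm_sq] at h
  linarith

end Radial

section Steep
variable {E : Type*} [NormedAddCommGroup E] [InnerProductSpace ℝ E] [FiniteDimensional ℝ E]

theorem steep_alg {ι : Type*} [Fintype ι] (b' : OrthonormalBasis ι ℝ E) (e p q : E) (P k : ℝ) (he : ‖e‖ = 1) (hP : 1 ≤ P) (hq : q = P • e)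
    (hpq : ‖p - q‖ ≤ k) (hk : k ≤ P / 2) :
    ∃ b : OrthonormalBasis ι ℝ E, ∀ a2 r : ℝ, a2 ≤ 0 → 0 < r →
      ∑ i, inner ℝ (radS P a2 r e (sg p (b i) - sg q (b' i))) (sg p (b i) - sg q (b' i))
        ≤ 16 * (k ^ 4 + k ^ 2) / (r * P ^ 3) + a2 / (2 * P ^ 2) := by
  have hk0 : 0 ≤ k := (norm_nonneg _).trans hpq
  have hqn : ‖q‖ = P := by rw [hq, norm_smul, he, Real.norm_eq_abs, abs_of_pos (by linarith), mul_one]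
  have hpn : P / 2 ≤ ‖p‖ := by
    have := norm_sub_norm_le q p
    rw [norm_sub_rev] at this
    linarith
  set m := ‖p‖ with hm
  have hm0 : 0 < m := by linarith
  obtain ⟨n, hn⟩ : ∃ n, n = (1 / m) • p := ⟨_, rfl⟩
  have hn1 : ‖n‖ = 1 := by rw [hn, norm_smul, Real.norm_eq_abs, abs_of_pos (by positivity), ← hm]; field_simp
  have hpn' : p = m • n := by rw [hn, smul_smul]; field_simp; simp
  obtain ⟨c0, hc0⟩ : ∃ c0 : ℝ, c0 = inner ℝ e n := ⟨_, rfl⟩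
  have hee : inner ℝ e e = (1:ℝ) := by rw [real_inner_self_eq_norm_sq, he]; norm_num
  have hnn : inner ℝ n n = (1:ℝ) := by rw [real_inner_self_eq_norm_sq, hn1]; norm_num
  set w := p - q with hw
  have hpw : p = q + w := by rw [hw]; abel
  have hew : |inner ℝ e w| ≤ k := by
    have := abs_real_inner_le_norm e w
    rw [he, one_mul] at this; exact this.trans hpq
  have hep : m * c0 = P + inner ℝ e w := by
    have : inner ℝ e p = P + inner ℝ e w := by rw [hpw, inner_add_right, hq, inner_smul_right, hee, mul_one]
    rw [← this, hc0, ← inner_smul_right, ← hpn']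
  have hc0p : 0 ≤ c0 := by
    have := (abs_le.1 hew).1
    have : 0 ≤ m * c0 := by linarith
    exact nonneg_of_mul_nonneg_right this hm0
  obtain ⟨t, ht⟩ : ∃ t, t = n - c0 • e := ⟨_, rfl⟩
  have hnt : n = c0 • e + t := by rw [ht]; abel
  have het : inner ℝ e t = (0:ℝ) := by rw [ht, inner_sub_right, inner_smul_right, hee, hc0]; ring
  have hte : inner ℝ t e = (0:ℝ) := by rw [real_inner_comm, het]
  have hmt : m • t = w - (inner ℝ e w : ℝ) • e := by
    rw [ht, smul_sub, ← hpn', smul_smul, hep, add_smul, ← hq, hpw]; abel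
  have htk : m * ‖t‖ ≤ k := by
    have h1 : ‖m • t‖ ^ 2 ≤ k ^ 2 := by
      rw [hmt, norm_sub_sq_real, inner_smul_right, norm_smul, he, Real.norm_eq_abs, mul_one, sq_abs, real_inner_comm]
      have := pow_le_pow_left₀ (norm_nonneg w) hpq 2
      rw [real_inner_comm]; nlinarith [sq_nonneg (inner ℝ e w : ℝ)]
    rw [norm_smul, Real.norm_eq_abs, abs_of_pos hm0] at h1
    exact le_of_sq_le_sq h1 hk0
  set T := ‖t‖ with hT
  have hT0 : 0 ≤ T := norm_nonneg _
  have hTk : T ≤ 2 * k / P := by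
    rw [le_div_iff₀ (by linarith)]
    have := mul_le_mul_of_nonneg_right hpn hT0
    linarith
  have hWz : P / 2 ≤ Wf p := by
    refine le_trans hpn (le_of_sq_le_sq ?_ (Wf_pos p).le)
    rw [Wf_sq]; linarith
  have hWzp := Wf_pos p
  have hWyp := Wf_pos q
  have hWy : Wf q ^ 2 ≤ 2 * P ^ 2 := by
    rw [Wf_sq, hqn]
    have := mul_le_mul hP hP zero_le_one (by linarith)
    linarith
  have hnorm : ‖e + n‖ ^ 2 = 2 * (1 + c0) := by
    rw [norm_add_sq_real, he, hn1, ← hc0]; ring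
  have hrefl : ∀ f : E, ((Submodule.span ℝ {e + n})ᗮ).reflection f = f - ((inner ℝ f e + inner ℝ f n) / (1 + c0)) • (e + n) := by
    intro f
    rw [Submodule.reflection_orthogonal_apply, Submodule.reflection_singleton_apply]
    simp only [RCLike.ofReal_real_eq_id, id]
    rw [hnorm, real_inner_comm, inner_add_right, neg_sub, ← Nat.cast_smul_eq_nsmul ℝ 2, smul_smul]
    congr 2
    have : 1 + c0 ≠ 0 := by positivity
    push_cast
    field_simp
  refine ⟨b'.map ((Submodule.span ℝ {e + n})ᗮ).reflection, fun a2 r ha2 hr => ?_⟩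
  set mz := 1 / Wf p with hmz
  set my := 1 / Wf q with hmy
  have hd : ∀ i, sg p (b'.map ((Submodule.span ℝ {e + n})ᗮ).reflection i) - sg q (b' i) =
      (- inner ℝ (b' i) t - (inner ℝ (b' i) e) * (c0 * mz + my)) • e
        + (- inner ℝ (b' i) t / (1 + c0) - (inner ℝ (b' i) e) * mz) • t := by
    intro i
    rw [OrthonormalBasis.map_apply, hrefl, sg_inner_id hpn' hn1, sg_inner_id hq he]
    set f := b' i
    have hne : inner ℝ n e = c0 := by rw [hc0, real_inner_comm]
    have h1 : inner ℝ (f - ((inner ℝ f e + inner ℝ f n) / (1 + c0)) • (e + n)) n = - (inner ℝ f e : ℝ) := by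
      rw [inner_sub_left, inner_smul_left, inner_add_left, hnn, ← hc0]
      simp only [RCLike.conj_to_real]
      have : 1 + c0 ≠ 0 := by positivity
      field_simp
      ring
    rw [h1]
    have h2 : inner ℝ f n = c0 * inner ℝ f e + inner ℝ f t := by
      conv_lhs => rw [hnt]
      rw [inner_add_right, inner_smul_right]
    rw [h2, ← hmz, ← hmy]
    rw [hnt]
    have : 1 + c0 ≠ 0 := by positivity
    match_scalars <;> first | ring1 | (field_simp; ring1)
  have hquad : ∀ i, inner ℝ (radS P a2 r e (sg p (b'.map ((Submodule.span ℝ {e + n})ᗮ).reflection i) - sg q (b' i))) (sg p (b'.map ((Submodule.span ℝ {e + n})ᗮ).reflection i) - sg q (b' i))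
      = (P / r * T ^ 2) * (- inner ℝ (b' i) t / (1 + c0) - (inner ℝ (b' i) e) * mz) ^ 2
        + a2 * (- inner ℝ (b' i) t - (inner ℝ (b' i) e) * (c0 * mz + my)) ^ 2 := by
    intro i
    rw [hd, radS_quad]
    set α := (- inner ℝ (b' i) t - (inner ℝ (b' i) e) * (c0 * mz + my))
    set γ := (- inner ℝ (b' i) t / (1 + c0) - (inner ℝ (b' i) e) * mz)
    rw [norm_add_sq_real, inner_add_right, norm_smul, norm_smul, inner_smul_left, inner_smul_right, inner_smul_right,
      het, hee, he, Real.norm_eq_abs, Real.norm_eq_abs, mul_pow, mul_pow, sq_abs, sq_abs]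
    simp only [← hT]
    ring
  have s1 : ∑ i, inner ℝ (b' i) t * inner ℝ (b' i) t = T ^ 2 := by
    have := b'.sum_inner_mul_inner t t
    rw [real_inner_self_eq_norm_sq] at this
    rw [hT, ← this]; refine Finset.sum_congr rfl fun i _ => ?_
    rw [real_inner_comm t (b' i)]
  have s2 : ∑ i, inner ℝ (b' i) t * inner ℝ (b' i) e = 0 := by
    have := b'.sum_inner_mul_inner t e
    rw [hte] at this
    rw [← this]; refine Finset.sum_congr rfl fun i _ => ?_
    rw [real_inner_comm t (b' i)]
  have s3 : ∑ i, inner ℝ (b' i) e * inner ℝ (b' i) e = 1 := by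
    have := b'.sum_inner_mul_inner e e
    rw [hee] at this
    rw [← this]; refine Finset.sum_congr rfl fun i _ => ?_
    rw [real_inner_comm e (b' i)]
  have hsum : ∀ x y : ℝ, ∑ i, (- inner ℝ (b' i) t * x - (inner ℝ (b' i) e) * y) ^ 2 = x ^ 2 * T ^ 2 + y ^ 2 := by
    intro x y
    have : ∀ i, (- inner ℝ (b' i) t * x - (inner ℝ (b' i) e) * y) ^ 2 = x ^ 2 * (inner ℝ (b' i) t * inner ℝ (b' i) t)
       + 2 * x * y * (inner ℝ (b' i) t * inner ℝ (b' i) e) + y ^ 2 * (inner ℝ (b' i) e * inner ℝ (b' i) e) := by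
      intro i; ring
    simp only [this, Finset.sum_add_distrib, ← Finset.mul_sum, s1, s2, s3]
    ring
  have hs1 := hsum (1 / (1 + c0)) mz
  have hs2 := hsum 1 (c0 * mz + my)
  simp only [mul_one_div, mul_one] at hs1 hs2
  simp only [hquad, Finset.sum_add_distrib, ← Finset.mul_sum, hs1, hs2]
  have hmz0 : 0 < mz := by positivity
  have hmy0 : 0 < my := by positivity
  have hmz1 : mz ≤ 2 / P := by
    rw [hmz, div_le_div_iff₀ hWzp (by linarith)]; linarith
  have hmy1 : 1 / (2 * P ^ 2) ≤ my ^ 2 := by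
    rw [hmy, div_pow, one_pow]
    exact one_div_le_one_div_of_le (by positivity) hWy
  have i1 : a2 * (1 ^ 2 * T ^ 2 + (c0 * mz + my) ^ 2) ≤ a2 / (2 * P ^ 2) := by
    have : a2 / (2 * P ^ 2) = a2 * (1 / (2 * P ^ 2)) := by ring
    rw [this]
    refine mul_le_mul_of_nonpos_left ?_ ha2
    have h1 : my ^ 2 ≤ (c0 * mz + my) ^ 2 := by
      refine pow_le_pow_left₀ hmy0.le ?_ 2
      linarith [mul_nonneg hc0p hmz0.le]
    linarith [sq_nonneg T]
  have i2 : P / r * T ^ 2 * ((1 / (1 + c0)) ^ 2 * T ^ 2 + mz ^ 2) ≤ 16 * (k ^ 4 + k ^ 2) / (r * P ^ 3) := by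
    have hP0 : 0 < P := by linarith
    have h1 : T ^ 2 ≤ (2 * k / P) ^ 2 := pow_le_pow_left₀ hT0 hTk 2
    have h2 : mz ^ 2 ≤ (2 / P) ^ 2 := pow_le_pow_left₀ hmz0.le hmz1 2
    have h3 : (1 / (1 + c0)) ^ 2 ≤ 1 := by
      refine pow_le_one₀ (by positivity) ?_
      rw [div_le_one (by positivity)]; linarith
    have h4 : (1 / (1 + c0)) ^ 2 * T ^ 2 ≤ (2 * k / P) ^ 2 := by
      have := mul_le_mul h3 h1 (by positivity) zero_le_one
      linarith
    have h5 : P / r * T ^ 2 ≤ P / r * (2 * k / P) ^ 2 := mul_le_mul_of_nonneg_left h1 (by positivity)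
    calc _ ≤ P / r * (2 * k / P) ^ 2 * ((2 * k / P) ^ 2 + (2 / P) ^ 2) :=
          mul_le_mul h5 (add_le_add h4 h2) (by positivity) (by positivity)
      _ = _ := by field_simp; ring
  linarith

end Steep

open Metric Set Filter Topology MeasureTheory

theorem Wf_lip {E : Type*} [NormedAddCommGroup E] [InnerProductSpace ℝ E] [FiniteDimensional ℝ E] (p q : E) : Wf p ≤ Wf q + ‖p - q‖ := by
  have h1 : ‖p‖ ≤ ‖q‖ + ‖p - q‖ := by
    have := norm_add_le q (p - q)
    simpa using this
  have h2 := Wf_sq p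
  have h3 := Wf_sq q
  have h4 : ‖q‖ ≤ Wf q := by
    refine le_of_sq_le_sq ?_ (Wf_pos q).le
    linarith
  have h5 := pow_le_pow_left₀ (norm_nonneg _) h1 2
  have h6 := mul_le_mul_of_nonneg_right h4 (norm_nonneg (p - q))
  refine le_of_sq_le_sq ?_ (add_nonneg (Wf_pos q).le (norm_nonneg _))
  rw [h2, add_sq, h3]
  rw [add_sq] at h5
  linarith

theorem Wf_le {E : Type*} [NormedAddCommGroup E] [InnerProductSpace ℝ E] [FiniteDimensional ℝ E] (p : E) : Wf p ≤ 1 + ‖p‖ := by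
  have h2 := Wf_sq p
  refine le_of_sq_le_sq ?_ (by positivity)
  rw [h2, add_sq]
  linarith [norm_nonneg p]

section L7
variable {N : ℕ}
local notation "𝔼" => EuclideanSpace ℝ (Fin N)

theorem H_lower {Λ hz hy Wp Wq k r : ℝ} (n : ℝ) (hn : 0 ≤ n) (hΛ : 0 ≤ Λ) (h1 : |hz - hy| ≤ Λ * r) (h2 : |hz| ≤ Λ)
    (h3 : Wp ≤ Wq + k) (h4 : Wq ≤ Wp + k) (hW : 0 ≤ Wq) :
    -(n * (Λ * r * Wq + Λ * k)) ≤ n * hz * Wp - n * hy * Wq := by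
  have e : n * hz * Wp - n * hy * Wq = n * (hz * (Wp - Wq) + (hz - hy) * Wq) := by ring
  have i1 : |hz * (Wp - Wq)| ≤ Λ * k := by
    rw [abs_mul]
    exact mul_le_mul h2 (abs_le.2 ⟨by linarith, by linarith⟩) (abs_nonneg _) hΛ
  have i2 : |(hz - hy) * Wq| ≤ Λ * r * Wq := by
    rw [abs_mul, abs_of_nonneg hW]
    exact mul_le_mul_of_nonneg_right h1 hW
  rw [e, ← mul_neg]
  refine mul_le_mul_of_nonneg_left ?_ hn
  linarith [(abs_le.1 i1).1, (abs_le.1 i2).1]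

theorem steep_ineq {Ω : Set 𝔼} (hΩ : IsOpen Ω) {H u v : 𝔼 → ℝ} (hH : ContinuousOn H Ω)
    (hu : LowerSemicontinuousOn u Ω) (hus : IsViscositySupersol Ω H u)
    (hv : UpperSemicontinuousOn v Ω) (hvs : IsViscositySubsol Ω H v)
    (z y c : 𝔼) (hz : z ∈ Ω) (hy : y ∈ Ω) (hzy : z ≠ y) (C Λ : ℝ) (hC : 0 ≤ C) (hΛ : 0 ≤ Λ)
    (hL : |H z - H y| ≤ Λ * ‖z - y‖) (hHb : |H z| ≤ Λ)
    (ψ ψ1 : ℝ → ℝ) (a2 : ℝ) (hψ : ∀ᶠ r in 𝓝 ‖z - y‖, HasDerivAt ψ (ψ1 r) r) (hψ1 : HasDerivAt ψ1 a2 ‖z - y‖)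
    (ha2 : a2 ≤ 0) (hP : 1 ≤ ψ1 ‖z - y‖) (hk : 2 * C * ‖z - c‖ ≤ ψ1 ‖z - y‖ / 2)
    (hmax : ∀ᶠ X in 𝓝 (z, y), v X.1 - u X.2 - ψ ‖X.1 - X.2‖ - C * ‖X.1 - c‖ ^ 2 ≤ v z - u y - ψ ‖z - y‖ - C * ‖z - c‖ ^ 2) :
    - a2 / (2 * ψ1 ‖z - y‖ ^ 2) ≤ 16 * ((2 * C * ‖z - c‖) ^ 4 + (2 * C * ‖z - c‖) ^ 2) / (‖z - y‖ * ψ1 ‖z - y‖ ^ 3)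
      + 2 * C * N + N * (2 * Λ * ‖z - y‖ * ψ1 ‖z - y‖ + Λ * (2 * C * ‖z - c‖)) := by
  set r := ‖z - y‖ with hr
  set P := ψ1 r with hPd
  set k := 2 * C * ‖z - c‖ with hkd
  have hd0 : z - y ≠ 0 := sub_ne_zero.2 hzy
  have hr0 : 0 < r := norm_pos_iff.2 hd0
  set e := (1 / r) • (z - y) with he
  have he1 : ‖e‖ = 1 := by
    rw [he, norm_smul, Real.norm_eq_abs, abs_of_pos (by positivity), ← hr]; field_simp
  have hq : P • e = (ψ1 ‖z - y‖ / ‖z - y‖) • (z - y) := by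
    rw [he, smul_smul, ← hr, ← hPd]; congr 1; ring
  have hk0 : ‖(2 * C) • (z - c)‖ = k := by
    rw [norm_smul, Real.norm_eq_abs, abs_of_nonneg (by positivity)]
  obtain ⟨b, hb⟩ := steep_alg (EuclideanSpace.basisFun (Fin N) ℝ) e (P • e + (2 * C) • (z - c)) (P • e) P k he1 hP rfl
    (by rw [add_sub_cancel_left, hk0]) hk
  have hrad := radial_hess (0 : 𝔼) (z - y) hd0 ψ1 a2 (by rwa [sub_zero])
  simp only [sub_zero] at hrad
  have hgr : ∀ᶠ d in 𝓝 (z - y), HasGradientAt (fun d : 𝔼 => ψ ‖d‖) ((ψ1 ‖d‖ / ‖d‖) • d) d := by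
    have h1 := (continuous_norm.tendsto (z - y)).eventually hψ
    filter_upwards [h1, isOpen_ne.mem_nhds hd0] with d hd hd'
    have := radial_grad (0 : 𝔼) d hd' ψ (ψ1 ‖d‖) (by rwa [sub_zero])
    simpa only [sub_zero] using this
  have hgβ : ∀ d : 𝔼, HasGradientAt (fun z => C * ‖z - c‖ ^ 2) ((2 * C) • (d - c)) d := by
    intro d
    rw [hasGradientAt_iff_hasFDerivAt]
    have := (((hasStrictFDerivAt_norm_sq (d - c)).hasFDerivAt).comp d ((hasFDerivAt_id d).sub_const c)).const_mul C
    refine this.congr_fderiv ?_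
    ext x
    simp
    ring
  have hM : HasFDerivAt (fun d : 𝔼 => (2 * C) • (d - c)) ((2 * C) • ContinuousLinearMap.id ℝ 𝔼) z :=
    ((hasFDerivAt_id z).sub_const c).const_smul (2 * C)
  have key := main_ineq hΩ hH hu hus hv hvs z y hz hy (fun d => ψ ‖d‖) (fun z => C * ‖z - c‖ ^ 2)
    (fun d => (ψ1 ‖d‖ / ‖d‖) • d) (fun d => (2 * C) • (d - c)) _ _ (radS_symm _ _ _ _) (by
      intro x y
      simp [inner_smul_left, inner_smul_right]) hgr hrad (Eventually.of_forall hgβ) hM hmax b (EuclideanSpace.basisFun (Fin N) ℝ)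
      (P • e + (2 * C) • (z - c)) (P • e) hq rfl
  rw [Finset.sum_add_distrib] at key
  have k1 := hb a2 r ha2 hr0
  have k2 : ∑ i, inner ℝ (((2 * C) • ContinuousLinearMap.id ℝ 𝔼) (sg (P • e + (2 * C) • (z - c)) (b i))) (sg (P • e + (2 * C) • (z - c)) (b i)) ≤ 2 * C * N := by
    have : ∀ i ∈ Finset.univ, inner ℝ (((2 * C) • ContinuousLinearMap.id ℝ 𝔼) (sg (P • e + (2 * C) • (z - c)) (b i))) (sg (P • e + (2 * C) • (z - c)) (b i)) ≤ 2 * C := by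
      intro i _
      simp only [_root_.smul_apply, ContinuousLinearMap.id_apply, inner_smul_left, RCLike.conj_to_real, real_inner_self_eq_norm_sq]
      have h1 := sg_norm_le (P • e + (2 * C) • (z - c)) (b i)
      rw [b.norm_eq_one] at h1
      have h2 := pow_le_one₀ (n := 2) (norm_nonneg _) h1
      have := mul_le_mul_of_nonneg_left h2 (show 0 ≤ 2 * C by positivity)
      linarith
    refine (Finset.sum_le_card_nsmul _ _ _ this).trans ?_
    simp
    linarith
  have w1 := Wf_lip (P • e + (2 * C) • (z - c)) (P • e)
  have w2 := Wf_lip (P • e) (P • e + (2 * C) • (z - c))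
  rw [norm_sub_rev] at w2
  rw [add_sub_cancel_left, hk0] at w1 w2
  have w3 := Wf_le (P • e)
  rw [norm_smul, he1, Real.norm_eq_abs, abs_of_pos (by linarith), mul_one] at w3
  have hl := H_lower (N : ℝ) (Nat.cast_nonneg N) hΛ hL hHb w1 w2 (Wf_pos _).le
  have w4 : (N:ℝ) * (Λ * r * Wf (P • e) + Λ * k) ≤ N * (2 * Λ * r * P + Λ * k) := by
    refine mul_le_mul_of_nonneg_left ?_ (Nat.cast_nonneg N)
    have := mul_le_mul_of_nonneg_left (show Wf (P • e) ≤ 2 * P by linarith) (show 0 ≤ Λ * r by positivity)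
    linarith
  have e1 : - a2 / (2 * P ^ 2) = - (a2 / (2 * P ^ 2)) := by ring
  have e2 : r = ‖z - y‖ := rfl
  rw [e1]
  linarith

theorem L7 {Ω : Set 𝔼} (hΩ : IsOpen Ω) {H u v : 𝔼 → ℝ} (hH : ContinuousOn H Ω)
    (hu : LowerSemicontinuousOn u Ω) (hus : IsViscositySupersol Ω H u)
    (hv : UpperSemicontinuousOn v Ω) (hvs : IsViscositySubsol Ω H v)
    (c : 𝔼) (ρ Λ S0 C r1 : ℝ) (hρ : 0 < ρ) (hB : closedBall c ρ ⊆ Ω) (hΛ : 0 ≤ Λ) (hS0 : 0 < S0)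
    (hL : ∀ x ∈ closedBall c ρ, ∀ y ∈ closedBall c ρ, |H x - H y| ≤ Λ * ‖x - y‖)
    (hHb : ∀ x ∈ closedBall c ρ, |H x| ≤ Λ)
    (hS : ∀ x ∈ closedBall c ρ, ∀ y ∈ closedBall c ρ, v x - u y ≤ S0) (hvu : ∀ x ∈ closedBall c ρ, v x ≤ u x)
    (hC : C = 8 * S0 / ρ ^ 2) (hr1 : 0 < r1) (hr1' : r1 ≤ ρ / 2)
    (ω : ℝ → ℝ) (hω : ∀ x ∈ closedBall c (ρ / 2), ∀ y ∈ closedBall c ρ, ‖x - y‖ ≤ r1 → v x - u y ≤ ω ‖x - y‖)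
    (ψ ψ1 ψ2 : ℝ → ℝ) (hψc : ContinuousOn ψ (Icc 0 r1)) (hψ0 : ∀ r ∈ Icc 0 r1, 0 ≤ ψ r) (hψr1 : S0 < ψ r1)
    (hψ1 : ∀ r ∈ Ioo 0 r1, HasDerivAt ψ (ψ1 r) r) (hψ2 : ∀ r ∈ Ioo 0 r1, HasDerivAt ψ1 (ψ2 r) r)
    (hneg : ∀ r ∈ Ioo 0 r1, ψ2 r ≤ 0)
    (hode : ∀ r ∈ Ioo 0 r1, ψ r ≤ S0 → ∀ k, 0 ≤ k → k ^ 2 ≤ 4 * C * ω r → 1 ≤ ψ1 r ∧ k ≤ ψ1 r / 2 ∧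
      16 * (k ^ 4 + k ^ 2) / (r * ψ1 r ^ 3) + 2 * C * N + N * (2 * Λ * r * ψ1 r + Λ * k) < - ψ2 r / (2 * ψ1 r ^ 2)) :
    ∀ x ∈ closedBall c (ρ / 2), ∀ y, ‖x - y‖ ≤ r1 → v x - u y ≤ ψ ‖x - y‖ + C * ‖x - c‖ ^ 2 := by
  by_contra hcon
  push Not at hcon
  obtain ⟨x0, hx0, y0, hxy0, hlt⟩ := hcon
  have hC0 : 0 < C := by rw [hC]; positivity
  set Kc : Set (𝔼 × 𝔼) := {X | X.1 ∈ closedBall c (ρ / 2) ∧ ‖X.1 - X.2‖ ≤ r1} with hKc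
  have hsub : ∀ X ∈ Kc, X.1 ∈ closedBall c ρ ∧ X.2 ∈ closedBall c ρ := by
    rintro ⟨x, y⟩ ⟨h1, h2⟩
    simp only [mem_closedBall, dist_eq_norm] at h1 h2 ⊢
    refine ⟨by linarith, ?_⟩
    have : y - c = (x - c) - (x - y) := by abel
    rw [this]
    linarith [norm_sub_le (x - c) (x - y)]
  have hKcomp : IsCompact Kc := by
    have h1 : IsClosed Kc := by
      refine IsClosed.inter (isClosed_closedBall.preimage continuous_fst) ?_
      have h2 : Continuous (fun X : 𝔼 × 𝔼 => ‖X.1 - X.2‖) := by fun_prop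
      exact isClosed_le h2 continuous_const
    exact ((isCompact_closedBall c ρ).prod (isCompact_closedBall c ρ)).of_isClosed_subset h1
      (fun X hX => ⟨(hsub X hX).1, (hsub X hX).2⟩)
  set F : 𝔼 × 𝔼 → ℝ := fun X => v X.1 + - u X.2 + (- ψ ‖X.1 - X.2‖ - C * ‖X.1 - c‖ ^ 2) with hF
  have hFu : UpperSemicontinuousOn F Kc := by
    have c1 : UpperSemicontinuousOn (fun X : 𝔼 × 𝔼 => v X.1) Kc :=
      hv.comp continuous_fst.continuousOn (fun X hX => hB (hsub X hX).1)
    have c0 : UpperSemicontinuousOn (fun x => - u x) Ω := hu.neg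
    have c2 : UpperSemicontinuousOn (fun X : 𝔼 × 𝔼 => - u X.2) Kc :=
      c0.comp continuous_snd.continuousOn (fun X hX => hB (hsub X hX).2)
    have c3 : ContinuousOn (fun X : 𝔼 × 𝔼 => - ψ ‖X.1 - X.2‖ - C * ‖X.1 - c‖ ^ 2) Kc := by
      refine ContinuousOn.sub (ContinuousOn.neg ?_) (by fun_prop)
      exact hψc.comp (by fun_prop) (fun X hX => ⟨norm_nonneg _, hX.2⟩)
    exact (c1.add c2).add c3.upperSemicontinuousOn
  obtain ⟨⟨z, y⟩, hXK, hmax⟩ := hFu.exists_isMaxOn (show Kc.Nonempty from ⟨((x0, y0) : 𝔼 × 𝔼), hx0, hxy0⟩) hKcomp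
  have hpos : 0 < F (z, y) := by
    have h1 : F (x0, y0) ≤ F (z, y) := hmax (show (x0, y0) ∈ Kc from ⟨hx0, hxy0⟩)
    refine lt_of_lt_of_le ?_ h1
    simp only [hF]; linarith
  obtain ⟨hzB, hyB⟩ := hsub _ hXK
  simp only at hzB hyB
  have hz1 : ‖z - c‖ ≤ ρ / 2 := by have := hXK.1; rwa [mem_closedBall, dist_eq_norm] at this
  have hr1z : ‖z - y‖ ≤ r1 := hXK.2
  simp only [hF] at hpos
  have hψn := hψ0 ‖z - y‖ ⟨norm_nonneg _, hr1z⟩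
  have hCn : 0 ≤ C * ‖z - c‖ ^ 2 := by positivity
  have hSzy := hS z hzB y hyB
  have hne : z ≠ y := by
    rintro rfl
    have := hvu z hzB
    linarith
  have hr0 : 0 < ‖z - y‖ := norm_pos_iff.2 (sub_ne_zero.2 hne)
  have hlt1 : ‖z - y‖ < r1 := by
    refine lt_of_le_of_ne hr1z fun h => ?_
    rw [h] at hpos; linarith
  have hlt2 : ‖z - c‖ < ρ / 2 := by
    refine lt_of_le_of_ne hz1 fun h => ?_
    rw [h, hC] at hpos
    have : 8 * S0 / ρ ^ 2 * (ρ / 2) ^ 2 = 2 * S0 := by field_simp; norm_num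
    rw [this] at hpos; linarith
  have hrI : ‖z - y‖ ∈ Ioo 0 r1 := ⟨hr0, hlt1⟩
  have hω' := hω z hXK.1 y hyB hr1z
  obtain ⟨o1, o2, o3⟩ := hode ‖z - y‖ hrI (by linarith) (2 * C * ‖z - c‖) (by positivity) (by
    have : C * (C * ‖z - c‖ ^ 2) ≤ C * ω ‖z - y‖ := mul_le_mul_of_nonneg_left (by linarith) hC0.le
    nlinarith)
  have hevK : ∀ᶠ X in 𝓝 (z, y), X ∈ Kc := by
    have h1 : ∀ᶠ X : 𝔼 × 𝔼 in 𝓝 (z, y), ‖X.1 - c‖ < ρ / 2 :=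
      ContinuousAt.eventually_lt (by fun_prop) continuousAt_const hlt2
    have h2 : ∀ᶠ X : 𝔼 × 𝔼 in 𝓝 (z, y), ‖X.1 - X.2‖ < r1 :=
      ContinuousAt.eventually_lt (by fun_prop) continuousAt_const hlt1
    filter_upwards [h1, h2] with X h1 h2
    exact ⟨by rw [mem_closedBall, dist_eq_norm]; exact h1.le, h2.le⟩
  have := steep_ineq hΩ hH hu hus hv hvs z y c (hB hzB) (hB hyB) hne C Λ hC0.le hΛ (hL z hzB y hyB) (hHb z hzB) ψ ψ1 (ψ2 ‖z - y‖)
    (by filter_upwards [isOpen_Ioo.mem_nhds hrI] with r hr using hψ1 r hr) (hψ2 _ hrI) (hneg _ hrI) o1 o2 (by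
      filter_upwards [hevK] with X hX
      have h1 : F X ≤ F (z, y) := hmax hX
      simp only [hF] at h1
      linarith)
  linarith

end L7

open Metric Set Filter Topology MeasureTheory

section LipEst
variable {N : ℕ}
local notation "𝔼" => EuclideanSpace ℝ (Fin N)

structure Glob (Ω : Set 𝔼) (H u v : 𝔼 → ℝ) : Prop where
  op : IsOpen Ω
  hH : ContinuousOn H Ω
  hu : LowerSemicontinuousOn u Ω
  hus : IsViscositySupersol Ω H u
  hv : UpperSemicontinuousOn v Ω
  hvs : IsViscositySubsol Ω H v

structure Dat (Ω : Set 𝔼) (H u v : 𝔼 → ℝ) (B : Set 𝔼) (Λ S0 : ℝ) : Prop where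
  sub : B ⊆ Ω
  lip : ∀ x ∈ B, ∀ y ∈ B, |H x - H y| ≤ Λ * ‖x - y‖
  bd : ∀ x ∈ B, |H x| ≤ Λ
  hS : ∀ x ∈ B, ∀ y ∈ B, v x - u y ≤ S0
  vu : ∀ x ∈ B, v x ≤ u x

theorem Dat.mono {Ω : Set 𝔼} {H u v : 𝔼 → ℝ} {B B' : Set 𝔼} {Λ S0 : ℝ} (h : Dat Ω H u v B Λ S0) (hB : B' ⊆ B) :
    Dat Ω H u v B' Λ S0 :=
  ⟨hB.trans h.sub, fun x hx y hy => h.lip x (hB hx) y (hB hy), fun x hx => h.bd x (hB hx),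
    fun x hx y hy => h.hS x (hB hx) y (hB hy), fun x hx => h.vu x (hB hx)⟩

theorem holder_est {Ω : Set 𝔼} {H u v : 𝔼 → ℝ} (G : Glob Ω H u v) (ρ Λ S0 : ℝ) (hρ : 0 < ρ) (hΛ : 0 ≤ Λ) (hS0 : 0 < S0) :
    ∃ a b r1 : ℝ, 0 < a ∧ 0 < b ∧ b < 1 ∧ 0 < r1 ∧ ∀ c, Dat Ω H u v (closedBall c ρ) Λ S0 → ∀ y, ‖c - y‖ ≤ r1 →
      v c - u y ≤ a * ‖c - y‖ ^ b := by
  obtain ⟨C, hC⟩ : ∃ C, C = 8 * S0 / ρ ^ 2 := ⟨_, rfl⟩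
  have hC0 : 0 < C := by rw [hC]; positivity
  obtain ⟨k0, hk0⟩ : ∃ k0, k0 = Real.sqrt (4 * C * S0) := ⟨_, rfl⟩
  have hk0p : 0 ≤ k0 := by rw [hk0]; positivity
  have hk0s : k0 ^ 2 = 4 * C * S0 := by rw [hk0, Real.sq_sqrt (by positivity)]
  obtain ⟨K, hK⟩ : ∃ K, K = 16 * (k0 ^ 4 + k0 ^ 2) := ⟨_, rfl⟩
  have hK0 : 0 ≤ K := by rw [hK]; positivity
  obtain ⟨A0, hA0⟩ : ∃ A0 : ℝ, A0 = 2 * C * N + N * (Λ * k0) := ⟨_, rfl⟩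
  have hA0p : 0 ≤ A0 := by rw [hA0]; positivity
  obtain ⟨NL, hNL⟩ : ∃ NL : ℝ, NL = 2 * N * Λ := ⟨_, rfl⟩
  have hNLp : 0 ≤ NL := by rw [hNL]; positivity
  obtain ⟨b, hb⟩ : ∃ b, b = 1 / (16 * (1 + S0 * (1 + A0 + NL))) := ⟨_, rfl⟩
  have hb0 : 0 < b := by rw [hb]; positivity
  have hbe : 16 * b + 16 * (b * S0) + 16 * (A0 * (b * S0)) + 16 * (NL * (b * S0)) = 1 := by
    have : (1 + S0 * (1 + A0 + NL)) ≠ 0 := by positivity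
    rw [hb]; field_simp; ring
  have hbS : 0 < b * S0 := by positivity
  have hAb : 0 ≤ A0 * (b * S0) := by positivity
  have hNb : 0 ≤ NL * (b * S0) := by positivity
  have hb1 : b ≤ 1 / 4 := by linarith
  obtain ⟨P0, hP0⟩ : ∃ P0, P0 = 1 + 2 * k0 + 16 * K := ⟨_, rfl⟩
  have hP0p : 0 < P0 := by rw [hP0]; positivity
  obtain ⟨r1, hr1⟩ : ∃ r1, r1 = min (ρ / 2) ((S0 + 1) * b / P0) := ⟨_, rfl⟩
  have hr1p : 0 < r1 := by rw [hr1]; positivity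
  have hr1ρ : r1 ≤ ρ / 2 := by rw [hr1]; exact min_le_left _ _
  have hr1P : P0 ≤ (S0 + 1) * b / r1 := by
    rw [le_div_iff₀ hr1p, mul_comm, ← le_div_iff₀ hP0p, hr1]; exact min_le_right _ _
  obtain ⟨a, ha⟩ : ∃ a, a = (S0 + 1) / r1 ^ b := ⟨_, rfl⟩
  have ha0 : 0 < a := by rw [ha]; positivity
  have har : a * r1 ^ b = S0 + 1 := by
    have : r1 ^ b ≠ 0 := by positivity
    rw [ha]; field_simp
  refine ⟨a, b, r1, ha0, hb0, by linarith, hr1p, fun c D y hy => ?_⟩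
  have h1e : ∀ r, 0 < r → r * (a * b * r ^ (b - 1)) = b * (a * r ^ b) := by
    intro r hr
    rw [Real.rpow_sub_one hr.ne']; field_simp
  have := L7 G.op G.hH G.hu G.hus G.hv G.hvs c ρ Λ S0 C r1 hρ D.sub hΛ hS0 D.lip D.bd D.hS D.vu hC hr1p hr1ρ (fun _ => S0)
    (fun x hx y hy _ => D.hS x (closedBall_subset_closedBall (by linarith) hx) y hy)
    (fun r => a * r ^ b) (fun r => a * b * r ^ (b - 1)) (fun r => (b - 1) * (a * b * r ^ (b - 1)) / r)
    (continuousOn_const.mul (continuousOn_id.rpow_const (fun x _ => Or.inr hb0.le)))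
    (fun r hr => mul_nonneg ha0.le (Real.rpow_nonneg hr.1 _)) (by simp only [har]; linarith) (by
      intro r hr
      refine ((Real.hasDerivAt_rpow_const (p := b) (Or.inl hr.1.ne')).const_mul a).congr_deriv ?_
      ring) (by
      intro r hr
      refine ((Real.hasDerivAt_rpow_const (p := b - 1) (Or.inl hr.1.ne')).const_mul (a * b)).congr_deriv ?_
      rw [Real.rpow_sub_one hr.1.ne' (b - 1)]
      ring) (by
      intro r hr
      have h1 : 0 ≤ a * b * r ^ (b - 1) := mul_nonneg (by positivity) (Real.rpow_nonneg hr.1.le _)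
      refine div_nonpos_of_nonpos_of_nonneg (mul_nonpos_of_nonpos_of_nonneg (by linarith) h1) hr.1.le) (by
      intro r hr hψ k hk hkk
      obtain ⟨hr0, hrr⟩ := hr
      have e1 := h1e r hr0
      obtain ⟨p, hp⟩ : ∃ p, p = a * b * r ^ (b - 1) := ⟨_, rfl⟩
      try simp only at hψ hkk ⊢
      rw [← hp] at e1 ⊢
      have hrp : r * p ≤ b * S0 := by rw [e1]; exact mul_le_mul_of_nonneg_left hψ hb0.le
      have hpP : P0 ≤ p := by
        refine hr1P.trans ?_
        have : (S0 + 1) * b / r1 = a * b * r1 ^ (b - 1) := by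
          rw [← har, Real.rpow_sub_one hr1p.ne']; ring
        rw [this, hp]
        exact mul_le_mul_of_nonneg_left (Real.rpow_le_rpow_of_nonpos hr0 hrr.le (by linarith)) (by positivity)
      have hkk0 : k ≤ k0 := le_of_sq_le_sq (by rw [hk0s]; exact hkk) hk0p
      have hp1 : 1 ≤ p := by linarith
      have hp0 : 0 < p := by linarith
      have hrp0 : 0 < r * p := by positivity
      refine ⟨hp1, by linarith, ?_⟩
      have hk4 : 16 * (k ^ 4 + k ^ 2) ≤ K := by
        rw [hK]
        have := pow_le_pow_left₀ hk hkk0 4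
        have := pow_le_pow_left₀ hk hkk0 2
        linarith
      have j1 : 16 * (k ^ 4 + k ^ 2) / (r * p ^ 3) ≤ (1 / 16) / (r * p) := by
        rw [div_le_div_iff₀ (by positivity) (by positivity)]
        have h1 : K * 16 ≤ p ^ 2 := by
          have : p * 1 ≤ p * p := mul_le_mul_of_nonneg_left hp1 hp0.le
          rw [sq]; linarith
        have h2 := mul_le_mul_of_nonneg_right hk4 hrp0.le
        have h3 := mul_le_mul_of_nonneg_right h1 hrp0.le
        have h4 : 1 / 16 * (r * p ^ 3) = 1 / 16 * (p ^ 2 * (r * p)) := by ring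
        rw [h4]; linarith
      have j2 : 2 * C * N + N * (2 * Λ * r * p + Λ * k) ≤ A0 + NL * (r * p) := by
        rw [hA0, hNL]
        have h1 : N * (Λ * k) ≤ N * (Λ * k0) := by gcongr
        linarith
      have j3 : A0 + NL * (r * p) ≤ (1 / 8) / (r * p) := by
        rw [le_div_iff₀ hrp0]
        have h1 := mul_le_mul_of_nonneg_left hrp hA0p
        have h2 := mul_le_mul_of_nonneg_left hrp hNLp
        have h3 : NL * (r * p) * (r * p) ≤ NL * (b * S0) * 1 := mul_le_mul h2 (by linarith) hrp0.le (by positivity)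
        linarith
      have j4 : (3 / 8) / (r * p) ≤ - ((b - 1) * p / r) / (2 * p ^ 2) := by
        have : - ((b - 1) * p / r) / (2 * p ^ 2) = ((1 - b) / 2) / (r * p) := by field_simp; ring
        rw [this]
        exact div_le_div_of_nonneg_right (by linarith) hrp0.le
      have j5 : (1 / 16) / (r * p) + (1 / 8) / (r * p) < (3 / 8) / (r * p) := by
        rw [← add_div]; exact div_lt_div_of_pos_right (by norm_num) hrp0
      linarith) c (mem_closedBall_self (by linarith)) y hy
  simpa using this

theorem lip_est {Ω : Set 𝔼} {H u v : 𝔼 → ℝ} (G : Glob Ω H u v) (ρ Λ S0 : ℝ) (hρ : 0 < ρ) (hΛ : 0 ≤ Λ) (hS0 : 0 < S0) :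
    ∃ L r1 : ℝ, 0 < L ∧ 0 < r1 ∧ ∀ c, Dat Ω H u v (closedBall c ρ) Λ S0 → ∀ y, ‖c - y‖ ≤ r1 →
      v c - u y ≤ L * ‖c - y‖ := by
  obtain ⟨A, β, rh, hA, hβ, hβ1, hrh, hold⟩ := holder_est G (ρ / 2) Λ S0 (by positivity) hΛ hS0
  obtain ⟨C, hC⟩ : ∃ C, C = 8 * S0 / ρ ^ 2 := ⟨_, rfl⟩
  have hC0 : 0 < C := by rw [hC]; positivity
  obtain ⟨D0, hD0⟩ : ∃ D0, D0 = 4 * C * A := ⟨_, rfl⟩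
  have hD0p : 0 < D0 := by rw [hD0]; positivity
  obtain ⟨k0, hk0⟩ : ∃ k0, k0 = Real.sqrt D0 := ⟨_, rfl⟩
  have hk0p : 0 ≤ k0 := by rw [hk0]; positivity
  have hk0s : k0 ^ 2 = D0 := by rw [hk0, Real.sq_sqrt (by positivity)]
  obtain ⟨K, hK⟩ : ∃ K, K = 16 * (D0 + 1) * D0 := ⟨_, rfl⟩
  have hK0 : 0 < K := by rw [hK]; positivity
  obtain ⟨a, ha⟩ : ∃ a : ℝ, a = 8 * (2 * C * N + N * Λ * k0 + 4 * N * Λ + 1) := ⟨_, rfl⟩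
  have ha8 : 8 ≤ a := by
    have : 0 ≤ 2 * C * N + N * Λ * k0 + 4 * N * Λ := by positivity
    rw [ha]; linarith
  have ha0 : 0 < a := by linarith
  obtain ⟨Pm, hPm⟩ : ∃ Pm, Pm = 1 + 2 * k0 + 2 * K / β := ⟨_, rfl⟩
  have hPm1 : 1 ≤ Pm := by
    have : 0 ≤ 2 * k0 + 2 * K / β := by positivity
    rw [hPm]; linarith
  have hPm0 : 0 < Pm := by linarith
  obtain ⟨r1, hr1⟩ : ∃ r1, r1 = min (min (ρ / 2) rh) (1 / (2 * a * Pm)) := ⟨_, rfl⟩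
  have hr1p : 0 < r1 := by rw [hr1]; positivity
  have hr1ρ : r1 ≤ ρ / 2 := by rw [hr1]; exact (min_le_left _ _).trans (min_le_left _ _)
  have hr1h : r1 ≤ rh := by rw [hr1]; exact (min_le_left _ _).trans (min_le_right _ _)
  have hr1P : Pm ≤ 1 / (2 * a * r1) := by
    rw [le_div_iff₀ (by positivity)]
    have : r1 ≤ 1 / (2 * a * Pm) := by rw [hr1]; exact min_le_right _ _
    rw [le_div_iff₀ (by positivity)] at this
    linarith
  have hr11 : r1 ≤ 1 := by
    have : 1 ≤ 1 / (2 * a * r1) := hPm1.trans hr1P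
    rw [le_div_iff₀ (by positivity), one_mul] at this
    have := mul_le_mul_of_nonneg_right ha8 hr1p.le
    linarith
  obtain ⟨τ, hτ⟩ : ∃ τ, τ = r1 * Real.exp (- (a * S0)) := ⟨_, rfl⟩
  have hτ0 : 0 < τ := by rw [hτ]; positivity
  have hτr : τ ≤ r1 := by
    rw [hτ]
    have : Real.exp (- (a * S0)) ≤ 1 := Real.exp_le_one_iff.2 (by have := mul_pos ha0 hS0; linarith)
    have := mul_le_mul_of_nonneg_left this hr1p.le
    linarith
  have hβp : (1 + β) ≠ 0 := by positivity
  have hrpow : ∀ r, 0 ≤ r → r ≤ r1 → r ^ (1 + β) / (1 + β) ≤ r := by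
    intro r hr0 hrr
    rw [div_le_iff₀ (by positivity)]
    have h1 : r ^ (1 + β) ≤ r ^ (1:ℝ) := Real.rpow_le_rpow_of_exponent_ge' hr0 (by linarith) zero_le_one (by linarith)
    rw [Real.rpow_one] at h1
    have := mul_nonneg hr0 hβ.le
    linarith
  have hlogn : ∀ r, 0 ≤ r → 0 ≤ 1 / a * Real.log (1 + r / τ) := by
    intro r hr
    have h1 : 0 ≤ r / τ := by positivity
    have := Real.log_nonneg (show 1 ≤ 1 + r / τ by linarith)
    positivity
  refine ⟨1 / (a * τ) + 1, r1, by positivity, hr1p, fun c D y hy => ?_⟩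
  have := L7 G.op G.hH G.hu G.hus G.hv G.hvs c ρ Λ S0 C r1 hρ D.sub hΛ hS0 D.lip D.bd D.hS D.vu hC hr1p hr1ρ (fun r => A * r ^ β)
    (by
      intro x hx y hy hxy
      refine hold x (D.mono ?_) y (hxy.trans hr1h)
      refine closedBall_subset_closedBall' ?_
      rw [mem_closedBall] at hx
      linarith)
    (fun r => 1 / a * Real.log (1 + r / τ) + r - r ^ (1 + β) / (1 + β)) (fun r => 1 / (a * (r + τ)) + 1 - r ^ β)
    (fun r => - (1 / (a * (r + τ) ^ 2)) - β * r ^ (β - 1))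
    (by
      refine ContinuousOn.sub (ContinuousOn.add (continuousOn_const.mul (ContinuousOn.log (by fun_prop) ?_)) continuousOn_id) ?_
      · intro r hr
        have : 0 ≤ r / τ := div_nonneg hr.1 hτ0.le
        positivity
      · exact (continuousOn_id.rpow_const (fun x _ => Or.inr (by positivity))).div_const _)
    (fun r hr => by
      have h1 := hlogn r hr.1
      have h2 := hrpow r hr.1 hr.2
      linarith) (by
      have h2 := hrpow r1 hr1p.le le_rfl
      have h1 : S0 < 1 / a * Real.log (1 + r1 / τ) := by
        have : r1 / τ = Real.exp (a * S0) := by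
          rw [hτ, Real.exp_neg]; field_simp
        rw [this]
        have h3 : a * S0 < Real.log (1 + Real.exp (a * S0)) := by
          rw [Real.lt_log_iff_exp_lt (by positivity)]; linarith
        rw [one_div, inv_mul_eq_div, lt_div_iff₀ ha0]
        linarith
      try simp only
      linarith) (by
      intro r hr
      have hr0 := hr.1
      have hp1 : 0 < 1 + r / τ := by positivity
      have h1 : HasDerivAt (fun r => 1 + r / τ) (1 / τ) r := ((hasDerivAt_id r).div_const τ).const_add 1
      have h2 := ((h1.log hp1.ne').const_mul (1 / a)).add (hasDerivAt_id r)
      have h3 := h2.sub ((Real.hasDerivAt_rpow_const (x := r) (p := 1 + β) (Or.inl hr0.ne')).div_const (1 + β))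
      refine h3.congr_deriv ?_
      rw [show 1 + β - 1 = β by ring]
      have : τ + r ≠ 0 := by positivity
      have : r + τ ≠ 0 := by positivity
      field_simp
      ring) (by
      intro r hr
      have hr0 := hr.1
      have h1 : HasDerivAt (fun r => a * (r + τ)) (a * 1) r := ((hasDerivAt_id r).add_const τ).const_mul a
      have hne : a * (r + τ) ≠ 0 := by positivity
      have h2 := ((hasDerivAt_const r (1:ℝ)).div h1 hne).add_const 1
      have h3 := h2.sub (Real.hasDerivAt_rpow_const (x := r) (p := β) (Or.inl hr0.ne'))
      refine h3.congr_deriv ?_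
      have : r + τ ≠ 0 := by positivity
      field_simp
      ring) (by
      intro r hr
      have hr0 := hr.1
      have h1 : 0 ≤ 1 / (a * (r + τ) ^ 2) := by positivity
      have h2 : 0 ≤ β * r ^ (β - 1) := by positivity
      try simp only
      linarith) (by
      intro r hr _ k hk hkk
      obtain ⟨hr0, hrr⟩ := hr
      try simp only at hkk ⊢
      obtain ⟨p0, hp0⟩ : ∃ p0, p0 = 1 / (a * (r + τ)) := ⟨_, rfl⟩
      have hp0s : 1 / (a * (r + τ) ^ 2) = a * p0 ^ 2 := by rw [hp0]; field_simp
      obtain ⟨R, hR⟩ : ∃ R, R = r ^ β := ⟨_, rfl⟩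
      have hR' : r ^ (β - 1) = R / r := by rw [hR, Real.rpow_sub_one hr0.ne']
      have hR0 : 0 < R := by rw [hR]; positivity
      have hR1 : R ≤ 1 := by rw [hR]; exact Real.rpow_le_one hr0.le (by linarith) hβ.le
      rw [hp0s, hR', ← hp0, ← hR]
      rw [← hR] at hkk
      have hp0P : Pm ≤ p0 := by
        refine hr1P.trans ?_
        rw [hp0]
        refine one_div_le_one_div_of_le (by positivity) ?_
        have := mul_le_mul_of_nonneg_left (show r + τ ≤ 2 * r1 by linarith) ha0.le
        linarith
      have hp01 : 1 ≤ p0 := hPm1.trans hp0P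
      obtain ⟨p, hp⟩ : ∃ p, p = p0 + 1 - R := ⟨_, rfl⟩
      rw [← hp]
      have hpl : p0 ≤ p := by linarith
      have hpu : p ≤ 2 * p0 := by linarith
      have hpp : 0 < p := by linarith
      have hp1 : 1 ≤ p := by linarith
      have hk2 : k ^ 2 ≤ D0 * R := by rw [hD0]; linarith
      have hk2' : k ^ 2 ≤ D0 := by
        have := mul_le_mul_of_nonneg_left hR1 hD0p.le
        linarith
      have hkk0 : k ≤ k0 := le_of_sq_le_sq (by rw [hk0s]; exact hk2') hk0p
      have hKb : 0 ≤ 2 * K / β := by positivity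
      refine ⟨hp1, by linarith, ?_⟩
      have j1 : 16 * (k ^ 4 + k ^ 2) ≤ K * R := by
        have e : 16 * (k ^ 4 + k ^ 2) = 16 * ((k ^ 2 + 1) * k ^ 2) := by ring
        have := mul_le_mul (show k ^ 2 + 1 ≤ D0 + 1 by linarith) hk2 (sq_nonneg k) (by linarith)
        rw [e, hK]; linarith
      have j2 : 16 * (k ^ 4 + k ^ 2) / (r * p ^ 3) ≤ β * (R / r) / (2 * p ^ 2) := by
        have h1 : 2 * K / β ≤ p := by linarith
        rw [div_le_iff₀ hβ] at h1
        have e : β * (R / r) / (2 * p ^ 2) = (p * β * R / 2) / (r * p ^ 3) := by field_simp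
        rw [e]
        refine div_le_div_of_nonneg_right ?_ (by positivity)
        have := mul_le_mul_of_nonneg_right h1 hR0.le
        linarith
      have j3 : a / 8 ≤ a * p0 ^ 2 / (2 * p ^ 2) := by
        rw [div_le_div_iff₀ (by norm_num) (by positivity)]
        have := pow_le_pow_left₀ hpp.le hpu 2
        have := mul_le_mul_of_nonneg_left this ha0.le
        linarith
      have hrp : r * p ≤ 2 := by
        have h1 := mul_le_mul_of_nonneg_left hpu hr0.le
        have h2 : r * p0 ≤ 1 := by
          rw [hp0, mul_one_div, div_le_one (by positivity)]
          have : 1 * r ≤ a * (r + τ) := mul_le_mul (by linarith) (by linarith) hr0.le ha0.le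
          linarith
        linarith
      have j4 : 2 * C * N + N * (2 * Λ * r * p + Λ * k) < a / 8 := by
        rw [ha]
        have h1 : N * Λ * k ≤ N * Λ * k0 := by gcongr
        have h2 := mul_le_mul_of_nonneg_left hrp (show 0 ≤ 2 * N * Λ by positivity)
        linarith
      have e : - (- (a * p0 ^ 2) - β * (R / r)) / (2 * p ^ 2) = a * p0 ^ 2 / (2 * p ^ 2) + β * (R / r) / (2 * p ^ 2) := by ring
      rw [e]
      linarith) c (mem_closedBall_self (by linarith)) y hy
  simp only [sub_self, norm_zero] at this
  have h0 := norm_nonneg (c - y)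
  have h1 : 1 / a * Real.log (1 + ‖c - y‖ / τ) ≤ 1 / (a * τ) * ‖c - y‖ := by
    have h2 : 0 < 1 + ‖c - y‖ / τ := by positivity
    have h3 := Real.log_le_sub_one_of_pos h2
    have h4 := mul_le_mul_of_nonneg_left h3 (show 0 ≤ 1 / a by positivity)
    refine h4.trans (le_of_eq ?_)
    field_simp
    ring
  have h5 : 0 ≤ ‖c - y‖ ^ (1 + β) / (1 + β) := by positivity
  linarith

end LipEst

open Metric Set Filter Topology MeasureTheory

section Flat
variable {N : ℕ}
local notation "𝔼" => EuclideanSpace ℝ (Fin N)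

theorem sg_symm {E : Type*} [NormedAddCommGroup E] [InnerProductSpace ℝ E] [FiniteDimensional ℝ E] (p x y : E) :
    inner ℝ x (sg p y) = inner ℝ (sg p x) y := by
  unfold sg
  rw [inner_sub_left, inner_sub_right, inner_smul_left, inner_smul_right, real_inner_comm p y]
  simp only [RCLike.conj_to_real]
  ring

theorem sg_lip (ρ : ℝ) : ∃ K : ℝ, 0 ≤ K ∧ ∀ i : Fin N, ∀ p ∈ closedBall (0 : 𝔼) ρ, ∀ q ∈ closedBall (0 : 𝔼) ρ,
    ‖sg p (EuclideanSpace.basisFun (Fin N) ℝ i) - sg q (EuclideanSpace.basisFun (Fin N) ℝ i)‖ ≤ K * ‖p - q‖ := by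
  have hW : ContDiff ℝ 1 (fun p : 𝔼 => Wf p) := by
    unfold Wf
    exact ContDiff.sqrt (contDiff_const.add (contDiff_norm_sq ℝ)) (fun x => by positivity)
  have hc : ContDiff ℝ 1 (fun p : 𝔼 => fun i : Fin N => sg p (EuclideanSpace.basisFun (Fin N) ℝ i)) := by
    rw [contDiff_pi]
    intro i
    unfold sg
    refine contDiff_const.sub (ContDiff.smul (ContDiff.div (contDiff_const.inner ℝ contDiff_id) (hW.mul (hW.add contDiff_const)) ?_) contDiff_id)
    intro p
    have := Wf_pos p
    positivity
  obtain ⟨K, hK⟩ := hc.contDiffOn.exists_lipschitzOnWith (s := closedBall (0 : 𝔼) ρ) one_ne_zero (convex_closedBall 0 ρ) (isCompact_closedBall 0 ρ)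
  refine ⟨K, K.2, fun i p hp q hq => ?_⟩
  have h1 := hK.dist_le_mul p hp q hq
  have h2 := (dist_le_pi_dist (fun i : Fin N => sg p (EuclideanSpace.basisFun (Fin N) ℝ i)) (fun i : Fin N => sg q (EuclideanSpace.basisFun (Fin N) ℝ i)) i).trans h1
  rwa [dist_eq_norm, dist_eq_norm] at h2

theorem flat_ineq {Ω : Set 𝔼} {H u v : 𝔼 → ℝ} (G : Glob Ω H u v)
    (z y c : 𝔼) (hz : z ∈ Ω) (hy : y ∈ Ω) (hzc : z ≠ c) (ε Λ L K : ℝ) (hε : 0 < ε) (hΛ : 0 ≤ Λ) (hL0 : 0 ≤ L)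
    (hL : |H z - H y| ≤ Λ * ‖z - y‖) (hHb : |H z| ≤ Λ) (hr : ‖z - y‖ ≤ ε * L) (hK0 : 0 ≤ K)
    (hK : ∀ i : Fin N, ∀ p ∈ closedBall (0 : 𝔼) (L + 1), ∀ q ∈ closedBall (0 : 𝔼) (L + 1),
    ‖sg p (EuclideanSpace.basisFun (Fin N) ℝ i) - sg q (EuclideanSpace.basisFun (Fin N) ℝ i)‖ ≤ K * ‖p - q‖)
    (φ φ1 : ℝ → ℝ) (a2 g : ℝ) (hφ : ∀ᶠ r in 𝓝 ‖z - c‖, HasDerivAt φ (φ1 r) r) (hφ1 : HasDerivAt φ1 a2 ‖z - c‖)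
    (ha2 : a2 ≤ 0) (hg : g = φ1 ‖z - c‖) (hg0 : 0 ≤ g) (hg1 : g ≤ 1)
    (hmax : ∀ᶠ X in 𝓝 (z, y), v X.1 - u X.2 - ‖X.1 - X.2‖ ^ 2 / (2 * ε) - φ ‖X.1 - c‖ ≤ v z - u y - ‖z - y‖ ^ 2 / (2 * ε) - φ ‖z - c‖) :
    -(N * (Λ * (ε * L) * (1 + L) + Λ * g)) ≤ N * (1 / ε * (K * g) ^ 2) + N * (g / ‖z - c‖) + a2 * (1 / (1 + (L + 1) ^ 2)) := by
  set s := ‖z - c‖ with hs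
  have hd0 : z - c ≠ 0 := sub_ne_zero.2 hzc
  have hs0 : 0 < s := norm_pos_iff.2 hd0
  set e := (1 / s) • (z - c) with he
  have he1 : ‖e‖ = 1 := by
    rw [he, norm_smul, Real.norm_eq_abs, abs_of_pos (by positivity), ← hs]; field_simp
  have hrad := radial_hess c z hzc φ1 a2 hφ1
  rw [← hs, ← hg, ← he] at hrad
  have hgr : ∀ᶠ d in 𝓝 z, HasGradientAt (fun d : 𝔼 => φ ‖d - c‖) ((φ1 ‖d - c‖ / ‖d - c‖) • (d - c)) d := by
    have hcont : Continuous (fun d : 𝔼 => ‖d - c‖) := by fun_prop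
    have h1 := (hcont.tendsto z).eventually hφ
    filter_upwards [h1, isOpen_ne.mem_nhds hzc] with d hd hd'
    exact radial_grad c d hd' φ (φ1 ‖d - c‖) hd
  have hgψ : ∀ d : 𝔼, HasGradientAt (fun z : 𝔼 => ‖z‖ ^ 2 / (2 * ε)) ((1 / ε) • d) d := by
    intro d
    rw [hasGradientAt_iff_hasFDerivAt]
    have := ((hasStrictFDerivAt_norm_sq d).hasFDerivAt).mul_const (1 / (2 * ε))
    have e1 : (fun z : 𝔼 => ‖z‖ ^ 2 / (2 * ε)) = fun z => ‖z‖ ^ 2 * (1 / (2 * ε)) := by funext z; ring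
    rw [e1]
    refine this.congr_fderiv ?_
    ext x
    simp
    field_simp
  have hS : HasFDerivAt (fun d : 𝔼 => (1 / ε) • d) ((1 / ε) • ContinuousLinearMap.id ℝ 𝔼) (z - y) :=
    (hasFDerivAt_id (z - y)).const_smul (1 / ε)
  obtain ⟨q, hq⟩ : ∃ q, q = (1 / ε) • (z - y) := ⟨_, rfl⟩
  obtain ⟨p, hp⟩ : ∃ p, p = q + (φ1 ‖z - c‖ / ‖z - c‖) • (z - c) := ⟨_, rfl⟩
  have hpq : ‖p - q‖ = g := by
    rw [hp, add_sub_cancel_left, norm_smul, ← hs, ← hg, Real.norm_eq_abs, abs_of_nonneg (by positivity)]; field_simp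
  have hqn : ‖q‖ ≤ L := by
    rw [hq, norm_smul, Real.norm_eq_abs, abs_of_pos (by positivity)]
    have := mul_le_mul_of_nonneg_left hr (show 0 ≤ 1 / ε by positivity)
    refine this.trans (le_of_eq ?_)
    field_simp
  have hpn : ‖p‖ ≤ L + 1 := by
    have : ‖p‖ ≤ ‖q‖ + ‖p - q‖ := by
      have := norm_add_le q (p - q)
      simpa using this
    linarith
  set b := EuclideanSpace.basisFun (Fin N) ℝ with hb
  have key := main_ineq G.op G.hH G.hu G.hus G.hv G.hvs z y hz hy (fun z => ‖z‖ ^ 2 / (2 * ε)) (fun d => φ ‖d - c‖)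
    (fun d => (1 / ε) • d) (fun d => (φ1 ‖d - c‖ / ‖d - c‖) • (d - c)) _ _ (by
      intro x y
      simp [inner_smul_left, inner_smul_right]) (radS_symm _ _ _ _) (Eventually.of_forall hgψ) hS hgr hrad hmax b b
      p q hq hp
  rw [Finset.sum_add_distrib] at key
  have k1 : ∑ i, inner ℝ (((1 / ε) • ContinuousLinearMap.id ℝ 𝔼) (sg p (b i) - sg q (b i))) (sg p (b i) - sg q (b i)) ≤ N * (1 / ε * (K * g) ^ 2) := by
    have : ∀ i ∈ Finset.univ, inner ℝ (((1 / ε) • ContinuousLinearMap.id ℝ 𝔼) (sg p (b i) - sg q (b i))) (sg p (b i) - sg q (b i)) ≤ 1 / ε * (K * g) ^ 2 := by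
      intro i _
      simp only [_root_.smul_apply, ContinuousLinearMap.id_apply, inner_smul_left, RCLike.conj_to_real, real_inner_self_eq_norm_sq]
      have h1 := hK i p (by rw [mem_closedBall_zero_iff]; exact hpn) q (by rw [mem_closedBall_zero_iff]; linarith)
      rw [hpq] at h1
      exact mul_le_mul_of_nonneg_left (pow_le_pow_left₀ (norm_nonneg _) h1 2) (by positivity)
    refine (Finset.sum_le_card_nsmul _ _ _ this).trans ?_
    simp
  have k2 : ∑ i, inner ℝ (radS g a2 s e (sg p (b i))) (sg p (b i)) ≤ N * (g / s) + a2 * (1 / (1 + (L + 1) ^ 2)) := by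
    simp only [radS_quad, Finset.sum_add_distrib, ← Finset.mul_sum]
    have h1 : ∑ i, ‖sg p (b i)‖ ^ 2 ≤ N := by
      have : ∀ i ∈ Finset.univ, ‖sg p (b i)‖ ^ 2 ≤ 1 := by
        intro i _
        have h1 := sg_norm_le p (b i)
        rw [b.norm_eq_one] at h1
        exact pow_le_one₀ (norm_nonneg _) h1
      refine (Finset.sum_le_card_nsmul _ _ _ this).trans ?_
      simp
    have h2 : ∑ i, inner ℝ e (sg p (b i)) ^ 2 = ‖sg p e‖ ^ 2 := by
      have := b.sum_inner_mul_inner (sg p e) (sg p e)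
      rw [real_inner_self_eq_norm_sq] at this
      rw [← this]
      refine Finset.sum_congr rfl fun i _ => ?_
      rw [sg_symm, sq, real_inner_comm (sg p e) (b i)]
    rw [h2]
    have h3 := sg_norm_ge p e
    rw [he1, one_pow] at h3
    have h4 : 1 / (1 + (L + 1) ^ 2) ≤ 1 / (1 + ‖p‖ ^ 2) := by
      refine one_div_le_one_div_of_le (by positivity) ?_
      have := pow_le_pow_left₀ (norm_nonneg p) hpn 2
      linarith
    have h5 := mul_le_mul_of_nonpos_left (h4.trans h3) ha2
    have h6 : 0 ≤ g / s := by positivity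
    have h7 := mul_nonneg h6 (sq_nonneg ‖sg p e‖)
    have h8 := mul_le_mul_of_nonneg_left h1 h6
    linarith
  have w1 := Wf_lip p q
  have w2 := Wf_lip q p
  rw [norm_sub_rev] at w2
  rw [hpq] at w1 w2
  have w3 := Wf_le q
  have hl := H_lower (N : ℝ) (Nat.cast_nonneg N) hΛ hL hHb w1 w2 (Wf_pos _).le
  have w4 : (N:ℝ) * (Λ * ‖z - y‖ * Wf q + Λ * g) ≤ N * (Λ * (ε * L) * (1 + L) + Λ * g) := by
    refine mul_le_mul_of_nonneg_left ?_ (Nat.cast_nonneg N)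
    have h1 : Λ * ‖z - y‖ ≤ Λ * (ε * L) := mul_le_mul_of_nonneg_left hr hΛ
    have := mul_le_mul h1 (show Wf q ≤ 1 + L by linarith) (Wf_pos q).le (by positivity)
    linarith
  linarith

end Flat

open Metric Set Filter Topology MeasureTheory

section HopfAux
variable {N : ℕ}
local notation "𝔼" => EuclideanSpace ℝ (Fin N)

theorem compact_touch {Ω : Set 𝔼} {H u v : 𝔼 → ℝ} (G : Glob Ω H u v) {S : Set 𝔼} (hS : IsCompact S) (hSΩ : S ⊆ Ω) :
    IsCompact (S ∩ {z | u z ≤ v z}) := by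
  have c0 : UpperSemicontinuousOn (fun x => - u x) Ω := G.hu.neg
  have c1 : UpperSemicontinuousOn (fun x => v x + - u x) S := (G.hv.add c0).mono hSΩ
  have h := c1.isCompact_inter_preimage_Ici hS 0
  have he : S ∩ {z | u z ≤ v z} = S ∩ (fun x => v x + - u x) ⁻¹' Ici 0 := by
    ext z
    constructor
    · rintro ⟨h1, h2⟩
      exact ⟨h1, by have : u z ≤ v z := h2
                    show (0:ℝ) ≤ v z + - u z
                    linarith⟩
    · rintro ⟨h1, h2⟩
      exact ⟨h1, by have : (0:ℝ) ≤ v z + - u z := h2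
                    show u z ≤ v z
                    linarith⟩
  rw [he]; exact h

theorem compact_neg {Ω : Set 𝔼} {H u v : 𝔼 → ℝ} (G : Glob Ω H u v) {Γ : Set 𝔼} (hΓ : IsCompact Γ) (hΓΩ : Γ ⊆ Ω)
    (hlt : ∀ z ∈ Γ, v z < u z) :
    ∃ m δ : ℝ, 0 < m ∧ 0 < δ ∧ ∀ z ∈ Γ, ∀ y ∈ Ω, ‖y - z‖ < δ → v z - u y ≤ -m := by
  refine hΓ.induction_on (p := fun s => ∃ m δ : ℝ, 0 < m ∧ 0 < δ ∧ ∀ z ∈ s, ∀ y ∈ Ω, ‖y - z‖ < δ → v z - u y ≤ -m) ?_ ?_ ?_ ?_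
  · exact ⟨1, 1, one_pos, one_pos, fun z hz => absurd hz (notMem_empty z)⟩
  · rintro s t hst ⟨m, δ, hm, hδ, h⟩
    exact ⟨m, δ, hm, hδ, fun z hz => h z (hst hz)⟩
  · rintro s t ⟨m, δ, hm, hδ, h⟩ ⟨m', δ', hm', hδ', h'⟩
    refine ⟨min m m', min δ δ', lt_min hm hm', lt_min hδ hδ', ?_⟩
    rintro z (hz | hz) y hy hyz
    · have := h z hz y hy (hyz.trans_le (min_le_left _ _))
      linarith [min_le_left m m']
    · have := h' z hz y hy (hyz.trans_le (min_le_right _ _))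
      linarith [min_le_right m m']
  · intro x hx
    have hxlt := hlt x hx
    have e1 := G.hv x (hΓΩ hx) (v x + (u x - v x) / 3) (by linarith)
    have e2 := G.hu x (hΓΩ hx) (u x - (u x - v x) / 3) (by linarith)
    obtain ⟨η, hη, hb⟩ := Metric.mem_nhdsWithin_iff.1 (e1.and e2)
    refine ⟨ball x (η / 2) ∩ Γ, ?_, (u x - v x) / 3, η / 2, by linarith, by linarith, ?_⟩
    · rw [inter_comm]
      exact inter_mem self_mem_nhdsWithin (mem_nhdsWithin_of_mem_nhds (ball_mem_nhds x (by linarith)))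
    · rintro z ⟨hz, hzΓ⟩ y hy hyz
      rw [mem_ball, dist_eq_norm] at hz
      have h1 := (hb ⟨by rw [mem_ball, dist_eq_norm]; linarith, hΓΩ hzΓ⟩ : _ ∧ _).1
      have h2 := (hb (show y ∈ ball x η ∩ Ω from ⟨by
        rw [mem_ball, dist_eq_norm]
        have : y - x = (y - z) + (z - x) := by abel
        rw [this]
        linarith [norm_add_le (y - z) (z - x)], hy⟩) : _ ∧ _).2
      linarith

theorem sphere_gap {Ω : Set 𝔼} {H u v : 𝔼 → ℝ} (G : Glob Ω H u v) {S : Set 𝔼} (hS : IsCompact S) (hSΩ : S ⊆ Ω)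
    (c : 𝔼) (R1 : ℝ) (hlt : ∀ z ∈ S, ‖z - c‖ ≤ R1 → v z < u z) :
    ∃ t0 : ℝ, 0 < t0 ∧ ∀ z ∈ S, ‖z - c‖ ≤ R1 + t0 → v z < u z := by
  have hc := compact_touch G hS hSΩ
  rcases (S ∩ {z | u z ≤ v z}).eq_empty_or_nonempty with he | hne
  · refine ⟨1, one_pos, fun z hz _ => ?_⟩
    by_contra hcon
    have : z ∈ S ∩ {z | u z ≤ v z} := ⟨hz, not_lt.1 hcon⟩
    rw [he] at this
    exact this
  · obtain ⟨w, hw, hmin⟩ := hc.exists_isMinOn hne (f := fun z => ‖z - c‖) (by fun_prop)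
    have hw1 : R1 < ‖w - c‖ := by
      by_contra hcon
      have h1 := hlt w hw.1 (not_lt.1 hcon)
      have h2 : u w ≤ v w := hw.2
      linarith
    refine ⟨(‖w - c‖ - R1) / 2, by linarith, fun z hz hzc => ?_⟩
    by_contra hcon
    have h1 : ‖w - c‖ ≤ ‖z - c‖ := hmin (show z ∈ S ∩ {z | u z ≤ v z} from ⟨hz, not_lt.1 hcon⟩)
    linarith

theorem hopf_arith (n ε σ a s K Λ L lam R1 : ℝ) (hn : 0 ≤ n) (hε : 0 < ε) (hσ : 0 < σ) (hσ1 : σ ≤ 1)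
    (hR1 : 0 < R1) (hs : R1 / 2 ≤ s) (hΛ : 0 ≤ Λ) (hL : 0 ≤ L)
    (ha : n * K ^ 2 + 2 * n / R1 + n * Λ * L * (1 + L) + n * Λ < lam * a)
    (h : -(n * (Λ * (ε * L) * (1 + L) + Λ * (ε / σ))) ≤ n * (1 / ε * (K * (ε / σ)) ^ 2) + n * ((ε / σ) / s)
      + (- (a * ε / σ ^ 2)) * lam) : False := by
  have hs0 : 0 < s := by linarith
  have e1 : n * (1 / ε * (K * (ε / σ)) ^ 2) = (ε / σ ^ 2) * (n * K ^ 2) := by field_simp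
  have e2 : n * ((ε / σ) / s) = (ε / σ ^ 2) * (n * (σ / s)) := by field_simp
  have e3 : n * (Λ * (ε * L) * (1 + L) + Λ * (ε / σ)) = (ε / σ ^ 2) * (n * Λ * L * (1 + L) * σ ^ 2 + n * Λ * σ) := by
    field_simp
  have e4 : (- (a * ε / σ ^ 2)) * lam = (ε / σ ^ 2) * (-(lam * a)) := by field_simp
  rw [e1, e2, e3, e4, ← mul_add, ← mul_add, ← mul_neg] at h
  have hp : 0 < ε / σ ^ 2 := by positivity
  have h' := le_of_mul_le_mul_left h hp
  have b1 : σ / s ≤ 2 / R1 := by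
    rw [div_le_div_iff₀ hs0 hR1]
    nlinarith
  have b2 : n * (σ / s) ≤ 2 * n / R1 := by
    have := mul_le_mul_of_nonneg_left b1 hn
    have e : n * (2 / R1) = 2 * n / R1 := by ring
    linarith
  have b3 : n * Λ * L * (1 + L) * σ ^ 2 ≤ n * Λ * L * (1 + L) :=
    mul_le_of_le_one_right (by positivity) (pow_le_one₀ hσ.le hσ1)
  have b4 : n * Λ * σ ≤ n * Λ := mul_le_of_le_one_right (by positivity) hσ1
  linarith

theorem hopf_q (L r ε Gv : ℝ) (hε : 0 < ε) (hL : 0 ≤ L) (hr : 0 ≤ r) (hG : -(3/2) ≤ Gv)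
    (h : 0 < L * r - r ^ 2 / (2 * ε) - ε * Gv) : r < ε * (2 * L + 2) := by
  by_contra hcon
  push Not at hcon
  have e : L * r - r ^ 2 / (2 * ε) - ε * Gv = (2 * ε * L * r - r ^ 2 - 2 * ε ^ 2 * Gv) / (2 * ε) := by field_simp
  rw [e] at h
  have h2 : 0 < 2 * ε * L * r - r ^ 2 - 2 * ε ^ 2 * Gv := by
    by_contra h3
    exact absurd h (not_lt.2 (div_nonpos_of_nonpos_of_nonneg (not_lt.1 h3) (by positivity)))
  have h3 : ε ^ 2 * (-(3/2)) ≤ ε ^ 2 * Gv := mul_le_mul_of_nonneg_left hG (by positivity)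
  have h4 : ε * (2 * L + 2) * r ≤ r * r := mul_le_mul_of_nonneg_right hcon hr
  have h5 : ε * (ε * (2 * L + 2)) ≤ ε * r := mul_le_mul_of_nonneg_left hcon hε.le
  have h6 : 0 ≤ ε ^ 2 * L := by positivity
  have h7 : 0 < ε ^ 2 := by positivity
  nlinarith

theorem hopf_q2 (L r ε Gv : ℝ) (hε : 0 < ε) (hG : L ^ 2 / 2 + 1 / 2 ≤ Gv) :
    L * r - r ^ 2 / (2 * ε) - ε * Gv < 0 := by
  have e : L * r - r ^ 2 / (2 * ε) - ε * Gv = (- (r - ε * L) ^ 2 + 2 * ε ^ 2 * (L ^ 2 / 2 - Gv)) / (2 * ε) := by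
    field_simp; ring
  rw [e]
  apply div_neg_of_neg_of_pos _ (by positivity)
  have h7 : 0 < ε ^ 2 := by positivity
  nlinarith [sq_nonneg (r - ε * L)]

theorem hopf_G_low (a τ s R1 : ℝ) (ha : 1 ≤ a) (hτ : 0 < τ) (hs : R1 - τ / 2 ≤ s) :
    -(3/2) ≤ 1 / a * Real.log ((s - R1 + τ) / τ) - 1 / 2 := by
  have h1 : (1/2 : ℝ) ≤ (s - R1 + τ) / τ := by
    rw [le_div_iff₀ hτ]; linarith
  have h2 : Real.log (1/2) ≤ Real.log ((s - R1 + τ) / τ) := Real.log_le_log (by norm_num) h1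
  have h3 : Real.log (1/2 : ℝ) = - Real.log 2 := by rw [one_div, Real.log_inv]
  have h4 : Real.log 2 < 1 := by linarith [Real.log_two_lt_d9]
  have h5 : -1 ≤ Real.log ((s - R1 + τ) / τ) := by linarith
  have h6 : 1 / a ≤ 1 := by rw [div_le_one (by linarith)]; exact ha
  have h7 : 0 < 1 / a := by positivity
  nlinarith

theorem hopf_G_high (a τ s R1 t0 A : ℝ) (ha : 1 ≤ a) (hτ : 0 < τ) (ht0 : 0 < t0) (hA : τ ≤ t0 * Real.exp (-(a * A))) (hs : R1 + t0 ≤ s) :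
    A - 1/2 ≤ 1 / a * Real.log ((s - R1 + τ) / τ) - 1 / 2 := by
  have h1 : Real.exp (a * A) ≤ (s - R1 + τ) / τ := by
    rw [le_div_iff₀ hτ]
    have h2 : Real.exp (a * A) * τ ≤ Real.exp (a * A) * (t0 * Real.exp (-(a * A))) :=
      mul_le_mul_of_nonneg_left hA (Real.exp_pos _).le
    have h3 : Real.exp (a * A) * (t0 * Real.exp (-(a * A))) = t0 := by
      rw [Real.exp_neg]
      field_simp
    linarith
  have h2 : a * A ≤ Real.log ((s - R1 + τ) / τ) := (Real.le_log_iff_exp_le (lt_of_lt_of_le (Real.exp_pos _) h1)).2 h1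
  have h3 : A ≤ 1 / a * Real.log ((s - R1 + τ) / τ) := by
    rw [one_div, ← div_eq_inv_mul, le_div_iff₀ (by linarith)]
    linarith
  linarith

theorem hopf_deriv (a τ R1 ε s : ℝ) (ha : 1 ≤ a) (hτ : 0 < τ) (hs : 0 < s - R1 + τ) :
    HasDerivAt (fun s => ε * (1 / a * Real.log ((s - R1 + τ) / τ) - 1 / 2)) (ε / (a * (s - R1 + τ))) s := by
  have h1 : HasDerivAt (fun s : ℝ => (s - R1 + τ) / τ) (1 / τ) s :=
    (((hasDerivAt_id' s).sub_const R1).add_const τ).div_const τ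
  have h2 := (((h1.log (by positivity)).const_mul (1 / a)).sub_const (1/2)).const_mul ε
  refine h2.congr_deriv ?_
  field_simp

theorem hopf_deriv2 (a τ R1 ε s : ℝ) (ha : 1 ≤ a) (hs : 0 < s - R1 + τ) :
    HasDerivAt (fun s => ε / (a * (s - R1 + τ))) (- (a * ε / (a * (s - R1 + τ)) ^ 2)) s := by
  have h1 : HasDerivAt (fun s : ℝ => a * (s - R1 + τ)) (a * 1) s :=
    (((hasDerivAt_id' s).sub_const R1).add_const τ).const_mul a
  have h2 := (hasDerivAt_const s ε).div h1 (by positivity)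
  refine h2.congr_deriv ?_
  field_simp
  ring

end HopfAux

open Metric Set Filter Topology MeasureTheory

section HopfCore
variable {N : ℕ}
local notation "𝔼" => EuclideanSpace ℝ (Fin N)

theorem hopf_core {Ω : Set 𝔼} {H u v : 𝔼 → ℝ} (G : Glob Ω H u v) (x1 c : 𝔼) (R1 ρ0 r1 L Λ S0 : ℝ)
    (hR1 : 0 < R1) (hρ0 : 0 < ρ0) (hr1 : 0 < r1) (hL0 : 0 ≤ L) (hΛ : 0 ≤ Λ)
    (D : Dat Ω H u v (closedBall x1 ρ0) Λ S0)
    (hlip : ∀ z ∈ closedBall x1 ρ0, ∀ y, ‖z - y‖ ≤ r1 → v z - u y ≤ L * ‖z - y‖)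
    (hc : ‖x1 - c‖ = R1) (hx1 : u x1 = v x1)
    (hstrict : ∀ x ∈ closedBall c R1, x ≠ x1 → x ∈ closedBall x1 ρ0 → v x < u x) : False := by
  obtain ⟨L', hL'⟩ : ∃ L', L' = 2 * L + 2 := ⟨_, rfl⟩
  have hL'0 : 0 < L' := by rw [hL']; linarith
  obtain ⟨lam, hlam⟩ : ∃ lam, lam = 1 / (1 + (L' + 1) ^ 2) := ⟨_, rfl⟩
  have hlam0 : 0 < lam := by rw [hlam]; positivity
  obtain ⟨K, hK0, hK⟩ := sg_lip (N := N) (L' + 1)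
  obtain ⟨Q, hQ⟩ : ∃ Q, Q = (N:ℝ) * K ^ 2 + 2 * N / R1 + N * Λ * L' * (1 + L') + N * Λ := ⟨_, rfl⟩
  obtain ⟨a, ha1, haQ⟩ : ∃ a : ℝ, 1 ≤ a ∧ Q < lam * a := by
    refine ⟨max 1 ((Q + 1) / lam), le_max_left _ _, ?_⟩
    have h1 : lam * ((Q + 1) / lam) = Q + 1 := by field_simp
    have h2 := mul_le_mul_of_nonneg_left (le_max_right 1 ((Q + 1) / lam)) hlam0.le
    linarith
  have ha0 : 0 < a := by linarith
  obtain ⟨ρ, hρ, hρa, hρb, hρc⟩ : ∃ ρ : ℝ, 0 < ρ ∧ ρ ≤ ρ0 / 2 ∧ ρ ≤ r1 / 3 ∧ ρ ≤ 1 / (2 * a) :=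
    ⟨min (ρ0 / 2) (min (r1 / 3) (1 / (2 * a))), by positivity, min_le_left _ _,
      (min_le_right _ _).trans (min_le_left _ _), (min_le_right _ _).trans (min_le_right _ _)⟩
  have hsubB : ∀ z, ‖z - x1‖ ≤ 2 * ρ → z ∈ closedBall x1 ρ0 := by
    intro z hz; rw [mem_closedBall, dist_eq_norm]; linarith
  obtain ⟨t0, ht0, hgap⟩ := sphere_gap G (isCompact_sphere x1 ρ)
    (fun z hz => D.sub (hsubB z (by rw [mem_sphere, dist_eq_norm] at hz; linarith))) c R1 (by
      intro z hz hzc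
      rw [mem_sphere, dist_eq_norm] at hz
      refine hstrict z (by rwa [mem_closedBall, dist_eq_norm]) ?_ (hsubB z (by linarith))
      rintro rfl
      simp at hz; linarith)
  obtain ⟨τ, hτ, hτa, hτb, hτc⟩ : ∃ τ : ℝ, 0 < τ ∧ τ ≤ 1 / (2 * a) ∧ τ ≤ R1 ∧ τ ≤ t0 * Real.exp (-(a * (L ^ 2 / 2 + 1))) :=
    ⟨min (1 / (2 * a)) (min R1 (t0 * Real.exp (-(a * (L ^ 2 / 2 + 1))))),
      lt_min (by positivity) (lt_min hR1 (mul_pos ht0 (Real.exp_pos _))), min_le_left _ _,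
      (min_le_right _ _).trans (min_le_left _ _), (min_le_right _ _).trans (min_le_right _ _)⟩
  have hnc : Continuous (fun z : 𝔼 => ‖z - c‖) := by fun_prop
  have hnx : Continuous (fun z : 𝔼 => ‖z - x1‖) := by fun_prop
  obtain ⟨Γ, hΓ⟩ : ∃ Γ : Set 𝔼, Γ = closedBall x1 ρ ∩ ({z | ‖z - c‖ = R1 - τ / 2} ∪ ({z | ‖z - x1‖ = ρ} ∩ {z | ‖z - c‖ ≤ R1 + t0})) := ⟨_, rfl⟩
  have hΓc : IsCompact Γ := by
    rw [hΓ]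
    exact (isCompact_closedBall x1 ρ).inter_right ((isClosed_eq hnc continuous_const).union
      ((isClosed_eq hnx continuous_const).inter (isClosed_le hnc continuous_const)))
  have hΓb : ∀ z ∈ Γ, ‖z - x1‖ ≤ ρ := by
    intro z hz
    rw [hΓ] at hz
    have := hz.1
    rwa [mem_closedBall, dist_eq_norm] at this
  obtain ⟨m, δ, hm, hδ, hneg⟩ := compact_neg G hΓc (fun z hz => D.sub (hsubB z (by linarith [hΓb z hz]))) (by
    intro z hz
    have hzb := hΓb z hz
    rw [hΓ] at hz
    rcases hz.2 with h | ⟨h1, h2⟩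
    · have h : ‖z - c‖ = R1 - τ / 2 := h
      refine hstrict z (by rw [mem_closedBall, dist_eq_norm]; linarith) ?_ (hsubB z (by linarith))
      rintro rfl
      linarith
    · exact hgap z (by rw [mem_sphere, dist_eq_norm]; exact h1) h2)
  obtain ⟨ε, hε, hεm, hεδ, hετ, hερ⟩ : ∃ ε : ℝ, 0 < ε ∧ ε ≤ m / 2 ∧ ε ≤ δ / (2 * L') ∧ ε ≤ a * τ / 2 ∧ ε ≤ ρ / (2 * L') :=
    ⟨min (m / 2) (min (δ / (2 * L')) (min (a * τ / 2) (ρ / (2 * L')))), by positivity, min_le_left _ _,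
      (min_le_right _ _).trans (min_le_left _ _),
      (min_le_right _ _).trans ((min_le_right _ _).trans (min_le_left _ _)),
      (min_le_right _ _).trans ((min_le_right _ _).trans (min_le_right _ _))⟩
  rw [le_div_iff₀ (by positivity)] at hεδ hερ
  obtain ⟨g, hg⟩ : ∃ g : ℝ → ℝ, g = fun s => 1 / a * Real.log ((s - R1 + τ) / τ) - 1 / 2 := ⟨_, rfl⟩
  have hglow : ∀ s, R1 - τ / 2 ≤ s → -(3/2) ≤ g s := by
    intro s hs; rw [hg]; exact hopf_G_low a τ s R1 ha1 hτ hs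
  have hder : ∀ s, R1 - τ / 2 ≤ s → HasDerivAt (fun s => ε * g s) (ε / (a * (s - R1 + τ))) s := by
    intro s hs; rw [hg]; exact hopf_deriv a τ R1 ε s ha1 hτ (by linarith)
  obtain ⟨Kc, hKc⟩ : ∃ Kc : Set (𝔼 × 𝔼), Kc = (closedBall x1 ρ ∩ {z | R1 - τ / 2 ≤ ‖z - c‖}) ×ˢ closedBall x1 (2 * ρ) := ⟨_, rfl⟩
  have hKmem : ∀ z y, (z, y) ∈ Kc ↔ ‖z - x1‖ ≤ ρ ∧ R1 - τ / 2 ≤ ‖z - c‖ ∧ ‖y - x1‖ ≤ 2 * ρ := by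
    intro z y
    rw [hKc, mem_prod, mem_inter_iff, mem_closedBall, mem_closedBall, dist_eq_norm, dist_eq_norm, and_assoc]
    rfl
  have hKcomp : IsCompact Kc := by
    rw [hKc]
    exact ((isCompact_closedBall x1 ρ).inter_right (isClosed_le continuous_const hnc)).prod (isCompact_closedBall _ _)
  obtain ⟨F, hF⟩ : ∃ F : 𝔼 × 𝔼 → ℝ, F = fun X => v X.1 + - u X.2 + (- (‖X.1 - X.2‖ ^ 2 / (2 * ε)) - ε * g ‖X.1 - c‖) := ⟨_, rfl⟩
  have hFu : UpperSemicontinuousOn F Kc := by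
    have c1 : UpperSemicontinuousOn (fun X : 𝔼 × 𝔼 => v X.1) Kc :=
      G.hv.comp continuous_fst.continuousOn (fun X hX => D.sub (hsubB _ (by linarith [((hKmem X.1 X.2).1 hX).1])))
    have c0 : UpperSemicontinuousOn (fun x => - u x) Ω := G.hu.neg
    have c2 : UpperSemicontinuousOn (fun X : 𝔼 × 𝔼 => - u X.2) Kc :=
      c0.comp continuous_snd.continuousOn (fun X hX => D.sub (hsubB _ ((hKmem X.1 X.2).1 hX).2.2))
    have c3 : ContinuousOn (fun X : 𝔼 × 𝔼 => - (‖X.1 - X.2‖ ^ 2 / (2 * ε)) - ε * g ‖X.1 - c‖) Kc := by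
      refine ContinuousOn.sub (by fun_prop) ?_
      have hgc : ContinuousOn (fun s => ε * g s) (Ici (R1 - τ / 2)) :=
        fun s hs => (hder s hs).continuousAt.continuousWithinAt
      exact hgc.comp (f := fun X : 𝔼 × 𝔼 => ‖X.1 - c‖) (by fun_prop) (fun X hX => ((hKmem X.1 X.2).1 hX).2.1)
    rw [hF]
    exact (c1.add c2).add c3.upperSemicontinuousOn
  have hx1K : (x1, x1) ∈ Kc := by
    rw [hKmem]; rw [hc]; simp only [sub_self, norm_zero]
    exact ⟨hρ.le, by linarith, by linarith⟩
  obtain ⟨⟨z, y⟩, hXK, hmax⟩ := hFu.exists_isMaxOn (show Kc.Nonempty from ⟨_, hx1K⟩) hKcomp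
  have hFd : ∀ z y, F (z, y) = v z - u y - ‖z - y‖ ^ 2 / (2 * ε) - ε * g ‖z - c‖ := by
    intro z y; rw [hF]; ring
  have hpos : 0 < F (z, y) := by
    have h1 : F (x1, x1) ≤ F (z, y) := hmax hx1K
    refine lt_of_lt_of_le ?_ h1
    rw [hFd, hc, hg, hx1]
    simp
    exact hε
  obtain ⟨hz1, hzc, hy1⟩ := (hKmem z y).1 hXK
  have hzB := hsubB z (by linarith)
  have hyB := hsubB y hy1
  have hzyn : ‖z - y‖ ≤ r1 := by
    have : z - y = (z - x1) - (y - x1) := by abel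
    rw [this]
    linarith [norm_sub_le (z - x1) (y - x1)]
  have hl := hlip z hzB y hzyn
  rw [hFd] at hpos
  have hgl := hglow _ hzc
  have hr : ‖z - y‖ < ε * L' := by
    rw [hL']
    exact hopf_q L ‖z - y‖ ε (g ‖z - c‖) hε hL0 (norm_nonneg _) hgl (by linarith)
  have hy2 : ‖y - x1‖ < 2 * ρ := by
    have : y - x1 = (z - x1) - (z - y) := by abel
    rw [this]
    linarith [norm_sub_le (z - x1) (z - y)]
  have hzΓ : z ∉ Γ := by
    intro hz
    have h1 := hneg z hz y (D.sub hyB) (by rw [norm_sub_rev]; linarith)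
    have h2 : 0 ≤ ‖z - y‖ ^ 2 / (2 * ε) := by positivity
    have h3 := mul_le_mul_of_nonneg_left hgl hε.le
    linarith
  have hzc2 : R1 - τ / 2 < ‖z - c‖ := by
    refine lt_of_le_of_ne hzc fun h => hzΓ ?_
    rw [hΓ]
    exact ⟨by rwa [mem_closedBall, dist_eq_norm], Or.inl h.symm⟩
  have hz2 : ‖z - x1‖ < ρ := by
    refine lt_of_le_of_ne hz1 fun h => ?_
    rcases le_or_gt ‖z - c‖ (R1 + t0) with h1 | h1
    · apply hzΓ
      rw [hΓ]
      exact ⟨by rwa [mem_closedBall, dist_eq_norm], Or.inr ⟨h, h1⟩⟩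
    · have h2 := hopf_G_high a τ ‖z - c‖ R1 t0 (L ^ 2 / 2 + 1) ha1 hτ ht0 hτc h1.le
      have h3 : L ^ 2 / 2 + 1 / 2 ≤ g ‖z - c‖ := by rw [hg]; linarith
      have h4 := hopf_q2 L ‖z - y‖ ε (g ‖z - c‖) hε h3
      linarith
  obtain ⟨s, hs⟩ : ∃ s, s = ‖z - c‖ := ⟨_, rfl⟩
  have hsR : s ≤ R1 + ρ := by
    rw [hs]
    have : z - c = (z - x1) + (x1 - c) := by abel
    rw [this]
    linarith [norm_add_le (z - x1) (x1 - c)]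
  rw [← hs] at hzc hzc2
  obtain ⟨σ, hσ⟩ : ∃ σ, σ = a * (s - R1 + τ) := ⟨_, rfl⟩
  have hσ0 : 0 < σ := by rw [hσ]; exact mul_pos ha0 (by linarith)
  have hσ1 : σ ≤ 1 := by
    rw [hσ]
    have h1 : s - R1 + τ ≤ 1 / a := by
      have : 1 / a = 1 / (2 * a) + 1 / (2 * a) := by field_simp; norm_num
      linarith
    calc a * (s - R1 + τ) ≤ a * (1 / a) := mul_le_mul_of_nonneg_left h1 ha0.le
      _ = 1 := by field_simp
  have hσ2 : ε ≤ σ := by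
    rw [hσ]
    have := mul_le_mul_of_nonneg_left (show τ / 2 ≤ s - R1 + τ by linarith) ha0.le
    linarith
  have hs0 : R1 / 2 ≤ s := by linarith
  refine hopf_arith N ε σ a s K Λ L' lam R1 (Nat.cast_nonneg N) hε hσ0 hσ1 hR1 hs0 hΛ hL'0.le (hQ ▸ haQ) ?_
  have hev : ∀ᶠ X in 𝓝 (z, y), X ∈ Kc := by
    have o1 : ∀ᶠ X : 𝔼 × 𝔼 in 𝓝 (z, y), ‖X.1 - x1‖ < ρ :=
      ContinuousAt.eventually_lt (f := fun X : 𝔼 × 𝔼 => ‖X.1 - x1‖) (by fun_prop) continuousAt_const hz2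
    have o2 : ∀ᶠ X : 𝔼 × 𝔼 in 𝓝 (z, y), R1 - τ / 2 < ‖X.1 - c‖ :=
      ContinuousAt.eventually_lt (g := fun X : 𝔼 × 𝔼 => ‖X.1 - c‖) continuousAt_const (by fun_prop) (hs ▸ hzc2)
    have o3 : ∀ᶠ X : 𝔼 × 𝔼 in 𝓝 (z, y), ‖X.2 - x1‖ < 2 * ρ :=
      ContinuousAt.eventually_lt (f := fun X : 𝔼 × 𝔼 => ‖X.2 - x1‖) (by fun_prop) continuousAt_const hy2
    filter_upwards [o1, o2, o3] with X h1 h2 h3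
    exact (hKmem X.1 X.2).2 ⟨h1.le, h2.le, h3.le⟩
  have hzne : z ≠ c := by
    rintro rfl
    simp at hs
    linarith
  have := flat_ineq G z y c (D.sub hzB) (D.sub hyB) hzne ε Λ L' K hε hΛ hL'0.le (D.lip z hzB y hyB) (D.bd z hzB)
    hr.le hK0 hK (fun s => ε * g s) (fun s => ε / (a * (s - R1 + τ))) (- (a * ε / σ ^ 2)) (ε / σ)
    (by
      rw [← hs]
      filter_upwards [lt_mem_nhds hzc2] with r hr
      exact hder r hr.le)
    (by
      rw [← hs, hσ]
      exact hopf_deriv2 a τ R1 ε s ha1 (by linarith))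
    (by rw [neg_nonpos]; positivity)
    (by simp only [← hs, hσ])
    (by positivity)
    (by rw [div_le_one hσ0]; exact hσ2)
    (by
      filter_upwards [hev] with X hX
      have h1 : F X ≤ F (z, y) := hmax hX
      have h2 := hFd X.1 X.2
      have h3 := hFd z y
      simp only [Prod.mk.eta] at h2
      linarith)
  rw [← hs, ← hlam] at this
  exact this

end HopfCore

open Metric Set Filter Topology MeasureTheory

section Fin4
variable {N : ℕ}
local notation "𝔼" => EuclideanSpace ℝ (Fin N)

theorem touch_step {Ω : Set 𝔼} {H u v : 𝔼 → ℝ} (G : Glob Ω H u v) (hHL : LocLipschitzOn Ω H)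
    (huv : ∀ x ∈ Ω, v x ≤ u x) (x1 c : 𝔼) (R1 : ℝ) (hx1Ω : x1 ∈ Ω) (hR1 : 0 < R1)
    (hc : ‖x1 - c‖ = R1) (hx1 : u x1 = v x1)
    (hstrict : ∀ x ∈ closedBall c R1, x ≠ x1 → v x < u x) : False := by
  obtain ⟨K, t, ht, hK⟩ := hHL x1 hx1Ω
  have e1 := G.hv x1 hx1Ω (v x1 + 1 / 2) (by linarith)
  have e2 := G.hu x1 hx1Ω (u x1 - 1 / 2) (by linarith)
  have e3 := G.hH x1 hx1Ω
  have e4 : ∀ᶠ x in 𝓝[Ω] x1, |H x| < |H x1| + 1 :=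
    e3.abs.eventually (gt_mem_nhds (by linarith))
  have e5 : ∀ᶠ x in 𝓝[Ω] x1, x ∈ Ω := self_mem_nhdsWithin
  have hall := (((e1.and e2).and e4).and (show ∀ᶠ x in 𝓝[Ω] x1, x ∈ t from ht)).and e5
  rw [G.op.nhdsWithin_eq hx1Ω] at hall
  obtain ⟨η, hη, hb⟩ := Metric.eventually_nhds_iff_ball.1 hall
  obtain ⟨ρ, hρ⟩ : ∃ ρ, ρ = η / 4 := ⟨_, rfl⟩
  have hρ0 : 0 < ρ := by rw [hρ]; linarith
  have hbb : ∀ x ∈ closedBall x1 (2 * ρ), x ∈ ball x1 η := by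
    intro x hx
    rw [mem_closedBall] at hx
    rw [mem_ball]; linarith
  obtain ⟨Λ, hΛ0, hΛ1, hΛ2⟩ : ∃ Λ : ℝ, 0 ≤ Λ ∧ (K : ℝ) ≤ Λ ∧ |H x1| + 1 ≤ Λ :=
    ⟨max (K : ℝ) (|H x1| + 1), le_max_of_le_left K.2, le_max_left _ _, le_max_right _ _⟩
  have D : Dat Ω H u v (closedBall x1 (2 * ρ)) Λ 1 := by
    refine ⟨fun x hx => (hb x (hbb x hx)).2, ?_, ?_, ?_, fun x hx => huv x (hb x (hbb x hx)).2⟩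
    · intro x hx y hy
      have h1 := hK.dist_le_mul x (hb x (hbb x hx)).1.2 y (hb y (hbb y hy)).1.2
      rw [Real.dist_eq, dist_eq_norm] at h1
      exact h1.trans (mul_le_mul_of_nonneg_right hΛ1 (norm_nonneg _))
    · intro x hx
      exact ((hb x (hbb x hx)).1.1.2.le).trans hΛ2
    · intro x hx y hy
      have h1 := (hb x (hbb x hx)).1.1.1.1
      have h2 := (hb y (hbb y hy)).1.1.1.2
      linarith
  obtain ⟨L, r1, hL, hr1, hlip⟩ := lip_est G ρ Λ 1 hρ0 hΛ0 one_pos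
  refine hopf_core G x1 c R1 ρ r1 L Λ 1 hR1 hρ0 hr1 hL.le hΛ0
    (D.mono (closedBall_subset_closedBall (by linarith))) ?_ hc hx1 (fun x hx hne _ => hstrict x hx hne)
  intro z hz y hy
  refine hlip z (D.mono (closedBall_subset_closedBall' ?_)) y hy
  rw [mem_closedBall] at hz
  linarith

theorem touch_all {Ω : Set 𝔼} {H u v : 𝔼 → ℝ} (G : Glob Ω H u v) (hHL : LocLipschitzOn Ω H)
    (huv : ∀ x ∈ Ω, v x ≤ u x) (x₀ : 𝔼) (R : ℝ) (hR : 0 < R) (hball : closedBall x₀ R ⊆ Ω) (htouch : u x₀ = v x₀) :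
    ∀ x ∈ closedBall x₀ (R / 2), u x ≤ v x := by
  intro y hy
  by_contra hcon
  have hx₀ : x₀ ∈ closedBall x₀ R ∩ {z | u z ≤ v z} := ⟨mem_closedBall_self hR.le, htouch.le⟩
  obtain ⟨x1, hx1, hmin⟩ := (compact_touch G (isCompact_closedBall x₀ R) hball).exists_isMinOn ⟨_, hx₀⟩
    (f := fun z => ‖z - y‖) (by fun_prop)
  rw [mem_closedBall, dist_eq_norm] at hy
  have h0 : ‖x1 - y‖ ≤ ‖x₀ - y‖ := hmin hx₀
  rw [norm_sub_rev x₀ y] at h0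
  have hne : x1 ≠ y := by
    rintro rfl
    exact hcon hx1.2
  have hd : 0 < ‖x1 - y‖ := norm_pos_iff.2 (sub_ne_zero.2 hne)
  have hball2 : ∀ x, ‖x - y‖ < ‖x1 - y‖ → v x < u x := by
    intro x hx
    by_contra h
    have hxK : x ∈ closedBall x₀ R ∩ {z | u z ≤ v z} := by
      refine ⟨?_, not_lt.1 h⟩
      rw [mem_closedBall, dist_eq_norm]
      have : x - x₀ = (x - y) + (y - x₀) := by abel
      rw [this]
      linarith [norm_add_le (x - y) (y - x₀)]
    have : ‖x1 - y‖ ≤ ‖x - y‖ := hmin hxK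
    linarith
  have hx1Ω := hball hx1.1
  obtain ⟨w, hw⟩ : ∃ w, w = (1 / 2 : ℝ) • (x1 - y) := ⟨_, rfl⟩
  have hwn : ‖w‖ = ‖x1 - y‖ / 2 := by
    rw [hw, norm_smul]; norm_num; ring
  have hww : x1 - y = w + w := by rw [hw, ← add_smul]; norm_num
  refine touch_step G hHL huv x1 (y + w) (‖x1 - y‖ / 2) hx1Ω (by linarith) ?_ (le_antisymm hx1.2 (huv x1 hx1Ω)) ?_
  · have : x1 - (y + w) = w := by rw [← sub_sub, hww]; abel
    rw [this, hwn]
  · intro x hx hxne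
    rw [mem_closedBall, dist_eq_norm] at hx
    obtain ⟨q, hq⟩ : ∃ q, q = x - (y + w) := ⟨_, rfl⟩
    rw [← hq] at hx
    have hxy : x - y = q + w := by rw [hq]; abel
    apply hball2
    have hqw : q ≠ w := by
      intro h
      apply hxne
      have : x - y = x1 - y := by rw [hxy, hww, h]
      exact sub_left_injective this
    rw [hxy]
    have hpar := parallelogram_law_with_norm ℝ q w
    have hsub : 0 < ‖q - w‖ := norm_pos_iff.2 (sub_ne_zero.2 hqw)
    have hq0 := norm_nonneg q
    have hqq : ‖q‖ * ‖q‖ ≤ (‖x1 - y‖ / 2) * (‖x1 - y‖ / 2) := mul_le_mul hx hx hq0 (by linarith)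
    have hss := mul_pos hsub hsub
    rw [hwn] at hpar
    exact lt_of_mul_self_lt_mul_self₀ hd.le (by linarith)

end Fin4


/-- **Comparison of inf and sup convolutions near a touching point**: if the
supersolution `u` touches the subsolution `v` from above at the center of a ball
on which `|H| ≤ 1/R`, then for every `ε > 0` the sup convolution of `v` dominates
the inf convolution of `u` on the ball of half radius. -/
theorem inf_sup_convolution_comparison {N : ℕ} (hN : 2 ≤ N)
    (Ω : Set (EuclideanSpace ℝ (Fin N))) (hΩo : IsOpen Ω) (hΩc : IsConnected Ω)
    (H : EuclideanSpace ℝ (Fin N) → ℝ) (hH : LocLipschitzOn Ω H)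
    (x₀ : EuclideanSpace ℝ (Fin N)) (hx₀ : x₀ ∈ Ω)
    (R : ℝ) (hR : 0 < R) (hball : closedBall x₀ R ⊆ Ω)
    (hHR : ∀ x ∈ closedBall x₀ R, |H x| ≤ 1 / R)
    (u v : EuclideanSpace ℝ (Fin N) → ℝ)
    (hu_lsc : LowerSemicontinuousOn u Ω) (hu : IsViscositySupersol Ω H u)
    (hv_usc : UpperSemicontinuousOn v Ω) (hv : IsViscositySubsol Ω H v)
    (hub : ∃ C, ∀ x ∈ closedBall x₀ R, |u x| ≤ C)
    (hvb : ∃ C, ∀ x ∈ closedBall x₀ R, |v x| ≤ C)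
    (huv : ∀ x ∈ Ω, v x ≤ u x) (htouch : u x₀ = v x₀) :
    ∀ ε > 0, ∀ x ∈ closedBall x₀ (R / 2),
      (⨅ y : closedBall x₀ R, (u y + ‖x - (y : EuclideanSpace ℝ (Fin N))‖ ^ 2 / (2 * ε))) ≤
      (⨆ y : closedBall x₀ R, (v y - ‖x - (y : EuclideanSpace ℝ (Fin N))‖ ^ 2 / (2 * ε))) := by
  intro ε hε x hx
  have hHc : ContinuousOn H Ω := by
    intro z hz
    obtain ⟨K, t, ht, hK⟩ := hH z hz
    have hzt : z ∈ t := mem_of_mem_nhdsWithin hz ht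
    exact (hK.continuousOn z hzt).mono_of_mem_nhdsWithin ht
  have hle := touch_all ⟨hΩo, hHc, hu_lsc, hu, hv_usc, hv⟩ hH huv x₀ R hR hball htouch x hx
  have hxR : x ∈ closedBall x₀ R := closedBall_subset_closedBall (by linarith) hx
  obtain ⟨C1, hC1⟩ := hub
  obtain ⟨C2, hC2⟩ := hvb
  have h1 : (⨅ y : closedBall x₀ R, (u y + ‖x - (y : EuclideanSpace ℝ (Fin N))‖ ^ 2 / (2 * ε))) ≤ u x := by
    refine (ciInf_le ⟨-C1, ?_⟩ ⟨x, hxR⟩).trans (by simp)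
    rintro _ ⟨y, rfl⟩
    have h := (abs_le.1 (hC1 y y.2)).1
    have h' : 0 ≤ ‖x - (y : EuclideanSpace ℝ (Fin N))‖ ^ 2 / (2 * ε) := by positivity
    show -C1 ≤ u y + ‖x - (y : EuclideanSpace ℝ (Fin N))‖ ^ 2 / (2 * ε)
    linarith
  have h2 : v x ≤ (⨆ y : closedBall x₀ R, (v y - ‖x - (y : EuclideanSpace ℝ (Fin N))‖ ^ 2 / (2 * ε))) := by
    refine le_trans (by simp) (le_ciSup (f := fun y : closedBall x₀ R => v y - ‖x - (y : EuclideanSpace ℝ (Fin N))‖ ^ 2 / (2 * ε)) ⟨C2, ?_⟩ ⟨x, hxR⟩)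
    rintro _ ⟨y, rfl⟩
    have h := (abs_le.1 (hC2 y y.2)).2
    have h' : 0 ≤ ‖x - (y : EuclideanSpace ℝ (Fin N))‖ ^ 2 / (2 * ε) := by positivity
    show v y - ‖x - (y : EuclideanSpace ℝ (Fin N))‖ ^ 2 / (2 * ε) ≤ C2
    linarith
  exact h1.trans (hle.trans h2)
end

section
/- Vanishing of the minimal gap between convolutions: Let x₀ ∈ ℝ^N, R > 0, and let u : cl(B(x₀,R)) → ℝ be lower semicontinuous and bounded, v : cl(B(x₀,R)) → ℝ upper semicontinuous and bounded, with u ≥ v on cl(B(x₀,R)) and u(x₀) = v(x₀). For ε > 0 define u_ε(x) := inf_{y ∈ cl(B(x₀,R))} { u(y) + |x−y|²/(2ε) } and v^ε(x) := sup_{y ∈ cl(B(x₀,R))} { v(y) − |x−y|²/(2ε) }, and set δ_ε := min_{y ∈ cl(B(x₀,R/2))} ( u_ε(y) − v^ε(y) ). Then lim_{ε→0} δ_ε = 0. -/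
open Metric Set Filter Topology MeasureTheory

/-- **Vanishing of the minimal gap between convolutions**: the minimum over the
half-radius ball of the difference between the inf convolution of `u` and the sup
convolution of `v` tends to `0` as `ε → 0`, when `u ≥ v` touch at the center. -/
theorem min_gap_tendsto_zero {N : ℕ}
    (x₀ : EuclideanSpace ℝ (Fin N)) (R : ℝ) (hR : 0 < R)
    (u v : EuclideanSpace ℝ (Fin N) → ℝ)
    (hu_lsc : LowerSemicontinuousOn u (closedBall x₀ R))
    (hv_usc : UpperSemicontinuousOn v (closedBall x₀ R))
    (hub : ∃ C, ∀ x ∈ closedBall x₀ R, |u x| ≤ C)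
    (hvb : ∃ C, ∀ x ∈ closedBall x₀ R, |v x| ≤ C)
    (huv : ∀ x ∈ closedBall x₀ R, v x ≤ u x) (htouch : u x₀ = v x₀) :
    Filter.Tendsto
      (fun ε : ℝ =>
        ⨅ z : closedBall x₀ (R / 2),
          ((⨅ y : closedBall x₀ R,
              (u y + ‖(z : EuclideanSpace ℝ (Fin N)) - (y : EuclideanSpace ℝ (Fin N))‖ ^ 2 / (2 * ε))) -
           (⨆ y : closedBall x₀ R,
              (v y - ‖(z : EuclideanSpace ℝ (Fin N)) - (y : EuclideanSpace ℝ (Fin N))‖ ^ 2 / (2 * ε)))))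
      (𝓝[>] (0 : ℝ)) (𝓝 0) := by
  obtain ⟨Cu, hCu⟩ := hub
  obtain ⟨Cv, hCv⟩ := hvb
  have hx0 : x₀ ∈ closedBall x₀ R := mem_closedBall_self hR.le
  have hx0' : x₀ ∈ closedBall x₀ (R / 2) := mem_closedBall_self (by positivity)
  have : Nonempty (closedBall x₀ R) := ⟨⟨x₀, hx0⟩⟩
  have : Nonempty (closedBall x₀ (R / 2)) := ⟨⟨x₀, hx0'⟩⟩
  -- lower bound transfer
  have key : ∀ ε : ℝ, 0 < ε → ∀ m : ℝ,
      (∀ y ∈ closedBall x₀ R, ∀ y' ∈ closedBall x₀ R,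
        m ≤ u y - v y' + ‖y - y'‖ ^ 2 / (4 * ε)) →
      ∀ z : EuclideanSpace ℝ (Fin N),
      m ≤ (⨅ y : closedBall x₀ R,
              (u y + ‖z - (y : EuclideanSpace ℝ (Fin N))‖ ^ 2 / (2 * ε))) -
           (⨆ y : closedBall x₀ R,
              (v y - ‖z - (y : EuclideanSpace ℝ (Fin N))‖ ^ 2 / (2 * ε))) := by
    intro ε hε m hm z
    rw [le_sub_iff_add_le]
    apply le_ciInf
    intro y
    rw [← le_sub_iff_add_le']
    apply ciSup_le
    intro y'
    have h1 := hm y y.2 y' y'.2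
    have h2 : ‖(y : EuclideanSpace ℝ (Fin N)) - y'‖ ≤ ‖z - y‖ + ‖z - y'‖ := by
      have := norm_sub_le (z - (y' : EuclideanSpace ℝ (Fin N))) (z - y)
      rw [sub_sub_sub_cancel_left] at this
      linarith
    have h3 : ‖(y : EuclideanSpace ℝ (Fin N)) - y'‖ ^ 2
        ≤ 2 * (‖z - y‖ ^ 2 + ‖z - y'‖ ^ 2) := by
      have h0 := norm_nonneg ((y : EuclideanSpace ℝ (Fin N)) - y')
      nlinarith [sq_nonneg (‖z - (y : EuclideanSpace ℝ (Fin N))‖ - ‖z - (y' : EuclideanSpace ℝ (Fin N))‖)]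
    have h4 : ‖(y : EuclideanSpace ℝ (Fin N)) - y'‖ ^ 2 / (4 * ε)
        ≤ ‖z - y‖ ^ 2 / (2 * ε) + ‖z - y'‖ ^ 2 / (2 * ε) := by
      rw [← add_div, div_le_div_iff₀ (by positivity) (by positivity)]
      nlinarith
    linarith
  have hcrude : ∀ ε : ℝ, 0 < ε → ∀ y ∈ closedBall x₀ R, ∀ y' ∈ closedBall x₀ R,
        -Cu - Cv ≤ u y - v y' + ‖y - y'‖ ^ 2 / (4 * ε) := by
    intro ε hε y hy y' hy'
    have h1 := (abs_le.1 (hCu y hy)).1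
    have h2 := (abs_le.1 (hCv y' hy')).2
    have : 0 ≤ ‖y - y'‖ ^ 2 / (4 * ε) := by positivity
    linarith
  have upper : ∀ ε : ℝ, 0 < ε →
      (⨅ z : closedBall x₀ (R / 2),
          ((⨅ y : closedBall x₀ R,
              (u y + ‖(z : EuclideanSpace ℝ (Fin N)) - (y : EuclideanSpace ℝ (Fin N))‖ ^ 2 / (2 * ε))) -
           (⨆ y : closedBall x₀ R,
              (v y - ‖(z : EuclideanSpace ℝ (Fin N)) - (y : EuclideanSpace ℝ (Fin N))‖ ^ 2 / (2 * ε))))) ≤ 0 := by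
    intro ε hε
    refine (ciInf_le ⟨-Cu - Cv, ?_⟩ (⟨x₀, hx0'⟩ : closedBall x₀ (R / 2))).trans ?_
    · rintro _ ⟨z, rfl⟩
      exact key ε hε _ (hcrude ε hε) z
    · have h1 : (⨅ y : closedBall x₀ R,
              (u y + ‖x₀ - (y : EuclideanSpace ℝ (Fin N))‖ ^ 2 / (2 * ε))) ≤ u x₀ := by
        refine (ciInf_le ⟨-Cu, ?_⟩ (⟨x₀, hx0⟩ : closedBall x₀ R)).trans ?_
        · rintro _ ⟨y, rfl⟩
          have h1 := (abs_le.1 (hCu y y.2)).1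
          have : 0 ≤ ‖x₀ - y‖ ^ 2 / (2 * ε) := by positivity
          dsimp only
          linarith
        · simp
      have h2 : v x₀ ≤ (⨆ y : closedBall x₀ R,
              (v y - ‖x₀ - (y : EuclideanSpace ℝ (Fin N))‖ ^ 2 / (2 * ε))) := by
        refine le_trans ?_ (le_ciSup ⟨Cv, ?_⟩ (⟨x₀, hx0⟩ : closedBall x₀ R))
        · simp
        · rintro _ ⟨y, rfl⟩
          have h1 := (abs_le.1 (hCv y y.2)).2
          have : 0 ≤ ‖x₀ - y‖ ^ 2 / (2 * ε) := by positivity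
          dsimp only
          linarith
      dsimp only
      linarith
  rw [Metric.tendsto_nhds]
  intro η hη
  have hloc : ∀ x : closedBall x₀ R, ∃ U : Set (EuclideanSpace ℝ (Fin N)), IsOpen U ∧ (x : EuclideanSpace ℝ (Fin N)) ∈ U ∧
      ∀ y ∈ U, y ∈ closedBall x₀ R → u x - η / 4 < u y ∧ v y < v x + η / 4 := by
    intro x
    have h1 := hu_lsc x x.2 (u x - η / 4) (by linarith)
    have h2 := hv_usc x x.2 (v x + η / 4) (by linarith)
    have h3 := h1.and h2
    rw [eventually_nhdsWithin_iff, _root_.eventually_nhds_iff] at h3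
    obtain ⟨U, hU, hUo, hxU⟩ := h3
    exact ⟨U, hUo, hxU, hU⟩
  choose U hUo hxU hU using hloc
  obtain ⟨d, hd, hleb⟩ := lebesgue_number_lemma_of_metric (isCompact_closedBall x₀ R) hUo
    (fun x hx => mem_iUnion.2 ⟨⟨x, hx⟩, hxU ⟨x, hx⟩⟩)
  have hC : 0 ≤ Cu + Cv := by
    have := (abs_nonneg _).trans (hCu x₀ hx0)
    have := (abs_nonneg _).trans (hCv x₀ hx0)
    linarith
  have hε0 : 0 < d ^ 2 / (4 * (Cu + Cv + 1)) := by positivity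
  filter_upwards [Ioo_mem_nhdsGT hε0] with ε hε
  obtain ⟨hε, hεd⟩ := hε
  have hlow : ∀ y ∈ closedBall x₀ R, ∀ y' ∈ closedBall x₀ R,
        -(η / 2) ≤ u y - v y' + ‖y - y'‖ ^ 2 / (4 * ε) := by
    intro y hy y' hy'
    by_cases hyd : ‖y - y'‖ < d
    · obtain ⟨i, hi⟩ := hleb y hy
      have h1 := (hU i y (hi (mem_ball_self hd)) hy).1
      have h2 := (hU i y' (hi (by rw [mem_ball', dist_eq_norm]; exact hyd)) hy').2
      have h3 := huv i i.2
      have : 0 ≤ ‖y - y'‖ ^ 2 / (4 * ε) := by positivity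
      linarith
    · push Not at hyd
      have h1 := (abs_le.1 (hCu y hy)).1
      have h2 := (abs_le.1 (hCv y' hy')).2
      have h3 : Cu + Cv ≤ ‖y - y'‖ ^ 2 / (4 * ε) := by
        rw [lt_div_iff₀ (by positivity)] at hεd
        rw [le_div_iff₀ (by positivity)]
        have : d ^ 2 ≤ ‖y - y'‖ ^ 2 := by gcongr
        nlinarith
      linarith
  have hge := le_ciInf (fun z : closedBall x₀ (R / 2) => key ε hε _ hlow z)
  have hle := upper ε hε
  rw [Real.dist_eq, sub_zero, abs_lt]
  constructor <;> linarith
end
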